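/- arXiv:2101.01458 — 2 statements merged into one kernel-verified Lean document; each statement's English description precedes it below -/
import Mathlib

section
/- Let $G$ be an infinite countable amenable group with identity element $e$, let $\{T_k\}_{k=1}^\infty$ be an increasing sequence of nonempty finite subsets of $G$ with $\bigcup_{k=1}^\infty T_k = G$, and let $\{\epsilon_k\}_{k=1}^\infty$ be a decreasing sequence of positive numbers converging to zero. Then there exists a primely congruent sequence $\{\mathcal{T}_k\}_{k=1}^\infty$ of syndetic finite tilings of $G$ such that, denoting by $\{S_{k,i} : 1 \le i \le m_k\}$ the set of all shapes of $\mathcal{T}_k$: (1) $e \in S_{1,1} \subset S_{2,1} \subset \cdots \subset S_{k,1} \subset \cdots$ and $\bigcup_{k=1}^\infty S_{k,1} = G$; and (2) for every $k$ and every $1 \le i \le m_k$, the shape $S_{k,i}$ is $(T_k, \epsilon_k)$-invariant. -/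
open Set Filter Topology
open scoped ENNReal NNReal symmDiff

/-- Right translate `S·c = {s * c : s ∈ S}` of a subset of a group. -/
def rightTranslate {G : Type*} [Group G] (S : Set G) (c : G) : Set G := (fun s => s * c) '' S

/-- The boundary set `B(F,T) = {g ∈ G : Tg ∩ F ≠ ∅ and Tg ∩ (G \ F) ≠ ∅}`. -/
def Bset {G : Type*} [Group G] (F T : Set G) : Set G :=
  {g : G | (rightTranslate T g ∩ F).Nonempty ∧ (rightTranslate T g ∩ Fᶜ).Nonempty}

/-- `F` is `(T,ε)`-invariant: `|B(F,T)| < ε * |F|`. -/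
def IsInvariantSet {G : Type*} [Group G] (F T : Set G) (ε : ℝ) : Prop :=
  ((Bset F T).ncard : ℝ) < ε * (F.ncard : ℝ)

/-- A Følner sequence of nonempty finite subsets of `G`. -/
def IsFolnerSeq {G : Type*} [Group G] (F : ℕ → Set G) : Prop :=
  (∀ n, (F n).Finite ∧ (F n).Nonempty) ∧
    ∀ g : G, Tendsto
      (fun n => ((symmDiff (F n) ((fun x => g * x) '' (F n))).ncard : ℝ) / ((F n).ncard : ℝ))
      atTop (nhds 0)

/-- A countable discrete group is amenable if it admits a Følner sequence. -/
def AmenableGroup (G : Type*) [Group G] : Prop := ∃ F : ℕ → Set G, IsFolnerSeq F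

/-- A tiling of `G`: pairwise disjoint nonempty finite subsets covering `G`. -/
def IsTilingOf {G : Type*} [Group G] (𝒯 : Set (Set G)) : Prop :=
  (∀ T ∈ 𝒯, T.Finite ∧ T.Nonempty) ∧
    (∀ T ∈ 𝒯, ∀ T' ∈ 𝒯, T ≠ T' → Disjoint T T') ∧ ⋃₀ 𝒯 = Set.univ

/-- `𝒮` is a (finite) set of shapes for the tiling `𝒯`. -/
def IsShapeSet {G : Type*} [Group G] (𝒯 𝒮 : Set (Set G)) : Prop :=
  𝒮.Finite ∧ (∀ S ∈ 𝒮, S.Finite ∧ S.Nonempty) ∧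
    ∀ T ∈ 𝒯, ∃ S ∈ 𝒮, ∃ c : G, T = rightTranslate S c

/-- The center of a shape `S` relative to a tiling `𝒯`. -/
def center {G : Type*} [Group G] (𝒯 : Set (Set G)) (S : Set G) : Set G :=
  {c : G | rightTranslate S c ∈ 𝒯}

/-- A syndetic subset: `G = F·A` for some finite `F`. -/
def SyndeticSet {G : Type*} [Group G] (A : Set G) : Prop :=
  ∃ F : Set G, F.Finite ∧ Set.image2 (· * ·) F A = Set.univ

/-- The translation `𝒯g = {Tg : T ∈ 𝒯}` of a tiling. -/
def tilingTranslate {G : Type*} [Group G] (𝒯 : Set (Set G)) (g : G) : Set (Set G) :=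
  (fun T => rightTranslate T g) '' 𝒯

/-- The restriction `𝒯|_F = {T ∩ F : T ∈ 𝒯}`. -/
def tilingRestrict {G : Type*} [Group G] (𝒯 : Set (Set G)) (F : Set G) : Set (Set G) :=
  (fun T => T ∩ F) '' 𝒯

/-- The full `G`-shift: `(σ_g x)_h = x_{hg}`. -/
def shift {G K : Type*} [Group G] (g : G) (x : G → K) : G → K := fun h => x (h * g)

/-- A subshift: a closed shift-invariant subset of `K^G`. -/
def IsSubshift {G : Type*} (K : Type*) [Group G] [TopologicalSpace K]
    (X : Set (G → K)) : Prop :=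
  IsClosed X ∧ ∀ g : G, ∀ x ∈ X, shift g x ∈ X

/-- A weight `α : G → (0,∞)` with `α e = 1` and `∑ α < ∞`, defining the product metric. -/
def IsGoodWeight {G : Type*} [Group G] (α : G → ℝ) : Prop :=
  α 1 = 1 ∧ (∀ g, 0 < α g) ∧ Summable α

/-- The metric `ρ(x,y) = ∑_g α_g d(x_g, y_g)` on `K^G`. -/
noncomputable def rhoMetric {G K : Type*} [Group G] [PseudoMetricSpace K] (α : G → ℝ)
    (x y : G → K) : ℝ :=
  ∑' g : G, α g * dist (x g) (y g)

/-- `ρ_F(x,y) = max_{g ∈ F} ρ(gx, gy)` for finite `F ⊆ G`. -/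
noncomputable def rhoMetricF {G K : Type*} [Group G] [PseudoMetricSpace K] (α : G → ℝ)
    (F : Set G) (x y : G → K) : ℝ :=
  sSup ((fun g => rhoMetric α (shift g x) (shift g y)) '' F)

/-- `d_F(x,y) = max_{g∈F} d(gx, gy)` for an action `φ`. -/
noncomputable def dynDist {G X : Type*} [Group G] [PseudoMetricSpace X]
    (φ : G → X → X) (F : Set G) (x y : X) : ℝ :=
  sSup ((fun g => dist (φ g x) (φ g y)) '' F)

/-- An `ε`-embedding w.r.t. `ρ`: continuous, and `f x = f y → ρ x y < ε`. -/
def IsEpsEmb {X Y : Type*} [TopologicalSpace X] [TopologicalSpace Y]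
    (ρ : X → X → ℝ) (ε : ℝ) (f : X → Y) : Prop :=
  Continuous f ∧ ∀ x y, f x = f y → ρ x y < ε

/-- `Widim_ε(X,ρ) ≤ n`: there is an `ε`-embedding of `X` into (the geometric realization of)
a finite simplicial complex all of whose faces have at most `n+1` vertices. -/
def WidimLE (X : Type*) [TopologicalSpace X] (ρ : X → X → ℝ) (ε : ℝ) (n : ℕ) : Prop :=
  ∃ (N : ℕ) (P : Geometry.SimplicialComplex ℝ (Fin N → ℝ)),
    P.faces.Finite ∧ (∀ s ∈ P.faces, s.card ≤ n + 1) ∧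
      ∃ f : X → P.space, IsEpsEmb ρ ε f

/-- `Widim_ε(X,ρ)`: the minimum dimension of a polyhedron admitting an `ε`-embedding of `X`. -/
noncomputable def widim (X : Type*) [TopologicalSpace X] (ρ : X → X → ℝ) (ε : ℝ) : ℕ∞ :=
  sInf {n : ℕ∞ | ∃ m : ℕ, n = (m : ℕ∞) ∧ WidimLE X ρ ε m}

/-- Covering dimension `≤ n`: every open cover admits an open refinement of multiplicity `≤ n+1`. -/
def DimLE (X : Type*) [TopologicalSpace X] (n : ℕ) : Prop :=
  ∀ 𝒰 : Set (Set X), (∀ U ∈ 𝒰, IsOpen U) → ⋃₀ 𝒰 = Set.univ →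
    ∃ 𝒱 : Set (Set X), (∀ V ∈ 𝒱, IsOpen V) ∧ ⋃₀ 𝒱 = Set.univ ∧
      (∀ V ∈ 𝒱, ∃ U ∈ 𝒰, V ⊆ U) ∧
      ∀ x : X, ({V ∈ 𝒱 | x ∈ V}).Finite ∧ ({V ∈ 𝒱 | x ∈ V}).ncard ≤ n + 1

/-- Topological (covering) dimension, valued in `ℕ∞`. -/
noncomputable def covDim (X : Type*) [TopologicalSpace X] : ℕ∞ :=
  sInf {n : ℕ∞ | ∃ m : ℕ, n = (m : ℕ∞) ∧ DimLE X m}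

/-- Mean dimension of the action `φ` computed along the Følner sequence `F`
(as `sup_{ε>0} limsup_n Widim_ε(X, d_{F_n}) / |F_n|`). -/
noncomputable def mdimAlong {G X : Type*} [Group G] [PseudoMetricSpace X]
    (φ : G → X → X) (F : ℕ → Set G) : ℝ≥0∞ :=
  ⨆ ε : {ε : ℝ // 0 < ε}, Filter.limsup
    (fun n => ((widim X (dynDist φ (F n)) ε.1 : ℕ∞) : ℝ≥0∞) / ((F n).ncard : ℝ≥0∞)) atTop

/-- Mean dimension of a subshift `X ⊆ K^G` computed along the Følner sequence `F`,
with the metric `ρ` induced by the weight `α`. -/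
noncomputable def mdimSubshift {G K : Type*} [Group G] [PseudoMetricSpace K] (α : G → ℝ)
    (X : Set (G → K)) (F : ℕ → Set G) : ℝ≥0∞ :=
  ⨆ ε : {ε : ℝ // 0 < ε}, Filter.limsup
    (fun n => ((widim X (fun x y : X => rhoMetricF α (F n) x.1 y.1) ε.1 : ℕ∞) : ℝ≥0∞) /
      ((F n).ncard : ℝ≥0∞)) atTop

/-- The canonical projection `π_F : K^G → K^F`. -/
def projTo {G K : Type*} (F : Set G) (x : G → K) : F → K := fun g => x g.1

/-- The tripod (cone over three points), realized as the subset of `ℝ³` of points with at most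
one nonzero coordinate, each coordinate lying in `[0,1]`; the ℓ¹-distance on this set is exactly
the graph distance in which each of the three edges has length one. -/
def TripodSet : Set (Fin 3 → ℝ) :=
  {x | (∀ i, x i ∈ Set.Icc (0 : ℝ) 1) ∧ ∀ i j : Fin 3, i ≠ j → x i = 0 ∨ x j = 0}

/-- The graph distance on the tripod (= the ℓ¹-distance of the ambient `ℝ³`). -/
noncomputable def tripodDist (x y : TripodSet) : ℝ := ∑ i, |x.1 i - y.1 i|

/-- The `l^∞`-distance on `P^n` for the tripod `P`. -/
noncomputable def tripodDistInf {n : ℕ} (x y : Fin n → TripodSet) : ℝ :=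
  sSup (Set.range fun i => tripodDist (x i) (y i))

set_option linter.unusedSectionVars false

open Set Filter Topology
open scoped ENNReal NNReal symmDiff

set_option linter.unusedSectionVars false

section HelperA
variable {G : Type*} [Group G] [DecidableEq G]

/-- Finset version of the boundary. -/
def bd (E K : Finset G) : Finset G :=
  ((K ×ˢ E).image fun p => p.1⁻¹ * p.2).filter (fun g => ∃ k ∈ K, k * g ∉ E)

theorem mem_bd {E K : Finset G} {g : G} :
    g ∈ bd E K ↔ (∃ k ∈ K, k * g ∈ E) ∧ ∃ k ∈ K, k * g ∉ E := by
  simp only [bd, Finset.mem_filter, Finset.mem_image, Finset.mem_product, Prod.exists]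
  constructor
  · rintro ⟨⟨k, x, ⟨hk, hx⟩, rfl⟩, h⟩
    exact ⟨⟨k, hk, by simpa using hx⟩, h⟩
  · rintro ⟨⟨k, hk, hx⟩, h⟩
    exact ⟨⟨k, k * g, ⟨hk, hx⟩, by simp⟩, h⟩

/-- Finset version of invariance. -/
def FInv (E K : Finset G) (δ : ℝ) : Prop := ((bd E K).card : ℝ) < δ * E.card

theorem FInv.card_pos {E K : Finset G} {δ : ℝ} (h : FInv E K δ) : 0 < E.card := by
  unfold FInv at h
  rcases Nat.eq_zero_or_pos E.card with h0 | h0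
  · rw [h0] at h
    have : (0:ℝ) ≤ (bd E K).card := by positivity
    simp at h
    linarith
  · exact h0

theorem bd_mono {E K K' : Finset G} (h : K ⊆ K') : bd E K ⊆ bd E K' := by
  intro g hg
  rw [mem_bd] at *
  obtain ⟨⟨k, hk, h1⟩, ⟨k', hk', h2⟩⟩ := hg
  exact ⟨⟨k, h hk, h1⟩, ⟨k', h hk', h2⟩⟩

theorem FInv.mono {E K K' : Finset G} {δ δ' : ℝ} (h : FInv E K' δ') (hK : K ⊆ K') (hδ : δ' ≤ δ) :
    FInv E K δ := by
  unfold FInv at *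
  have h1 : ((bd E K).card : ℝ) ≤ (bd E K').card := by
    exact_mod_cast Finset.card_le_card (bd_mono hK)
  have h2 : δ' * (E.card : ℝ) ≤ δ * E.card := by gcongr
  linarith

theorem bd_translate (E K : Finset G) (c : G) :
    bd (E.image (· * c)) K = (bd E K).image (· * c) := by
  have key : ∀ x : G, x ∈ E.image (· * c) ↔ x * c⁻¹ ∈ E := by
    intro x
    simp only [Finset.mem_image]
    constructor
    · rintro ⟨a, ha, rfl⟩; simpa using ha
    · intro h; exact ⟨_, h, by simp⟩
  ext g
  have : g ∈ (bd E K).image (· * c) ↔ g * c⁻¹ ∈ bd E K := by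
    simp only [Finset.mem_image]
    constructor
    · rintro ⟨a, ha, rfl⟩; simpa using ha
    · intro h; exact ⟨_, h, by simp⟩
  rw [this, mem_bd, mem_bd]
  simp only [key, mul_assoc]

theorem card_translate (E : Finset G) (c : G) : (E.image (· * c)).card = E.card :=
  Finset.card_image_of_injective _ (mul_left_injective c)

theorem FInv.translate {E K : Finset G} {δ : ℝ} (h : FInv E K δ) (c : G) :
    FInv (E.image (· * c)) K δ := by
  unfold FInv at *
  rw [bd_translate, card_translate, card_translate]
  exact h

theorem card_sub_le (A A' : Finset G) : A.card ≤ A'.card + (A ∆ A').card := by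
  have : A ⊆ A' ∪ (A ∆ A') := by
    intro x hx
    simp only [Finset.mem_union, Finset.mem_symmDiff]
    tauto
  exact (Finset.card_le_card this).trans (Finset.card_union_le _ _)

theorem FInv.perturb {A A' K : Finset G} {δ θ ε : ℝ} (h : FInv A K δ)
    (hd : ((A ∆ A').card : ℝ) ≤ θ * A.card) (hε : 0 < ε)
    (hle : δ + K.card * θ ≤ ε * (1 - θ)) : FInv A' K ε := by
  have hs : bd A' K ⊆ bd A K ∪ (K ×ˢ (A ∆ A')).image (fun p => p.1⁻¹ * p.2) := by
    intro g hg
    rw [Finset.mem_union]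
    by_contra hcon
    push Not at hcon
    obtain ⟨h1, h2⟩ := hcon
    rw [mem_bd] at hg
    have h3 : ∀ k ∈ K, (k * g ∈ A ↔ k * g ∈ A') := by
      intro k hk
      by_contra h4
      apply h2
      rw [Finset.mem_image]
      refine ⟨(k, k * g), ?_, by simp⟩
      rw [Finset.mem_product, Finset.mem_symmDiff]
      refine ⟨hk, ?_⟩
      simp only
      tauto
    apply h1
    rw [mem_bd]
    obtain ⟨⟨k, hk, h5⟩, ⟨k', hk', h6⟩⟩ := hg
    exact ⟨⟨k, hk, (h3 k hk).2 h5⟩, ⟨k', hk', fun h7 => h6 ((h3 k' hk').1 h7)⟩⟩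
  have hc : ((bd A' K).card : ℝ) ≤ (bd A K).card + K.card * (A ∆ A').card := by
    have h1 := Finset.card_le_card hs
    have h2 := Finset.card_union_le (bd A K) ((K ×ˢ (A ∆ A')).image (fun p => p.1⁻¹ * p.2))
    have h3 : ((K ×ˢ (A ∆ A')).image (fun p => p.1⁻¹ * p.2)).card ≤ K.card * (A ∆ A').card := by
      rw [← Finset.card_product]; exact Finset.card_image_le
    exact_mod_cast (h1.trans h2).trans (by omega)
  have hA : (A.card : ℝ) ≤ A'.card + (A ∆ A').card := by exact_mod_cast card_sub_le A A'
  have hp : (0:ℝ) < A.card := by exact_mod_cast h.card_pos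
  unfold FInv at *
  have h1 : (K.card : ℝ) * (A ∆ A').card ≤ K.card * (θ * A.card) := by gcongr
  have h2 : ε * ((1 - θ) * A.card) ≤ ε * A'.card := by
    apply mul_le_mul_of_nonneg_left _ hε.le
    linarith
  have h3 : (δ + K.card * θ) * A.card ≤ ε * (1 - θ) * A.card := by gcongr
  linarith

theorem FInv.biUnion {s : Finset (Finset G)} {K : Finset G} {δ : ℝ} (hs : s.Nonempty)
    (hd : (s : Set (Finset G)).PairwiseDisjoint id) (h : ∀ E ∈ s, FInv E K δ) :
    FInv (s.biUnion id) K δ := by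
  unfold FInv at *
  have h1 : bd (s.biUnion id) K ⊆ s.biUnion (fun E => bd E K) := by
    intro g hg
    rw [mem_bd] at hg
    obtain ⟨⟨k, hk, h5⟩, ⟨k', hk', h6⟩⟩ := hg
    simp only [Finset.mem_biUnion, id] at *
    obtain ⟨E, hE, h7⟩ := h5
    refine ⟨E, hE, ?_⟩
    rw [mem_bd]
    exact ⟨⟨k, hk, h7⟩, ⟨k', hk', fun h8 => h6 ⟨E, hE, h8⟩⟩⟩
  have h2 : ((bd (s.biUnion id) K).card : ℝ) ≤ ∑ E ∈ s, ((bd E K).card : ℝ) := by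
    exact_mod_cast (Finset.card_le_card h1).trans Finset.card_biUnion_le
  rw [Finset.card_biUnion hd]
  push_cast
  rw [Finset.mul_sum]
  exact h2.trans_lt (Finset.sum_lt_sum_of_nonempty hs h)

theorem FInv.card_ge {E K : Finset G} {δ : ℝ} (h : FInv E K δ) (hδ : δ ≤ 1) (h1 : 1 ∈ K) :
    K.card ≤ E.card := by
  have hlt : (bd E K).card < E.card := by
    unfold FInv at h
    have : δ * (E.card:ℝ) ≤ 1 * E.card := by gcongr
    exact_mod_cast (by linarith : ((bd E K).card : ℝ) < E.card)
  obtain ⟨x, hx, hx'⟩ := Finset.exists_mem_notMem_of_card_lt_card hlt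
  rw [mem_bd] at hx'
  push Not at hx'
  have h2 := hx' ⟨1, h1, by simpa using hx⟩
  rw [← card_translate K x]
  apply Finset.card_le_card
  intro y hy
  rw [Finset.mem_image] at hy
  obtain ⟨k, hk, rfl⟩ := hy
  exact h2 k hk

/-- A Følner sequence of finsets. -/
def Fol (F : ℕ → Finset G) : Prop :=
  (∀ n, (F n).Nonempty) ∧ ∀ g : G, ∀ η > (0:ℝ), ∀ᶠ n in atTop,
    (((F n) ∆ ((F n).image (g * ·))).card : ℝ) ≤ η * (F n).card

theorem Fol.exists_inv {F : ℕ → Finset G} (hF : Fol F) (K : Finset G) {δ : ℝ} (hδ : 0 < δ) :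
    ∃ n, FInv (F n) K δ := by
  set η : ℝ := δ / ((K.card : ℝ) * K.card + 1) with hη
  have hηp : 0 < η := by positivity
  have hev : ∀ᶠ n in atTop, ∀ p ∈ K ×ˢ K,
      (((F n) ∆ ((F n).image ((p.2 * p.1⁻¹)⁻¹ * ·))).card : ℝ) ≤ η * (F n).card := by
    rw [Finset.eventually_all]
    intro p _
    exact hF.2 _ η hηp
  obtain ⟨n, hn⟩ := hev.exists
  refine ⟨n, ?_⟩
  have hs : bd (F n) K ⊆ (K ×ˢ K).biUnion (fun p =>
      ((F n) ∆ ((F n).image ((p.2 * p.1⁻¹)⁻¹ * ·))).image (p.1⁻¹ * ·)) := by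
    intro g hg
    rw [mem_bd] at hg
    obtain ⟨⟨k, hk, h5⟩, ⟨k', hk', h6⟩⟩ := hg
    rw [Finset.mem_biUnion]
    refine ⟨(k, k'), by simp [hk, hk'], ?_⟩
    rw [Finset.mem_image]
    refine ⟨k * g, ?_, by simp⟩
    rw [Finset.mem_symmDiff]
    left
    refine ⟨h5, ?_⟩
    intro h7
    rw [Finset.mem_image] at h7
    obtain ⟨x, hx, h8⟩ := h7
    apply h6
    have : k' * g = x := by
      simp only [mul_inv_rev, inv_inv] at h8
      have : x = k' * k⁻¹ * (k * k'⁻¹ * x) := by group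
      rw [this, h8]; group
    rw [this]; exact hx
  have hc : ((bd (F n) K).card : ℝ) ≤ ∑ p ∈ K ×ˢ K, η * (F n).card := by
    have h1 := (Finset.card_le_card hs).trans Finset.card_biUnion_le
    have h2 : ((bd (F n) K).card : ℝ) ≤ ∑ p ∈ K ×ˢ K, ((((F n) ∆ ((F n).image
        ((p.2 * p.1⁻¹)⁻¹ * ·))).image (p.1⁻¹ * ·)).card : ℝ) := by exact_mod_cast h1
    refine h2.trans (Finset.sum_le_sum ?_)
    intro p hp
    refine le_trans ?_ (hn p hp)
    exact_mod_cast Finset.card_image_le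
  rw [Finset.sum_const, Finset.card_product, nsmul_eq_mul] at hc
  push_cast at hc
  have hp : (0:ℝ) < (F n).card := by exact_mod_cast (hF.1 n).card_pos
  unfold FInv
  have h3 : δ = ((K.card : ℝ) * K.card + 1) * η := by rw [hη]; field_simp
  rw [h3]
  nlinarith [mul_pos hηp hp]

/-- Asymptotic domination along all right translates of the Følner sequence. -/
def Dom (F : ℕ → Finset G) (f f' : G → ℝ) : Prop :=
  ∀ η > (0:ℝ), ∀ᶠ n in atTop, ∀ g : G,
    ∑ w ∈ F n, f (w * g) ≤ ∑ w ∈ F n, f' (w * g) + η * (F n).card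

theorem Dom.of_le {F : ℕ → Finset G} {f f' : G → ℝ} (h : ∀ x, f x ≤ f' x) : Dom F f f' := by
  intro η hη
  refine Eventually.of_forall fun n g => ?_
  have := Finset.sum_le_sum (s := F n) (fun w _ => h (w * g))
  have : 0 ≤ η * ((F n).card : ℝ) := by positivity
  linarith

theorem Dom.trans {F : ℕ → Finset G} {f f' f'' : G → ℝ} (h : Dom F f f') (h' : Dom F f' f'') :
    Dom F f f'' := by
  intro η hη
  filter_upwards [h (η/2) (by positivity), h' (η/2) (by positivity)] with n h1 h2 g
  linarith [h1 g, h2 g]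

theorem Dom.add {F : ℕ → Finset G} {f f' u u' : G → ℝ} (h : Dom F f f') (h' : Dom F u u') :
    Dom F (fun x => f x + u x) (fun x => f' x + u' x) := by
  intro η hη
  filter_upwards [h (η/2) (by positivity), h' (η/2) (by positivity)] with n h1 h2 g
  rw [Finset.sum_add_distrib, Finset.sum_add_distrib]
  linarith [h1 g, h2 g]

theorem Dom.smul {F : ℕ → Finset G} {f f' : G → ℝ} (h : Dom F f f') {c : ℝ} (hc : 0 < c) :
    Dom F (fun x => c * f x) (fun x => c * f' x) := by
  intro η hη
  filter_upwards [h (η/c) (by positivity)] with n h1 g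
  rw [← Finset.mul_sum, ← Finset.mul_sum]
  have := mul_le_mul_of_nonneg_left (h1 g) hc.le
  rw [mul_add, ← mul_assoc, mul_div_cancel₀ _ hc.ne'] at this
  exact this

theorem Dom.sum {F : ℕ → Finset G} {ι : Type*} (s : Finset ι) {f f' : ι → G → ℝ}
    (h : ∀ i ∈ s, Dom F (f i) (f' i)) :
    Dom F (fun x => ∑ i ∈ s, f i x) (fun x => ∑ i ∈ s, f' i x) := by
  classical
  induction s using Finset.induction_on with
  | empty => exact Dom.of_le (by simp)
  | insert a s ha ih =>
    simp only [Finset.sum_insert ha]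
    exact (h a (Finset.mem_insert_self _ _)).add
      (ih fun i hi => h i (Finset.mem_insert_of_mem hi))

theorem Dom.shift {F : ℕ → Finset G} (hF : Fol F) (φ : G → ℝ) {b : ℝ} (hb : ∀ x, |φ x| ≤ b)
    (l : G) : Dom F φ (fun x => φ (l * x)) := by
  intro η hη
  have hb0 : 0 ≤ b := (abs_nonneg _).trans (hb 1)
  filter_upwards [hF.2 l (η / (b + 1)) (by positivity)] with n hn g
  have h1 : ∑ w ∈ F n, φ (l * (w * g)) = ∑ w ∈ (F n).image (l * ·), φ (w * g) := by
    rw [Finset.sum_image (fun x _ y _ h => mul_left_cancel h)]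
    simp only [mul_assoc]
  rw [h1]
  set A := F n
  set A' := A.image (l * ·)
  have h2 : ∑ w ∈ A, φ (w * g) - ∑ w ∈ A', φ (w * g) =
      ∑ w ∈ A \ A', φ (w * g) - ∑ w ∈ A' \ A, φ (w * g) := by
    have e1 := Finset.sum_sdiff_sub_sum_sdiff (s₁ := A) (s₂ := A') (f := fun w => φ (w * g))
    linarith
  have h3 : ∑ w ∈ A \ A', φ (w * g) ≤ (A \ A').card * b := by
    rw [← nsmul_eq_mul]
    exact Finset.sum_le_card_nsmul _ _ _ fun x _ => (abs_le.1 (hb _)).2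
  have h4 : - ∑ w ∈ A' \ A, φ (w * g) ≤ (A' \ A).card * b := by
    rw [← nsmul_eq_mul, ← Finset.sum_neg_distrib]
    exact Finset.sum_le_card_nsmul _ _ _ fun x _ => by linarith [(abs_le.1 (hb (x * g))).1]
  have h5 : ((A ∆ A').card : ℝ) = (A \ A').card + (A' \ A).card := by
    have : Disjoint (A \ A') (A' \ A) := disjoint_sdiff_sdiff
    rw [symmDiff_def, Finset.sup_eq_union, Finset.card_union_of_disjoint this]
    push_cast; rfl
  have h6 : ((A ∆ A').card : ℝ) * b ≤ η * A.card := by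
    calc ((A ∆ A').card : ℝ) * b ≤ (η / (b+1) * A.card) * (b + 1) := by
          apply mul_le_mul hn (by linarith) hb0 (by positivity)
      _ = η * A.card := by field_simp
  rw [h5] at h6
  linarith

/-- Mass transport. -/
theorem Dom.transport {F : ℕ → Finset G} (hF : Fol F) (M : G → G → ℝ) {b : ℝ}
    (hb : ∀ x y, |M x y| ≤ b) (L : Finset G) :
    Dom F (fun x => ∑ l ∈ L, M x (l * x)) (fun y => ∑ l ∈ L, M (l⁻¹ * y) y) := by
  apply Dom.sum
  intro l _
  have := Dom.shift hF (fun x => M x (l * x)) (b := b) (fun x => hb _ _) l⁻¹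
  simpa using this

end HelperA

section HelperB
variable {G : Type*} [Group G] [DecidableEq G]

/-- A quasi-tiling: pairs `(E, A)` with `A` the disjointified part of `E`. -/
structure Pack (ε : ℝ) (D : Finset G) (P : Set (Finset G × Finset G)) (K : Finset G) (δ : ℝ) :
    Prop where
  sub : ∀ p ∈ P, p.2 ⊆ p.1
  big : ∀ p ∈ P, (1 - ε) * p.1.card ≤ p.2.card
  disj : ∀ p ∈ P, ∀ q ∈ P, p ≠ q → Disjoint p.2 q.2
  cov : ∀ p ∈ P, ∀ x ∈ p.1, ∃ q ∈ P, x ∈ q.2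
  bdd : ∀ p ∈ P, ∀ x ∈ p.1, ∀ y ∈ p.1, x * y⁻¹ ∈ D
  inv : ∀ p ∈ P, FInv p.1 K δ

/-- Covered set. -/
def cvr (P : Set (Finset G × Finset G)) : Set G := {x | ∃ p ∈ P, x ∈ p.2}

/-- Indicator. -/
noncomputable def ind (S : Set G) : G → ℝ := Set.indicator S (fun _ => (1:ℝ))

theorem ind_nonneg (S : Set G) (x : G) : 0 ≤ ind S x :=
  Set.indicator_nonneg (fun _ _ => zero_le_one) x

theorem ind_le_one (S : Set G) (x : G) : ind S x ≤ 1 :=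
  Set.indicator_le_self' (fun _ _ => zero_le_one) x

theorem ind_of_mem {S : Set G} {x : G} (h : x ∈ S) : ind S x = 1 := Set.indicator_of_mem h _
theorem ind_of_notMem {S : Set G} {x : G} (h : x ∉ S) : ind S x = 0 := Set.indicator_of_notMem h _

theorem Pack.extend {ε : ℝ} {D : Finset G} {P : Set (Finset G × Finset G)} {K : Finset G} {δ : ℝ}
    (hP : Pack ε D P K δ) (hε : ε < 1) (F : Finset G) (hF : FInv F K δ) :
    ∃ (D' : Finset G) (P' : Set (Finset G × Finset G)), P ⊆ P' ∧ Pack ε D' P' K δ ∧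
      ∀ c : G, ∃ H : Finset G, H ⊆ F.image (· * c) ∧ ε * F.card ≤ H.card ∧ ∀ x ∈ H, x ∈ cvr P' := by
  classical
  set D' := D ∪ (F ×ˢ F).image (fun p => p.1 * p.2⁻¹) with hD'
  set S : Set (Set (Finset G × Finset G)) := {P' | Pack ε D' P' K δ} with hS
  have hPS : P ∈ S := ⟨hP.sub, hP.big, hP.disj, hP.cov, fun p hp x hx y hy =>
    Finset.mem_union_left _ (hP.bdd p hp x hx y hy), hP.inv⟩
  obtain ⟨P', hPP', hmax⟩ := zorn_subset_nonempty S (by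
    intro c hcS hc hne
    refine ⟨⋃₀ c, ⟨?_, ?_, ?_, ?_, ?_, ?_⟩, fun s hs => subset_sUnion_of_mem hs⟩
    · rintro p ⟨s, hs, hp⟩; exact (hcS hs).sub p hp
    · rintro p ⟨s, hs, hp⟩; exact (hcS hs).big p hp
    · rintro p ⟨s, hs, hp⟩ q ⟨t, ht, hq⟩ hpq
      rcases hc.total hs ht with h | h
      · exact (hcS ht).disj p (h hp) q hq hpq
      · exact (hcS hs).disj p hp q (h hq) hpq
    · rintro p ⟨s, hs, hp⟩ x hx
      obtain ⟨q, hq, hxq⟩ := (hcS hs).cov p hp x hx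
      exact ⟨q, ⟨s, hs, hq⟩, hxq⟩
    · rintro p ⟨s, hs, hp⟩; exact (hcS hs).bdd p hp
    · rintro p ⟨s, hs, hp⟩; exact (hcS hs).inv p hp) P hPS
  have hP' : Pack ε D' P' K δ := hmax.prop
  refine ⟨D', P', hPP', hP', ?_⟩
  intro c
  refine ⟨(F.image (· * c)).filter (· ∈ cvr P'), Finset.filter_subset _ _, ?_,
    fun x hx => (Finset.mem_filter.1 hx).2⟩
  by_contra hlt
  push Not at hlt
  set N := (F.image (· * c)).filter (fun x => ¬ x ∈ cvr P') with hN
  have hcard := Finset.card_filter_add_card_filter_not (s := F.image (· * c)) (fun x => x ∈ cvr P')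
  rw [card_translate] at hcard
  have hcard' : ((((F.image (· * c)).filter (· ∈ cvr P')).card : ℝ)) + N.card = F.card := by
    exact_mod_cast hcard
  have hbig : (1 - ε) * (F.card:ℝ) ≤ N.card := by linarith
  have hFpos : (0:ℝ) < F.card := by exact_mod_cast hF.card_pos
  have hNpos : (0:ℝ) < N.card := lt_of_lt_of_le (by apply mul_pos <;> linarith) hbig
  have hNne : N.Nonempty := by
    rw [← Finset.card_pos]; exact_mod_cast hNpos
  set p0 : Finset G × Finset G := (F.image (· * c), N) with hp0
  have hdis : ∀ q ∈ P', Disjoint N q.2 := by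
    intro q hq
    rw [Finset.disjoint_left]
    intro x hx hxq
    exact (Finset.mem_filter.1 hx).2 ⟨q, hq, hxq⟩
  have hnew : Pack ε D' (insert p0 P') K δ := by
    refine ⟨?_, ?_, ?_, ?_, ?_, ?_⟩
    · rintro p (rfl | hp)
      · exact Finset.filter_subset _ _
      · exact hP'.sub p hp
    · rintro p (rfl | hp)
      · simp only [hp0, card_translate]; exact hbig
      · exact hP'.big p hp
    · rintro p (rfl | hp) q (rfl | hq) hpq
      · exact absurd rfl hpq
      · exact hdis q hq
      · exact (hdis p hp).symm
      · exact hP'.disj p hp q hq hpq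
    · rintro p (rfl | hp) x hx
      · by_cases hxc : x ∈ cvr P'
        · obtain ⟨q, hq, hxq⟩ := hxc
          exact ⟨q, Or.inr hq, hxq⟩
        · exact ⟨p0, Or.inl rfl, Finset.mem_filter.2 ⟨hx, hxc⟩⟩
      · obtain ⟨q, hq, hxq⟩ := hP'.cov p hp x hx
        exact ⟨q, Or.inr hq, hxq⟩
    · rintro p (rfl | hp) x hx y hy
      · simp only [hp0, Finset.mem_image] at hx hy
        obtain ⟨a, ha, rfl⟩ := hx
        obtain ⟨b, hb, rfl⟩ := hy
        apply Finset.mem_union_right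
        rw [Finset.mem_image]
        exact ⟨(a, b), by simp [ha, hb], by simp⟩
      · exact hP'.bdd p hp x hx y hy
    · rintro p (rfl | hp)
      · exact hF.translate c
      · exact hP'.inv p hp
  have hmem : p0 ∈ P' := hmax.le_of_ge (y := insert p0 P') hnew (Set.subset_insert _ _) (Set.mem_insert _ _)
  have := hdis p0 hmem
  simp only [hp0, disjoint_self] at this
  exact hNne.ne_empty this

theorem Pack.pos {ε : ℝ} {D : Finset G} {P : Set (Finset G × Finset G)} {K : Finset G} {δ : ℝ}
    (hP : Pack ε D P K δ) (hε : ε ≤ 1/2) {p} (hp : p ∈ P) : 0 < p.2.card := by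
  have h1 := hP.big p hp
  have h2 : (0:ℝ) < p.1.card := by exact_mod_cast (hP.inv p hp).card_pos
  have : (0:ℝ) < p.2.card := lt_of_lt_of_le (by apply mul_pos <;> linarith) h1
  exact_mod_cast this

theorem Pack.exists_piece {ε : ℝ} {D : Finset G} {P : Set (Finset G × Finset G)} {K : Finset G}
    {δ : ℝ} (hP : Pack ε D P K δ) : ∃ pc : G → Finset G × Finset G,
      (∀ x ∈ cvr P, pc x ∈ P ∧ x ∈ (pc x).2) ∧ ∀ p ∈ P, ∀ x ∈ p.2, pc x = p := by
  classical
  have h : ∀ x : G, ∃ p : Finset G × Finset G, x ∈ cvr P → p ∈ P ∧ x ∈ p.2 := by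
    intro x
    by_cases hx : x ∈ cvr P
    · obtain ⟨p, hp, hxp⟩ := hx
      exact ⟨p, fun _ => ⟨hp, hxp⟩⟩
    · exact ⟨(∅, ∅), fun h => absurd h hx⟩
  choose pc hpc using h
  refine ⟨pc, hpc, ?_⟩
  intro p hp x hx
  by_contra hne
  obtain ⟨h1, h2⟩ := hpc x ⟨p, hp, hx⟩
  exact Finset.disjoint_left.1 (hP.disj _ h1 p hp hne) h2 hx

theorem Pack.boundary {ε : ℝ} {D : Finset G} {P : Set (Finset G × Finset G)} {K : Finset G} {δ : ℝ}
    {F : ℕ → Finset G} (hF : Fol F)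
    (hP : Pack ε D P K δ) (hε : ε ≤ 1/2) (h1K : 1 ∈ K) (hδ : 0 < δ) :
    Dom F (ind {x | x ∉ cvr P ∧ ∃ k ∈ K, k * x ∈ cvr P}) (fun _ => 2 * δ) := by
  classical
  obtain ⟨pc, hpc, hpc'⟩ := hP.exists_piece
  set M : G → G → ℝ := fun x y =>
    if y ∈ cvr P ∧ x ∈ bd (pc y).1 K then ((pc y).2.card : ℝ)⁻¹ else 0 with hM
  set L : Finset G := (D ×ˢ K).image (fun p => p.1 * p.2) with hL
  have hMb : ∀ x y, |M x y| ≤ 1 := by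
    intro x y
    simp only [hM]
    split_ifs with h
    · rw [abs_of_nonneg (by positivity)]
      apply inv_le_one_of_one_le₀
      exact_mod_cast hP.pos hε (hpc y h.1).1
    · simp
  have hM0 : ∀ x y, 0 ≤ M x y := by
    intro x y
    simp only [hM]
    split_ifs with h
    · positivity
    · exact le_rfl
  have hT := Dom.transport hF M hMb L
  refine (Dom.of_le ?_).trans (hT.trans (Dom.of_le ?_))
  · intro x
    by_cases hx : x ∈ {x | x ∉ cvr P ∧ ∃ k ∈ K, k * x ∈ cvr P}
    · rw [ind_of_mem hx]
      obtain ⟨hx1, k, hk, p, hp, hkp⟩ := hx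
      have hxb : x ∈ bd p.1 K := by
        rw [mem_bd]
        refine ⟨⟨k, hk, hP.sub p hp hkp⟩, ⟨1, h1K, ?_⟩⟩
        rw [one_mul]
        intro h
        exact hx1 (hP.cov p hp x h)
      have hsub : p.2.image (· * x⁻¹) ⊆ L := by
        intro l hl
        rw [Finset.mem_image] at hl
        obtain ⟨y, hy, rfl⟩ := hl
        rw [hL, Finset.mem_image]
        refine ⟨(y * (k * x)⁻¹, k), ?_, by simp [mul_assoc]⟩
        rw [Finset.mem_product]
        exact ⟨hP.bdd p hp y (hP.sub p hp hy) _ (hP.sub p hp hkp), hk⟩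
      calc (1:ℝ) = ∑ y ∈ p.2, (p.2.card : ℝ)⁻¹ := by
            rw [Finset.sum_const, nsmul_eq_mul, mul_inv_cancel₀]
            exact_mod_cast (hP.pos hε hp).ne'
        _ = ∑ l ∈ p.2.image (· * x⁻¹), M x (l * x) := by
            rw [Finset.sum_image (fun a _ b _ h => mul_right_cancel h)]
            apply Finset.sum_congr rfl
            intro y hy
            simp only [hM, inv_mul_cancel_right]
            rw [if_pos, hpc' p hp y hy]
            exact ⟨⟨p, hp, hy⟩, by rw [hpc' p hp y hy]; exact hxb⟩
        _ ≤ ∑ l ∈ L, M x (l * x) :=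
            Finset.sum_le_sum_of_subset_of_nonneg hsub fun _ _ _ => hM0 _ _
    · rw [ind_of_notMem hx]
      exact Finset.sum_nonneg fun _ _ => hM0 _ _
  · intro y
    by_cases hy : y ∈ cvr P
    · obtain ⟨hp, hyp⟩ := hpc y hy
      set p := pc y with hpdef
      have hpos : (0:ℝ) < p.2.card := by exact_mod_cast hP.pos hε hp
      calc ∑ l ∈ L, M (l⁻¹ * y) y
          = ∑ l ∈ L.filter (fun l => l⁻¹ * y ∈ bd p.1 K), (p.2.card : ℝ)⁻¹ := by
            rw [Finset.sum_filter]
            apply Finset.sum_congr rfl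
            intro l _
            simp only [hM, hy, true_and, ← hpdef]
        _ = (L.filter (fun l => l⁻¹ * y ∈ bd p.1 K)).card * (p.2.card : ℝ)⁻¹ := by
            rw [Finset.sum_const, nsmul_eq_mul]
        _ ≤ (bd p.1 K).card * (p.2.card : ℝ)⁻¹ := by
            refine mul_le_mul_of_nonneg_right (Nat.cast_le.2 ?_) (by positivity)
            apply Finset.card_le_card_of_injOn (fun l => l⁻¹ * y)
            · intro l hl
              exact (Finset.mem_filter.1 hl).2
            · intro a _ b _ h
              simpa using h
        _ ≤ 2 * δ := by
            rw [← div_eq_mul_inv, div_le_iff₀ hpos]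
            have h1 := hP.inv p hp
            have h2 := hP.big p hp
            unfold FInv at h1
            have h3 : (1/2 : ℝ) * p.1.card ≤ (1 - ε) * p.1.card := by
              gcongr; linarith
            nlinarith
    · have : ∑ l ∈ L, M (l⁻¹ * y) y = 0 := by
        apply Finset.sum_eq_zero
        intro l _
        simp [hM, hy]
      rw [this]; positivity

theorem exists_pack {F : ℕ → Finset G} (hF : Fol F) {ε : ℝ} (hε0 : 0 < ε) (hε : ε ≤ 1/2) (n : ℕ) :
    ∀ (K : Finset G) (δ : ℝ), 0 < δ → ∃ (D : Finset G) (P : Set (Finset G × Finset G)),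
      Pack ε D P K δ ∧ Dom F (ind (cvr P)ᶜ) (fun _ => (1 - ε/2)^n) := by
  classical
  induction n with
  | zero =>
    intro K δ hδ
    refine ⟨∅, ∅, ⟨by simp, by simp, by simp, by simp, by simp, by simp⟩, Dom.of_le ?_⟩
    intro x
    simpa using ind_le_one _ x
  | succ n ih =>
    intro K δ hδ
    obtain ⟨m, hm⟩ := hF.exists_inv K hδ
    set S := F m with hS
    set θ : ℝ := (1 - ε/2)^n with hθ
    have hθ0 : 0 < θ := by apply pow_pos; linarith
    set δ' : ℝ := min δ (θ / 4) with hδ'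
    have hδ'0 : 0 < δ' := by rw [hδ']; positivity
    obtain ⟨D, P, hP, hV⟩ := ih (insert 1 (K ∪ S)) δ' hδ'0
    have hbdy := hP.boundary hF hε (Finset.mem_insert_self _ _) hδ'0
    have hPK : Pack ε D P K δ := ⟨hP.sub, hP.big, hP.disj, hP.cov, hP.bdd, fun p hp =>
      (hP.inv p hp).mono (fun x hx => Finset.mem_insert_of_mem (Finset.mem_union_left _ hx))
        (min_le_left _ _)⟩
    obtain ⟨D', P', hPP', hP', hcov⟩ := hPK.extend (by linarith) S hm
    refine ⟨D', P', hP', ?_⟩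
    have hUU : cvr P ⊆ cvr P' := fun x ⟨p, hp, hx⟩ => ⟨p, hPP' hp, hx⟩
    set Gd : Set G := {c | ∀ s ∈ S, s * c ∉ cvr P} with hGd
    -- boundary
    have h1 : Dom F (ind (cvr P)ᶜ) (fun x => ind Gd x + 2 * δ') := by
      refine (Dom.of_le (f' := fun x => ind Gd x +
        ind {x | x ∉ cvr P ∧ ∃ k ∈ insert 1 (K ∪ S), k * x ∈ cvr P} x) ?_).trans
          ((Dom.of_le (fun x => le_rfl)).add hbdy)
      intro x
      have n1 := ind_nonneg Gd x
      have n2 := ind_nonneg {x | x ∉ cvr P ∧ ∃ k ∈ insert 1 (K ∪ S), k * x ∈ cvr P} x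
      by_cases hx : x ∈ (cvr P)ᶜ
      · by_cases hg : x ∈ Gd
        · rw [ind_of_mem hx, ind_of_mem hg]; linarith
        · rw [ind_of_mem hx, ind_of_mem (S := {x | x ∉ cvr P ∧
            ∃ k ∈ insert 1 (K ∪ S), k * x ∈ cvr P})]
          · linarith
          · refine ⟨hx, ?_⟩
            simp only [hGd, mem_ofPred_eq] at hg
            push Not at hg
            obtain ⟨s, hs, h⟩ := hg
            exact ⟨s, by simp [hs], h⟩
      · rw [ind_of_notMem hx]; linarith
    -- transport
    set M : G → G → ℝ := fun x y => if x ∈ Gd ∧ y ∈ cvr P' then 1 else 0 with hM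
    have hMb : ∀ x y, |M x y| ≤ 1 := by
      intro x y; simp only [hM]; split_ifs <;> simp
    have hSpos : (0:ℝ) < S.card := by exact_mod_cast hm.card_pos
    have h2 : Dom F (fun x => (ε * S.card) * ind Gd x)
        (fun y => S.card * (ind (cvr P)ᶜ y - ind (cvr P')ᶜ y)) := by
      refine (Dom.of_le ?_).trans ((Dom.transport hF M hMb S).trans (Dom.of_le ?_))
      · intro x
        have hnn : 0 ≤ ∑ l ∈ S, M x (l * x) := Finset.sum_nonneg fun l _ => by
          simp only [hM]; split_ifs <;> norm_num
        by_cases hx : x ∈ Gd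
        · rw [ind_of_mem hx, mul_one]
          obtain ⟨H, hH1, hH2, hH3⟩ := hcov x
          refine hH2.trans ?_
          have : ∑ l ∈ S, M x (l * x) = ((S.filter (fun l => l * x ∈ cvr P')).card : ℝ) := by
            simp only [hM, hx, true_and]
            rw [Finset.sum_boole]
          rw [this]
          have hle : H.card ≤ ((S.filter (fun l => l * x ∈ cvr P')).image (· * x)).card := by
            apply Finset.card_le_card
            intro y hy
            obtain ⟨s, hs, rfl⟩ := Finset.mem_image.1 (hH1 hy)
            exact Finset.mem_image.2 ⟨s, Finset.mem_filter.2 ⟨hs, hH3 _ hy⟩, rfl⟩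
          rw [card_translate] at hle
          exact_mod_cast hle
        · rw [ind_of_notMem hx, mul_zero]; exact hnn
      · intro y
        by_cases hy : y ∈ cvr P
        · have hy' : y ∈ cvr P' := hUU hy
          rw [ind_of_notMem (S := (cvr P)ᶜ) (by simpa using hy),
            ind_of_notMem (S := (cvr P')ᶜ) (by simpa using hy')]
          simp only [sub_self, mul_zero]
          apply le_of_eq
          apply Finset.sum_eq_zero
          intro l hl
          simp only [hM]
          rw [if_neg]
          rintro ⟨h, -⟩
          exact h l hl (by simpa using hy)
        · by_cases hy' : y ∈ cvr P'
          · rw [ind_of_mem (S := (cvr P)ᶜ) (by simpa using hy),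
              ind_of_notMem (S := (cvr P')ᶜ) (by simpa using hy')]
            simp only [sub_zero, mul_one]
            rw [Finset.card_eq_sum_ones]
            push_cast
            apply Finset.sum_le_sum
            intro l _
            exact (abs_le.1 (hMb _ _)).2
          · rw [ind_of_mem (S := (cvr P)ᶜ) (by simpa using hy),
              ind_of_mem (S := (cvr P')ᶜ) (by simpa using hy')]
            simp [hM, hy']
    have h3 : Dom F (fun x => ε * ind Gd x) (fun y => ind (cvr P)ᶜ y - ind (cvr P')ᶜ y) := by
      have := h2.smul (c := (S.card : ℝ)⁻¹) (by positivity)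
      refine (Dom.of_le ?_).trans (this.trans (Dom.of_le ?_))
      · intro x; apply le_of_eq; field_simp
      · intro x; apply le_of_eq; field_simp
    -- combine
    have h4 := (h1.smul hε0).add h3
    have h5 : Dom F (ind (cvr P')ᶜ) (fun x => (1 - ε) * ind (cvr P)ᶜ x + ε * (2 * δ')) := by
      have h6 := h4.add (Dom.of_le (F := F) (f := fun x => ind (cvr P')ᶜ x - ε * ind (cvr P)ᶜ x -
        ε * ind Gd x) (fun x => le_rfl))
      refine (Dom.of_le ?_).trans (h6.trans (Dom.of_le ?_))
      · intro x; apply le_of_eq; ring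
      · intro x; apply le_of_eq; ring
    refine h5.trans (((hV.smul (c := 1 - ε) (by linarith)).add
      (Dom.of_le (F := F) (f := fun _ => ε * (2 * δ')) (fun x => le_rfl))).trans (Dom.of_le ?_))
    intro x
    have h7 : δ' ≤ θ / 4 := min_le_right _ _
    have h8 : ε * (2 * δ') ≤ ε * (θ / 2) := by
      apply mul_le_mul_of_nonneg_left _ hε0.le; linarith
    rw [pow_succ]
    nlinarith

end HelperB

section HelperC
variable {G : Type*} [Group G] [DecidableEq G]

/-- A tiling with bounded tiles, coded by the map sending a point to its tile. -/
structure Til (D : Finset G) (τ : G → Finset G) : Prop where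
  self : ∀ g, g ∈ τ g
  eq : ∀ g, ∀ h ∈ τ g, τ h = τ g
  bdd : ∀ g, ∀ h ∈ τ g, h * g⁻¹ ∈ D

theorem exists_til {α : Type*} (f : G → α) (D : Finset G) (h : ∀ x y, f x = f y → x * y⁻¹ ∈ D) :
    ∃ τ : G → Finset G, Til D τ ∧ ∀ g x, x ∈ τ g ↔ f x = f g := by
  classical
  have key : ∀ g x, x ∈ (D.image (· * g)).filter (fun x => f x = f g) ↔ f x = f g := by
    intro g x
    rw [Finset.mem_filter, Finset.mem_image]
    exact ⟨fun h => h.2, fun hx => ⟨⟨x * g⁻¹, h _ _ hx, by simp⟩, hx⟩⟩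
  refine ⟨fun g => (D.image (· * g)).filter (fun x => f x = f g), ⟨?_, ?_, ?_⟩, key⟩
  · intro g; rw [key]
  · intro g x hx
    rw [key] at hx
    ext y
    rw [key, key, hx]
  · intro g x hx
    rw [key] at hx
    exact h _ _ hx

theorem window_count (W Y Γ : Finset G) (h : ∀ w ∈ W, ∀ y ∈ Y, w⁻¹ * y ∈ Γ) :
    ∑ g ∈ Γ, ∑ w ∈ W, ind (Y : Set G) (w * g) = W.card * Y.card := by
  rw [Finset.sum_comm]
  have : ∀ w ∈ W, ∑ g ∈ Γ, ind (Y : Set G) (w * g) = Y.card := by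
    intro w hw
    have h1 : ∀ g ∈ Γ, ind (Y : Set G) (w * g) = if w * g ∈ Y then 1 else 0 := by
      intro g _
      split_ifs with hg
      · exact ind_of_mem (by simpa using hg)
      · exact ind_of_notMem (by simpa using hg)
    rw [Finset.sum_congr rfl h1, Finset.sum_boole]
    congr 1
    apply Finset.card_bij (fun g _ => w * g)
    · intro g hg; exact (Finset.mem_filter.1 hg).2
    · intro a _ b _ hab; exact mul_left_cancel hab
    · intro y hy
      exact ⟨w⁻¹ * y, Finset.mem_filter.2 ⟨h w hw y hy, by simpa using hy⟩, by simp⟩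
  rw [Finset.sum_congr rfl this, Finset.sum_const, nsmul_eq_mul]

theorem hall_windows (V R : Set G) (W : Finset G) (hW : W.Nonempty)
    (h : ∀ g, ∑ w ∈ W, ind V (w * g) ≤ ∑ w ∈ W, ind R (w * g)) :
    ∃ f : G → G, Set.InjOn f V ∧ ∀ x ∈ V, f x ∈ R ∧
      f x * x⁻¹ ∈ (W ×ˢ W).image (fun p => p.1 * p.2⁻¹) := by
  classical
  set L := (W ×ˢ W).image (fun p => p.1 * p.2⁻¹) with hL
  set t : V → Finset G := fun x => (L.image (· * x.1)).filter (· ∈ R) with ht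
  have hall : ∀ s : Finset V, s.card ≤ (s.biUnion t).card := by
    intro s
    set X : Finset G := s.image Subtype.val with hX
    set N := s.biUnion t with hN
    have hXc : X.card = s.card := Finset.card_image_of_injective _ Subtype.val_injective
    rw [← hXc]
    set Γ := (W ×ˢ (X ∪ N)).image (fun p => p.1⁻¹ * p.2) with hΓ
    have e1 := window_count W X Γ (fun w hw y hy => Finset.mem_image.2
      ⟨(w, y), by simp [hw, hy], rfl⟩)
    have e2 := window_count W N Γ (fun w hw y hy => Finset.mem_image.2
      ⟨(w, y), Finset.mem_product.2 ⟨hw, Finset.mem_union_right _ hy⟩, rfl⟩)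
    have hle : ∑ g ∈ Γ, ∑ w ∈ W, ind (X : Set G) (w * g) ≤
        ∑ g ∈ Γ, ∑ w ∈ W, ind (N : Set G) (w * g) := by
      apply Finset.sum_le_sum
      intro g _
      by_cases hex : ∃ w0 ∈ W, w0 * g ∈ X
      · obtain ⟨w0, hw0, hx0⟩ := hex
        calc ∑ w ∈ W, ind (X : Set G) (w * g) ≤ ∑ w ∈ W, ind V (w * g) := by
              apply Finset.sum_le_sum
              intro w _
              by_cases hx : w * g ∈ X
              · rw [ind_of_mem (S := (X : Set G)) (by simpa using hx), ind_of_mem]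
                obtain ⟨x, _, hx⟩ := Finset.mem_image.1 hx
                rw [← hx]; exact x.2
              · rw [ind_of_notMem (S := (X : Set G)) (by simpa using hx)]
                exact ind_nonneg _ _
          _ ≤ ∑ w ∈ W, ind R (w * g) := h g
          _ ≤ _ := by
              apply Finset.sum_le_sum
              intro w hw
              by_cases hx : w * g ∈ R
              · rw [ind_of_mem hx, ind_of_mem]
                obtain ⟨x, hxs, hx1⟩ := Finset.mem_image.1 hx0
                simp only [Finset.mem_coe, hN, Finset.mem_biUnion]
                refine ⟨x, hxs, ?_⟩
                simp only [ht, Finset.mem_filter, Finset.mem_image]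
                refine ⟨⟨w * w0⁻¹, ?_, ?_⟩, hx⟩
                · exact Finset.mem_image.2 ⟨(w, w0), by simp [hw, hw0], rfl⟩
                · rw [hx1]; group
              · rw [ind_of_notMem hx]; exact ind_nonneg _ _
      · push Not at hex
        have : ∑ w ∈ W, ind (X : Set G) (w * g) = 0 :=
          Finset.sum_eq_zero fun w hw => ind_of_notMem (by simpa using hex w hw)
        rw [this]
        exact Finset.sum_nonneg fun _ _ => ind_nonneg _ _
    rw [e1, e2] at hle
    have hWp : (0:ℝ) < W.card := by exact_mod_cast hW.card_pos
    exact_mod_cast le_of_mul_le_mul_left hle hWp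
  obtain ⟨f, hf, hft⟩ := (Finset.all_card_le_biUnion_card_iff_exists_injective t).1 hall
  refine ⟨fun x => if hx : x ∈ V then f ⟨x, hx⟩ else x, ?_, ?_⟩
  · intro x hx y hy hxy
    simp only [hx, hy, dif_pos] at hxy
    simpa using hf hxy
  · intro x hx
    simp only [hx, dif_pos]
    have := hft ⟨x, hx⟩
    simp only [ht, Finset.mem_filter] at this
    refine ⟨this.2, ?_⟩
    obtain ⟨l, hl, hlx⟩ := Finset.mem_image.1 this.1
    rw [← hlx]
    simpa using hl

theorem Pack.reserve {ε : ℝ} {D : Finset G} {P : Set (Finset G × Finset G)} {K : Finset G} {δ : ℝ}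
    {F : ℕ → Finset G} (hF : Fol F)
    (hP : Pack ε D P K δ) (hε : ε ≤ 1/2)
    {pc : G → Finset G × Finset G} (hpc : ∀ x ∈ cvr P, pc x ∈ P ∧ x ∈ (pc x).2)
    (hpc' : ∀ p ∈ P, ∀ x ∈ p.2, pc x = p) {ρ : ℝ} {Rf : Finset G × Finset G → Finset G}
    (hR1 : ∀ p ∈ P, Rf p ⊆ p.2) (hR2 : ∀ p ∈ P, ρ * p.2.card ≤ (Rf p).card) :
    Dom F (fun x => ρ * ind (cvr P) x) (ind {x | x ∈ cvr P ∧ x ∈ Rf (pc x)}) := by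
  classical
  set R : Set G := {x | x ∈ cvr P ∧ x ∈ Rf (pc x)} with hR
  set M : G → G → ℝ := fun x y =>
    if x ∈ cvr P ∧ y ∈ Rf (pc x) then ((pc x).2.card : ℝ)⁻¹ else 0 with hM
  have hMb : ∀ x y, |M x y| ≤ 1 := by
    intro x y
    simp only [hM]
    split_ifs with h
    · rw [abs_of_nonneg (by positivity)]
      apply inv_le_one_of_one_le₀
      exact_mod_cast hP.pos hε (hpc x h.1).1
    · simp
  have hM0 : ∀ x y, 0 ≤ M x y := by
    intro x y
    simp only [hM]
    split_ifs with h
    · positivity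
    · exact le_rfl
  refine (Dom.of_le ?_).trans ((Dom.transport hF M hMb D).trans (Dom.of_le ?_))
  · intro x
    by_cases hx : x ∈ cvr P
    · rw [ind_of_mem hx, mul_one]
      obtain ⟨hp, hxp⟩ := hpc x hx
      set p := pc x with hpdef
      have hpos : (0:ℝ) < p.2.card := by exact_mod_cast hP.pos hε hp
      have hsub : (Rf p).image (· * x⁻¹) ⊆ D := by
        intro l hl
        obtain ⟨y, hy, rfl⟩ := Finset.mem_image.1 hl
        exact hP.bdd p hp y (hP.sub p hp (hR1 p hp hy)) x (hP.sub p hp hxp)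
      calc ρ ≤ (Rf p).card * (p.2.card : ℝ)⁻¹ := by
            rw [← div_eq_mul_inv, le_div_iff₀ hpos]; exact hR2 p hp
        _ = ∑ y ∈ Rf p, (p.2.card : ℝ)⁻¹ := by rw [Finset.sum_const, nsmul_eq_mul]
        _ = ∑ l ∈ (Rf p).image (· * x⁻¹), M x (l * x) := by
            rw [Finset.sum_image (fun a _ b _ h => mul_right_cancel h)]
            apply Finset.sum_congr rfl
            intro y hy
            simp only [hM, inv_mul_cancel_right]
            rw [if_pos]
            exact ⟨hx, hy⟩
        _ ≤ _ := Finset.sum_le_sum_of_subset_of_nonneg hsub fun _ _ _ => hM0 _ _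
    · rw [ind_of_notMem hx, mul_zero]
      exact Finset.sum_nonneg fun _ _ => hM0 _ _
  · intro y
    by_cases hy : y ∈ R
    · rw [ind_of_mem hy]
      obtain ⟨hp, hyp⟩ := hpc y hy.1
      set p := pc y with hpdef
      have hpos : (0:ℝ) < p.2.card := by exact_mod_cast hP.pos hε hp
      calc ∑ l ∈ D, M (l⁻¹ * y) y
          ≤ ∑ l ∈ D.filter (fun l => l⁻¹ * y ∈ p.2), (p.2.card : ℝ)⁻¹ := by
            rw [Finset.sum_filter]
            apply Finset.sum_le_sum
            intro l _
            simp only [hM]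
            split_ifs with h1 h2 h2
            · rw [hpc' p hp _ h2]
            · exfalso
              obtain ⟨h3, h4⟩ := hpc _ h1.1
              have h5 := hpc' _ h3 y (hR1 _ h3 h1.2)
              rw [← hpdef] at h5
              rw [← h5] at h4
              exact h2 h4
            · positivity
            · exact le_rfl
        _ = (D.filter (fun l => l⁻¹ * y ∈ p.2)).card * (p.2.card : ℝ)⁻¹ := by
            rw [Finset.sum_const, nsmul_eq_mul]
        _ ≤ p.2.card * (p.2.card : ℝ)⁻¹ := by
            refine mul_le_mul_of_nonneg_right (Nat.cast_le.2 ?_) (by positivity)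
            apply Finset.card_le_card_of_injOn (fun l => l⁻¹ * y)
            · intro l hl
              exact (Finset.mem_filter.1 hl).2
            · intro a _ b _ h
              simpa using h
        _ = 1 := mul_inv_cancel₀ hpos.ne'
    · rw [ind_of_notMem hy]
      apply le_of_eq
      apply Finset.sum_eq_zero
      intro l _
      simp only [hM]
      rw [if_neg]
      rintro ⟨h1, h2⟩
      obtain ⟨h3, h4⟩ := hpc _ h1
      have h5 := hpc' _ h3 y (hR1 _ h3 h2)
      apply hy
      refine ⟨⟨_, h3, hR1 _ h3 h2⟩, ?_⟩
      rw [h5]; exact h2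

theorem exists_exact_tiling [Infinite G] {F : ℕ → Finset G} (hF : Fol F) (K : Finset G)
    {ε : ℝ} (hε0 : 0 < ε) : ∃ (D : Finset G) (τ : G → Finset G), Til D τ ∧ ∀ g, FInv (τ g) K ε := by
  classical
  wlog hε1 : ε ≤ 1 generalizing ε
  · obtain ⟨D, τ, h1, h2⟩ := this zero_lt_one le_rfl
    exact ⟨D, τ, h1, fun g => (h2 g).mono (Finset.Subset.refl _) (by linarith)⟩
  set e : ℝ := ε / (20 * (K.card + 1)) with he
  have he0 : 0 < e := by positivity
  have hKe : (K.card + 1) * e = ε / 20 := by rw [he]; field_simp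
  have he1 : e ≤ 1/20 := by
    have : 0 ≤ (K.card : ℝ) * e := by positivity
    nlinarith
  obtain ⟨B, hB⟩ := Infinite.exists_subset_card_eq G (⌈2 / e⌉₊)
  obtain ⟨n, hn⟩ := exists_pow_lt_of_lt_one (show 0 < e / 4 by positivity)
    (show 1 - e / 2 < 1 by linarith)
  obtain ⟨D, P, hP, hV⟩ := exists_pack hF he0 (by linarith) n (insert 1 (K ∪ B)) (ε / 4)
    (by positivity)
  obtain ⟨pc, hpc, hpc'⟩ := hP.exists_piece
  have hsize : ∀ p ∈ P, 1 ≤ e * p.2.card := by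
    intro p hp
    have h1 := (hP.inv p hp).card_ge (by linarith) (Finset.mem_insert_self _ _)
    have h2 : B.card ≤ (insert 1 (K ∪ B)).card := Finset.card_le_card
      fun x hx => Finset.mem_insert_of_mem (Finset.mem_union_right _ hx)
    have h3 : 2 / e ≤ p.1.card := by
      refine (Nat.le_ceil _).trans ?_
      rw [← hB]; exact_mod_cast h2.trans h1
    have h4 := hP.big p hp
    rw [div_le_iff₀ he0] at h3
    have h5 : (1/2 : ℝ) * p.1.card ≤ (1 - e) * p.1.card := by gcongr; linarith
    nlinarith
  have hRex : ∀ p : Finset G × Finset G, ∃ R : Finset G, p ∈ P →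
      R ⊆ p.2 ∧ e * p.2.card ≤ R.card ∧ (R.card : ℝ) ≤ 2 * e * p.2.card := by
    intro p
    by_cases hp : p ∈ P
    · have h1 : ⌈e * (p.2.card : ℝ)⌉₊ ≤ p.2.card := by
        apply Nat.ceil_le.2
        have : (0:ℝ) ≤ p.2.card := by positivity
        nlinarith
      obtain ⟨R, hR, hRc⟩ := Finset.exists_subset_card_eq h1
      refine ⟨R, fun _ => ⟨hR, ?_, ?_⟩⟩
      · rw [hRc]; exact Nat.le_ceil _
      · rw [hRc]
        have := Nat.ceil_lt_add_one (show 0 ≤ e * (p.2.card : ℝ) by positivity)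
        have := hsize p hp
        linarith
    · exact ⟨∅, fun h => absurd h hp⟩
  choose Rf hRf using hRex
  have hres := hP.reserve hF (by linarith) hpc hpc' (ρ := e) (Rf := Rf)
    (fun p hp => (hRf p hp).1) (fun p hp => (hRf p hp).2.1)
  set R : Set G := {x | x ∈ cvr P ∧ x ∈ Rf (pc x)} with hR
  have hdom : Dom F (fun x => ind (cvr P)ᶜ x + e / 4) (ind R) := by
    have h1 := ((hV.smul (c := 1 + e) (by linarith)).add hres).add
      (Dom.of_le (F := F) (f := fun _ => e / 4 - e) (fun x => le_rfl))
    refine (Dom.of_le ?_).trans (h1.trans (Dom.of_le ?_))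
    · intro x
      by_cases hx : x ∈ cvr P
      · rw [ind_of_notMem (S := (cvr P)ᶜ) (by simpa using hx), ind_of_mem hx]
        linarith
      · rw [ind_of_mem (S := (cvr P)ᶜ) (by simpa using hx), ind_of_notMem hx]
        linarith
    · intro x
      have h2 : (1 + e) * (1 - e / 2)^n ≤ (1 + e) * (e / 4) :=
        mul_le_mul_of_nonneg_left hn.le (by linarith)
      nlinarith
  obtain ⟨m, hm⟩ := (hdom (e / 4) (by positivity)).exists
  have hwin : ∀ g, ∑ w ∈ F m, ind (cvr P)ᶜ (w * g) ≤ ∑ w ∈ F m, ind R (w * g) := by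
    intro g
    have := hm g
    rw [Finset.sum_add_distrib, Finset.sum_const, nsmul_eq_mul] at this
    linarith
  obtain ⟨f, hfinj, hf⟩ := hall_windows _ R (F m) (hF.1 m) hwin
  set L := ((F m) ×ˢ (F m)).image (fun p => p.1 * p.2⁻¹) with hL
  set L' := insert 1 L with hL'
  set r : G → G := fun x => if x ∈ cvr P then x else f x with hr
  have hr1 : ∀ x, r x ∈ cvr P := by
    intro x
    simp only [hr]
    split_ifs with h
    · exact h
    · exact (hf x h).1.1
  have hr2 : ∀ x, r x * x⁻¹ ∈ L' := by
    intro x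
    simp only [hr]
    split_ifs with h
    · simp [hL']
    · exact Finset.mem_insert_of_mem (hf x h).2
  obtain ⟨τ, hτ, hτm⟩ := exists_til (fun x => pc (r x))
    ((L' ×ˢ (D ×ˢ L')).image (fun q => q.1⁻¹ * q.2.1 * q.2.2)) (by
      intro x y hxy
      obtain ⟨h1, h2⟩ := hpc _ (hr1 x)
      obtain ⟨h3, h4⟩ := hpc _ (hr1 y)
      rw [← hxy] at h4
      have h5 := hP.bdd _ h1 _ (hP.sub _ h1 h2) _ (hP.sub _ h1 h4)
      rw [Finset.mem_image]
      refine ⟨(r x * x⁻¹, r x * (r y)⁻¹, r y * y⁻¹), ?_, by group⟩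
      simp only [Finset.mem_product]
      exact ⟨hr2 x, h5, hr2 y⟩)
  refine ⟨_, τ, hτ, ?_⟩
  intro g
  obtain ⟨hp, hgp⟩ := hpc _ (hr1 g)
  set p := pc (r g) with hpdef
  have hinv : FInv p.1 K (ε / 4) := (hP.inv p hp).mono
    (fun x hx => Finset.mem_insert_of_mem (Finset.mem_union_left _ hx)) le_rfl
  refine hinv.perturb (θ := 3 * e) ?_ hε0 ?_
  · have hsub : p.1 ∆ (τ g) ⊆ (p.1 \ p.2) ∪ (τ g).filter (fun x => x ∉ cvr P) := by
      intro x hx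
      rw [Finset.mem_symmDiff] at hx
      rw [Finset.mem_union, Finset.mem_sdiff, Finset.mem_filter]
      rcases hx with ⟨h1, h2⟩ | ⟨h1, h2⟩
      · left
        refine ⟨h1, fun h3 => h2 ?_⟩
        rw [hτm]
        have hxc : x ∈ cvr P := ⟨p, hp, h3⟩
        simp only [hr, hxc, if_true] at hpdef ⊢
        rw [← hpdef]
        exact hpc' p hp x h3
      · right
        refine ⟨h1, fun h3 => h2 ?_⟩
        rw [hτm] at h1
        have h4 : r x = x := by simp [hr, h3]
        rw [h4, ← hpdef] at h1
        have := (hpc x h3).2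
        rw [h1] at this
        exact hP.sub p hp this
    have hc1 : ((τ g).filter (fun x => x ∉ cvr P)).card ≤ (Rf p).card := by
      apply Finset.card_le_card_of_injOn f
      · intro x hx
        obtain ⟨h1, h2⟩ := Finset.mem_filter.1 (Finset.mem_coe.1 hx)
        rw [hτm, ← hpdef] at h1
        have h3 : r x = f x := by simp [hr, h2]
        rw [h3] at h1
        have := (hf x h2).1.2
        rw [h1] at this
        exact this
      · intro x hx y hy hxy
        exact hfinj (Finset.mem_filter.1 (Finset.mem_coe.1 hx)).2
          (Finset.mem_filter.1 (Finset.mem_coe.1 hy)).2 hxy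
    have hc2 : ((p.1 \ p.2).card : ℝ) = p.1.card - p.2.card := by
      have := Finset.card_sdiff_add_card_eq_card (hP.sub p hp)
      have : ((p.1 \ p.2).card : ℝ) + p.2.card = p.1.card := by exact_mod_cast this
      linarith
    have hc3 : ((p.1 ∆ (τ g)).card : ℝ) ≤ (p.1 \ p.2).card + (Rf p).card := by
      exact_mod_cast (Finset.card_le_card hsub).trans
        ((Finset.card_union_le _ _).trans (by omega))
    have hc4 : (p.2.card : ℝ) ≤ p.1.card := by
      exact_mod_cast Finset.card_le_card (hP.sub p hp)
    have hc5 := (hRf p hp).2.2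
    have hc6 := hP.big p hp
    nlinarith
  · nlinarith

end HelperC

section HelperD
variable {G : Type*} [Group G] [DecidableEq G]

theorem exists_coarser [Infinite G] {F : ℕ → Finset G} (hF : Fol F) {D0 : Finset G}
    {τ0 : G → Finset G} (h0 : Til D0 τ0) (K : Finset G) {ε : ℝ} (hε : 0 < ε) :
    ∃ D τ, Til D τ ∧ (∀ g, τ0 g ⊆ τ g) ∧ ∀ g : G, FInv (τ g) K ε := by
  classical
  have hp : ∃ p : Finset G → G, ∀ s : Finset G, s.Nonempty → p s ∈ s :=
    ⟨fun s => if h : s.Nonempty then h.choose else 1, fun s h => by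
      simp only [h, dif_pos]; exact h.choose_spec⟩
  obtain ⟨p, hp⟩ := hp
  have hr : ∀ x, p (τ0 x) ∈ τ0 x := fun x => hp _ ⟨x, h0.self x⟩
  have hθ : 0 < ε / (1 + K.card + ε) := by positivity
  obtain ⟨D1, τ1, h1, hinv⟩ := exists_exact_tiling hF (K ∪ insert 1 D0) hθ
  obtain ⟨τ, hτ, hτm⟩ := exists_til (fun x => τ1 (p (τ0 x)))
    ((D0 ×ˢ (D1 ×ˢ D0)).image (fun q => q.1 * q.2.1 * q.2.2)) (by
      intro x y hxy
      have h2 : p (τ0 x) ∈ τ1 (p (τ0 y)) := hxy ▸ h1.self _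
      have h3 := h1.bdd _ _ h2
      rw [Finset.mem_image]
      refine ⟨(x * (p (τ0 x))⁻¹, p (τ0 x) * (p (τ0 y))⁻¹, p (τ0 y) * y⁻¹), ?_, by group⟩
      simp only [Finset.mem_product]
      refine ⟨h0.bdd _ _ ?_, h3, h0.bdd _ _ (hr y)⟩
      rw [h0.eq _ _ (hr x)]; exact h0.self x)
  refine ⟨_, τ, hτ, ?_, ?_⟩
  · intro g x hx
    rw [hτm, h0.eq _ _ hx]
  · intro g
    have hA := hinv (p (τ0 g))
    have hsub : (τ1 (p (τ0 g))) ∆ (τ g) ⊆ bd (τ1 (p (τ0 g))) (K ∪ insert 1 D0) := by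
      intro x hx
      have hd := h0.bdd _ _ (hr x)
      rw [mem_bd]
      rw [Finset.mem_symmDiff] at hx
      rcases hx with ⟨hx1, hx2⟩ | ⟨hx1, hx2⟩
      · refine ⟨⟨1, by simp, by simpa using hx1⟩, ⟨_, Finset.mem_union_right _ (Finset.mem_insert_of_mem hd), ?_⟩⟩
        intro h3
        apply hx2
        rw [hτm]
        rw [inv_mul_cancel_right] at h3
        exact h1.eq _ _ h3
      · refine ⟨⟨_, Finset.mem_union_right _ (Finset.mem_insert_of_mem hd), ?_⟩, ⟨1, by simp, by simpa using hx2⟩⟩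
        rw [hτm] at hx1
        rw [inv_mul_cancel_right, ← hx1]
        exact h1.self _
    have hc : (((τ1 (p (τ0 g))) ∆ (τ g)).card : ℝ) ≤ ε / (1 + K.card + ε) * (τ1 (p (τ0 g))).card := by
      refine le_trans ?_ hA.le
      exact_mod_cast Finset.card_le_card hsub
    refine (hA.mono Finset.subset_union_left le_rfl).perturb hc hε (le_of_eq ?_)
    field_simp
    ring
end HelperD

section HelperE
variable {G : Type*} [Group G] [DecidableEq G]

/-- Trivial right stabilizer. -/
def TS (E : Finset G) : Prop := ∀ h : G, E.image (· * h) = E → h = 1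

theorem mem_of_stab {E : Finset G} {h : G} (he : E.image (· * h) = E) (x : G) :
    x ∈ E ↔ x * h ∈ E := by
  conv_rhs => rw [← he]
  rw [Finset.mem_image]
  constructor
  · intro hx; exact ⟨x, hx, rfl⟩
  · rintro ⟨y, hy, hyx⟩
    rwa [← mul_right_cancel hyx]

theorem count_inj {m : ℕ} (J : Finset (Finset (Fin m))) (I : Finset (Fin m))
    (h : ∀ a ∈ J, ∀ b ∈ J, a ∩ I = b ∩ I → a = b) : J.card ≤ 2 ^ I.card := by
  rw [← Finset.card_powerset]
  apply Finset.card_le_card_of_injOn (fun a => a ∩ I)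
  · intro a _
    simp only [Finset.coe_powerset, Set.mem_preimage, Set.mem_powerset_iff, Finset.coe_subset]
    exact Finset.inter_subset_right
  · intro a ha b hb hab
    exact h a ha b hb hab

theorem count_abs {m : ℕ} (J : Finset (Finset (Fin m)))
    (h : ∀ j, (∃ i, i ≠ j ∧ ∀ a ∈ J, (j ∈ a ↔ i ∈ a)) ∨ ∀ a ∈ J, ∀ b ∈ J, (j ∈ a ↔ j ∈ b)) :
    J.card * J.card ≤ 2 ^ m := by
  classical
  set I : Finset (Fin m) := Finset.univ.filter (fun j => ∃ i, j < i ∧ ∀ a ∈ J, (j ∈ a ↔ i ∈ a)) with hI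
  have h1 : J.card ≤ 2 ^ I.card := by
    apply count_inj
    intro a ha b hb hab
    have key : ∀ n : ℕ, ∀ j : Fin m, j.val = n → (j ∈ a ↔ j ∈ b) := by
      intro n
      induction n using Nat.strong_induction_on with
      | _ n ih =>
        intro j hj
        by_cases hjI : j ∈ I
        · have := congrArg (fun s => j ∈ s) hab
          simpa [hjI] using this
        · rcases h j with ⟨i, hij, hi⟩ | h'
          · have hlt : i < j := by
              by_contra hcon
              exact hjI (Finset.mem_filter.2 ⟨Finset.mem_univ _, i,
                lt_of_le_of_ne (not_lt.1 hcon) hij.symm, hi⟩)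
            rw [hi a ha, hi b hb]
            exact ih i.val (by rw [← hj]; exact hlt) i rfl
          · exact h' a ha b hb
    ext j
    exact key _ j rfl
  have h2 : J.card ≤ 2 ^ (Iᶜ).card := by
    apply count_inj
    intro a ha b hb hab
    have key : ∀ n : ℕ, ∀ j : Fin m, m - j.val = n → (j ∈ a ↔ j ∈ b) := by
      intro n
      induction n using Nat.strong_induction_on with
      | _ n ih =>
        intro j hj
        by_cases hjI : j ∈ I
        · obtain ⟨i, hij, hi⟩ := (Finset.mem_filter.1 hjI).2
          rw [hi a ha, hi b hb]
          have := i.2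
          exact ih (m - i.val) (by rw [← hj]; have : j.val < i.val := hij; omega) i rfl
        · have := congrArg (fun s => j ∈ s) hab
          simpa [hjI] using this
    ext j
    exact key _ j rfl
  calc J.card * J.card ≤ 2 ^ I.card * 2 ^ (Iᶜ).card := Nat.mul_le_mul h1 h2
    _ = 2 ^ m := by
      rw [← pow_add, Finset.card_add_card_compl, Fintype.card_fin]

theorem count_bad {m : ℕ} (B : Fin m → Finset G) (hB : ∀ i j x, x ∈ B i → x ∈ B j → i = j)
    (R : Finset G) (hR : ∀ x ∈ R, ∀ j, x ∉ B j) (hts : ∀ j, TS (B j)) {h : G} (hh : h ≠ 1) :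
    ((Finset.univ : Finset (Finset (Fin m))).filter
      (fun J => (R ∪ J.biUnion B).image (· * h) = R ∪ J.biUnion B)).card *
    ((Finset.univ : Finset (Finset (Fin m))).filter
      (fun J => (R ∪ J.biUnion B).image (· * h) = R ∪ J.biUnion B)).card ≤ 2 ^ m := by
  have hb : ∀ j, ∃ b ∈ B j, b * h ∉ B j := by
    intro j
    by_contra! hcon
    apply hh
    apply hts j
    apply Finset.eq_of_subset_of_card_le
    · intro x hx
      obtain ⟨y, hy, rfl⟩ := Finset.mem_image.1 hx
      exact hcon y hy
    · rw [card_translate]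
  choose b hb hbh using hb
  have hmem : ∀ j (J : Finset (Fin m)), j ∈ J ↔ b j ∈ R ∪ J.biUnion B := by
    intro j J
    rw [Finset.mem_union, Finset.mem_biUnion]
    constructor
    · intro hj; exact Or.inr ⟨j, hj, hb j⟩
    · rintro (h' | ⟨i, hi, hbi⟩)
      · exact absurd (hb j) (hR _ h' j)
      · rwa [hB j i _ (hb j) hbi]
  apply count_abs
  intro j
  by_cases hj : ∃ i, b j * h ∈ B i
  · left
    obtain ⟨i, hi⟩ := hj
    refine ⟨i, fun hij => hbh j (hij ▸ hi), ?_⟩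
    intro J hJ
    rw [hmem j J, mem_of_stab (Finset.mem_filter.1 hJ).2]
    rw [Finset.mem_union, Finset.mem_biUnion]
    constructor
    · rintro (h' | ⟨k, hk, hbk⟩)
      · exact absurd hi (hR _ h' i)
      · rwa [hB i k _ hi hbk]
    · intro h'; exact Or.inr ⟨i, h', hi⟩
  · right
    push Not at hj
    have : ∀ J ∈ (Finset.univ : Finset (Finset (Fin m))).filter
      (fun J => (R ∪ J.biUnion B).image (· * h) = R ∪ J.biUnion B), (j ∈ J ↔ b j * h ∈ R) := by
      intro J hJ
      rw [hmem j J, mem_of_stab (Finset.mem_filter.1 hJ).2]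
      rw [Finset.mem_union, Finset.mem_biUnion]
      constructor
      · rintro (h' | ⟨k, hk, hbk⟩)
        · exact h'
        · exact absurd hbk (hj k)
      · exact Or.inl
    intro a ha a' ha'
    rw [this a ha, this a' ha']

open Classical in
theorem bad_count {p : ℕ} (B : Fin (2 * p) → Finset G)
    (hB : ∀ i j x, x ∈ B i → x ∈ B j → i = j)
    (R Q : Finset G) (hR : ∀ x ∈ R, ∀ j, x ∉ B j) (hts : ∀ j, TS (B j)) (hne : R.Nonempty)
    (hRQ : R ⊆ Q) (hBQ : ∀ j, B j ⊆ Q) :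
    ((Finset.univ : Finset (Finset (Fin (2 * p)))).filter
      (fun J => ¬ TS (R ∪ J.biUnion B))).card ≤ Q.card * 2 ^ p := by
  obtain ⟨r, hr⟩ := hne
  have hsub : (Finset.univ : Finset (Finset (Fin (2 * p)))).filter
      (fun J => ¬ TS (R ∪ J.biUnion B)) ⊆ ((Q.image (r⁻¹ * ·)).erase 1).biUnion (fun h =>
        (Finset.univ : Finset (Finset (Fin (2 * p)))).filter
      (fun J => (R ∪ J.biUnion B).image (· * h) = R ∪ J.biUnion B)) := by
    intro J hJ
    have hJ' := (Finset.mem_filter.1 hJ).2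
    unfold TS at hJ'
    push Not at hJ'
    obtain ⟨h, he, hh⟩ := hJ'
    rw [Finset.mem_biUnion]
    refine ⟨h, ?_, Finset.mem_filter.2 ⟨Finset.mem_univ _, he⟩⟩
    rw [Finset.mem_erase, Finset.mem_image]
    refine ⟨hh, r * h, ?_, by group⟩
    have : r * h ∈ R ∪ J.biUnion B := (mem_of_stab he r).1 (Finset.mem_union_left _ hr)
    rw [Finset.mem_union, Finset.mem_biUnion] at this
    rcases this with h' | ⟨k, _, hk⟩
    · exact hRQ h'
    · exact hBQ k hk
  refine (Finset.card_le_card hsub).trans ?_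
  refine (Finset.card_biUnion_le_card_mul _ _ (2 ^ p) ?_).trans ?_
  · intro h hh
    have := count_bad B hB R hR hts (Finset.ne_of_mem_erase hh)
    have h2 := this.trans_eq (show (2:ℕ) ^ (2 * p) = 2 ^ p * 2 ^ p by rw [two_mul, pow_add])
    have h3 := Nat.mul_self_le_mul_self_iff.1 h2
    convert h3
  · apply Nat.mul_le_mul_right
    exact (Finset.card_le_card (Finset.erase_subset _ _)).trans Finset.card_image_le

theorem Til.card_le {D : Finset G} {τ : G → Finset G} (h : Til D τ) (g : G) :
    (τ g).card ≤ D.card := by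
  rw [← card_translate D g]
  apply Finset.card_le_card
  intro x hx
  exact Finset.mem_image.2 ⟨x * g⁻¹, h.bdd _ _ hx, by simp⟩

theorem Til.sub {D : Finset G} {τ : G → Finset G} (h : Til D τ) {g x y : G} (hx : y ∈ τ x)
    (hy : y ∈ τ g) : τ x = τ g := by
  rw [← h.eq _ _ hx, ← h.eq _ _ hy]

theorem split_tile {D0 : Finset G} {τ0 : G → Finset G} (h0 : Til D0 τ0) (hts : ∀ g, TS (τ0 g))
    (A1 A2 : Finset G) (hdisj : Disjoint A1 A2) (hs1 : ∀ x ∈ A1, τ0 x ⊆ A1)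
    (hs2 : ∀ x ∈ A2, τ0 x ⊆ A2) (p : ℕ) (hc1 : 2 * p * D0.card < A1.card)
    (hc2 : 2 * p * D0.card < A2.card) (hp : 2 * (A1 ∪ A2).card < 2 ^ p) :
    ∃ A1' A2', Disjoint A1' A2' ∧ A1' ∪ A2' = A1 ∪ A2 ∧ (∀ x ∈ A1', τ0 x ⊆ A1') ∧
      (∀ x ∈ A2', τ0 x ⊆ A2') ∧ (A1 ∆ A1').card ≤ 2 * p * D0.card ∧
      (A2 ∆ A2').card ≤ 2 * p * D0.card ∧ TS A1' ∧ TS A2' := by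
  classical
  set Q := A1 ∪ A2 with hQ
  have hsQ : ∀ x ∈ Q, τ0 x ⊆ Q := by
    intro x hx
    rcases Finset.mem_union.1 hx with h | h
    · exact (hs1 x h).trans Finset.subset_union_left
    · exact (hs2 x h).trans Finset.subset_union_right
  have hcard : 2 * p ≤ (Q.image τ0).card := by
    have h1 : Q ⊆ (Q.image τ0).biUnion id := by
      intro x hx
      rw [Finset.mem_biUnion]
      exact ⟨τ0 x, Finset.mem_image_of_mem _ hx, h0.self x⟩
    have h2 : Q.card ≤ (Q.image τ0).card * D0.card := by
      refine (Finset.card_le_card h1).trans (Finset.card_biUnion_le_card_mul _ _ _ ?_)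
      intro s hs
      obtain ⟨x, _, rfl⟩ := Finset.mem_image.1 hs
      exact h0.card_le x
    have h3 : A1.card ≤ Q.card := Finset.card_le_card Finset.subset_union_left
    by_contra hcon
    push Not at hcon
    have := Nat.mul_le_mul_right D0.card hcon.le
    omega
  obtain ⟨s, hs, hsc⟩ := Finset.exists_subset_card_eq hcard
  let e := Finset.equivFinOfCardEq hsc
  set B : Fin (2 * p) → Finset G := fun j => (e.symm j).1 with hBdef
  have hBt : ∀ j, ∃ x ∈ Q, B j = τ0 x := by
    intro j
    obtain ⟨x, hx, hx'⟩ := Finset.mem_image.1 (hs (e.symm j).2)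
    exact ⟨x, hx, hx'.symm⟩
  have hB : ∀ i j x, x ∈ B i → x ∈ B j → i = j := by
    intro i j x hi hj
    obtain ⟨y, _, hy⟩ := hBt i
    obtain ⟨z, _, hz⟩ := hBt j
    have : B i = B j := by
      rw [hy, hz]; rw [hy] at hi; rw [hz] at hj
      exact h0.sub hi hj
    exact e.symm.injective (Subtype.ext this)
  have hBts : ∀ j, TS (B j) := by
    intro j
    obtain ⟨x, _, hx⟩ := hBt j
    rw [hx]; exact hts x
  have hBQ : ∀ j, B j ⊆ Q := by
    intro j
    obtain ⟨x, hxQ, hx⟩ := hBt j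
    rw [hx]; exact hsQ x hxQ
  have hBsat : ∀ j, ∀ x ∈ B j, τ0 x = B j := by
    intro j x hx
    obtain ⟨y, _, hy⟩ := hBt j
    rw [hy] at hx ⊢
    exact h0.eq _ _ hx
  set U := (Finset.univ : Finset (Fin (2 * p))).biUnion B with hU
  have hmU : ∀ x, x ∈ U ↔ ∃ j, x ∈ B j := by intro x; simp [hU]
  have hUc : U.card ≤ 2 * p * D0.card := by
    refine (Finset.card_biUnion_le_card_mul _ _ D0.card ?_).trans (by simp)
    intro j _
    obtain ⟨x, _, hx⟩ := hBt j
    rw [hx]; exact h0.card_le x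
  have hRne : ∀ A : Finset G, 2 * p * D0.card < A.card → (A \ U).Nonempty := by
    intro A hA
    rw [← Finset.card_pos]
    have := Finset.le_card_sdiff U A
    omega
  have hRB : ∀ A : Finset G, ∀ x ∈ A \ U, ∀ j, x ∉ B j := by
    intro A x hx j hj
    exact (Finset.mem_sdiff.1 hx).2 ((hmU x).2 ⟨j, hj⟩)
  have hb1 := bad_count B hB (A1 \ U) Q (hRB A1) hBts (hRne A1 hc1)
    (Finset.sdiff_subset.trans Finset.subset_union_left) hBQ
  have hb2 := bad_count B hB (A2 \ U) Q (hRB A2) hBts (hRne A2 hc2)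
    (Finset.sdiff_subset.trans Finset.subset_union_right) hBQ
  have hex : ∃ J : Finset (Fin (2 * p)), TS ((A1 \ U) ∪ J.biUnion B) ∧
      TS ((A2 \ U) ∪ (Jᶜ).biUnion B) := by
    by_contra! hcon
    have hsub : (Finset.univ : Finset (Finset (Fin (2 * p)))) ⊆
        (Finset.univ.filter (fun J => ¬ TS ((A1 \ U) ∪ J.biUnion B))) ∪
        ((Finset.univ.filter (fun J => ¬ TS ((A2 \ U) ∪ J.biUnion B))).image (fun J => Jᶜ)) := by
      intro J _
      rw [Finset.mem_union, Finset.mem_image]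
      by_cases h : TS ((A1 \ U) ∪ J.biUnion B)
      · right
        exact ⟨Jᶜ, Finset.mem_filter.2 ⟨Finset.mem_univ _, hcon J h⟩, compl_compl J⟩
      · left
        exact Finset.mem_filter.2 ⟨Finset.mem_univ _, h⟩
    have h1 := Finset.card_le_card hsub
    have h2 := Finset.card_union_le
      ((Finset.univ : Finset (Finset (Fin (2 * p)))).filter (fun J => ¬ TS ((A1 \ U) ∪ J.biUnion B)))
        (((Finset.univ : Finset (Finset (Fin (2 * p)))).filter (fun J => ¬ TS ((A2 \ U) ∪ J.biUnion B))).image (fun J => Jᶜ))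
    have h3 := Finset.card_image_le (s := (Finset.univ : Finset (Finset (Fin (2 * p)))).filter
      (fun J => ¬ TS ((A2 \ U) ∪ J.biUnion B))) (f := fun J => Jᶜ)
    rw [Finset.card_univ, Fintype.card_finset, Fintype.card_fin] at h1
    have h4 : (2:ℕ) ^ (2 * p) = 2 ^ p * 2 ^ p := by rw [two_mul, pow_add]
    have h5 : 0 < 2 ^ p := by positivity
    nlinarith
  obtain ⟨J, hJ1, hJ2⟩ := hex
  have hsat : ∀ A : Finset G, (∀ x ∈ A, τ0 x ⊆ A) → ∀ J : Finset (Fin (2 * p)),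
      ∀ x ∈ (A \ U) ∪ J.biUnion B, τ0 x ⊆ (A \ U) ∪ J.biUnion B := by
    intro A hA J x hx
    rcases Finset.mem_union.1 hx with h | h
    · rw [Finset.mem_sdiff] at h
      intro y hy
      refine Finset.mem_union_left _ (Finset.mem_sdiff.2 ⟨hA x h.1 hy, ?_⟩)
      intro hyU
      apply h.2
      obtain ⟨j, hj⟩ := (hmU y).1 hyU
      rw [hmU]
      refine ⟨j, ?_⟩
      rw [← hBsat j y hj, h0.eq _ _ hy]
      exact h0.self x
    · obtain ⟨j, hj, hxj⟩ := Finset.mem_biUnion.1 h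
      rw [hBsat j x hxj]
      exact (Finset.subset_biUnion_of_mem B hj).trans Finset.subset_union_right
  have hsd : ∀ A : Finset G, ∀ J : Finset (Fin (2 * p)),
      (A ∆ ((A \ U) ∪ J.biUnion B)).card ≤ 2 * p * D0.card := by
    intro A J
    refine (Finset.card_le_card ?_).trans hUc
    intro x hx
    have hJU : x ∈ J.biUnion B → x ∈ U := by
      intro h
      obtain ⟨j, _, hj⟩ := Finset.mem_biUnion.1 h
      exact (hmU x).2 ⟨j, hj⟩
    simp only [Finset.mem_symmDiff, Finset.mem_union, Finset.mem_sdiff] at hx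
    tauto
  refine ⟨(A1 \ U) ∪ J.biUnion B, (A2 \ U) ∪ (Jᶜ).biUnion B, ?_, ?_, hsat A1 hs1 J, hsat A2 hs2 _,
    hsd _ _, hsd _ _, hJ1, hJ2⟩
  · rw [Finset.disjoint_left]
    intro x hx hx'
    rcases Finset.mem_union.1 hx with h | h <;> rcases Finset.mem_union.1 hx' with h' | h'
    · exact Finset.disjoint_left.1 hdisj (Finset.mem_sdiff.1 h).1 (Finset.mem_sdiff.1 h').1
    · obtain ⟨j, _, hj⟩ := Finset.mem_biUnion.1 h'
      exact hRB _ x h j hj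
    · obtain ⟨j, _, hj⟩ := Finset.mem_biUnion.1 h
      exact hRB _ x h' j hj
    · obtain ⟨j, hjJ, hj⟩ := Finset.mem_biUnion.1 h
      obtain ⟨i, hiJ, hi⟩ := Finset.mem_biUnion.1 h'
      rw [hB i j x hi hj] at hiJ
      exact Finset.mem_compl.1 hiJ hjJ
  · ext x
    constructor
    · intro hx
      rcases Finset.mem_union.1 hx with hx | hx <;> rcases Finset.mem_union.1 hx with h | h
      · exact Finset.mem_union_left _ (Finset.mem_sdiff.1 h).1
      · obtain ⟨j, _, hj⟩ := Finset.mem_biUnion.1 h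
        exact hBQ j hj
      · exact Finset.mem_union_right _ (Finset.mem_sdiff.1 h).1
      · obtain ⟨j, _, hj⟩ := Finset.mem_biUnion.1 h
        exact hBQ j hj
    · intro hx
      by_cases hxU : x ∈ U
      · obtain ⟨j, hj⟩ := (hmU x).1 hxU
        by_cases hjJ : j ∈ J
        · exact Finset.mem_union_left _ (Finset.mem_union_right _ (Finset.mem_biUnion.2 ⟨j, hjJ, hj⟩))
        · exact Finset.mem_union_right _ (Finset.mem_union_right _
            (Finset.mem_biUnion.2 ⟨j, Finset.mem_compl.2 hjJ, hj⟩))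
      · rcases Finset.mem_union.1 hx with h | h
        · exact Finset.mem_union_left _ (Finset.mem_union_left _ (Finset.mem_sdiff.2 ⟨h, hxU⟩))
        · exact Finset.mem_union_right _ (Finset.mem_union_left _ (Finset.mem_sdiff.2 ⟨h, hxU⟩))

theorem subset_weight {α : Type*} [DecidableEq α] (s : Finset α) (w : α → ℕ) (M : ℕ)
    (hw : ∀ x ∈ s, w x ≤ M) (a : ℕ) (ha : a ≤ ∑ x ∈ s, w x) :
    ∃ t ⊆ s, a ≤ ∑ x ∈ t, w x ∧ ∑ x ∈ t, w x ≤ a + M := by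
  induction s using Finset.induction_on with
  | empty => exact ⟨∅, by simp, by simpa using ha, by simp⟩
  | insert x s hx ih =>
    by_cases h : a ≤ ∑ x ∈ s, w x
    · obtain ⟨t, ht, h1⟩ := ih (fun y hy => hw y (Finset.mem_insert_of_mem hy)) h
      exact ⟨t, ht.trans (Finset.subset_insert _ _), h1⟩
    · refine ⟨insert x s, subset_rfl, ha, ?_⟩
      rw [Finset.sum_insert hx]
      have := hw x (Finset.mem_insert_self _ _)
      omega

theorem exists_pow_bound (C : ℕ) : ∃ p0, ∀ p ≥ p0, 2 * C * (p + 1) < 2 ^ p := by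
  have h := tendsto_pow_const_div_const_pow_of_one_lt 1 (show (1:ℝ) < 2 by norm_num)
  have h2 := h.eventually (gt_mem_nhds (show (0:ℝ) < 1 / (4 * (C + 1)) by positivity))
  obtain ⟨p0, hp0⟩ := Filter.eventually_atTop.1 h2
  refine ⟨p0 + 1, fun p hp => ?_⟩
  have h3 := hp0 p (by omega)
  rw [pow_one, div_lt_div_iff₀ (by positivity) (by positivity)] at h3
  have h4 : p * (4 * (C + 1)) < 2 ^ p := by
    have : (p:ℝ) * (4 * (C + 1)) < 2 ^ p := by linarith
    exact_mod_cast this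
  nlinarith
end HelperE

section HelperF
variable {G : Type*} [Group G] [DecidableEq G]

theorem split_union {D' : Finset G} {τ' : G → Finset G} (h' : Til D' τ')
    (Q : Finset G) (hQ : ∀ x ∈ Q, τ' x ⊆ Q) (hN : 4 * D'.card + 3 ≤ 2 * Q.card)
    (hne : Q.Nonempty) {K : Finset G} {δ : ℝ} (hinv : ∀ g, FInv (τ' g) K δ) :
    ∃ A1 A2, Disjoint A1 A2 ∧ A1 ∪ A2 = Q ∧ (∀ x ∈ A1, τ' x ⊆ A1) ∧ (∀ x ∈ A2, τ' x ⊆ A2) ∧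
      Q.card ≤ 4 * A1.card ∧ Q.card ≤ 4 * A2.card ∧ FInv A1 K δ ∧ FInv A2 K δ := by
  set s := Q.image τ' with hs
  have hst : ∀ E ∈ s, ∃ x ∈ Q, τ' x = E := fun E hE => Finset.mem_image.1 hE
  have hdj : ∀ E ∈ s, ∀ E' ∈ s, ∀ x, x ∈ E → x ∈ E' → E = E' := by
    intro E hE E' hE' x hx hx'
    obtain ⟨y, _, rfl⟩ := hst E hE
    obtain ⟨z, _, rfl⟩ := hst E' hE'
    exact h'.sub hx hx'
  have hdis : (s : Set (Finset G)).PairwiseDisjoint id := by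
    intro E hE E' hE' hne
    rw [Function.onFun, Finset.disjoint_left]
    intro x hx hx'
    exact hne (hdj E hE E' hE' x hx hx')
  have hU : s.biUnion id = Q := by
    ext x
    rw [Finset.mem_biUnion]
    constructor
    · rintro ⟨E, hE, hx⟩
      obtain ⟨y, hy, rfl⟩ := hst E hE
      exact hQ y hy hx
    · intro hx
      exact ⟨τ' x, Finset.mem_image_of_mem _ hx, h'.self x⟩
  have hcard : ∀ t ⊆ s, (t.biUnion id).card = ∑ E ∈ t, E.card := by
    intro t ht
    exact Finset.card_biUnion (fun E hE E' hE' hne => hdis (ht hE) (ht hE') hne)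
  have htot := hcard s subset_rfl
  rw [hU] at htot
  have hQpos := hne.card_pos
  obtain ⟨t, hts, ht1, ht2⟩ := subset_weight s Finset.card D'.card (by
    intro E hE
    obtain ⟨y, hy, rfl⟩ := hst E hE
    exact h'.card_le y) ((Q.card + 3) / 4) (by omega)
  have hsum := Finset.sum_sdiff (f := fun E : Finset G => E.card) hts
  rw [← hcard t hts] at ht1 ht2 hsum
  rw [← hcard (s \ t) Finset.sdiff_subset, ← htot] at hsum
  have hsat : ∀ u ⊆ s, ∀ x ∈ u.biUnion id, τ' x ⊆ u.biUnion id := by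
    intro u hu x hx
    obtain ⟨E, hE, hx⟩ := Finset.mem_biUnion.1 hx
    obtain ⟨y, hy, rfl⟩ := hst E (hu hE)
    rw [h'.eq _ _ hx]
    exact Finset.subset_biUnion_of_mem id hE
  have hfi : ∀ u ⊆ s, 0 < (u.biUnion id).card → FInv (u.biUnion id) K δ := by
    intro u hu hpos
    apply FInv.biUnion
    · by_contra hcon
      rw [Finset.not_nonempty_iff_eq_empty] at hcon
      simp [hcon] at hpos
    · exact hdis.subset (by exact_mod_cast hu)
    · intro E hE
      obtain ⟨y, hy, rfl⟩ := hst E (hu hE)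
      exact hinv y
  refine ⟨t.biUnion id, (s \ t).biUnion id, ?_, ?_, hsat t hts, hsat _ Finset.sdiff_subset,
    by omega, by omega, hfi t hts (by omega), hfi _ Finset.sdiff_subset (by omega)⟩
  · rw [Finset.disjoint_left]
    intro x hx hx'
    obtain ⟨E, hE, hx⟩ := Finset.mem_biUnion.1 hx
    obtain ⟨E', hE', hx'⟩ := Finset.mem_biUnion.1 hx'
    rw [Finset.mem_sdiff] at hE'
    rw [hdj E (hts hE) E' hE'.1 x hx hx'] at hE
    exact hE'.2 hE
  · rw [← Finset.union_biUnion, Finset.union_sdiff_of_subset hts, hU]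

theorem exists_asym [Infinite G] {F : ℕ → Finset G} (hF : Fol F) {D0 : Finset G}
    {τ0 : G → Finset G} (h0 : Til D0 τ0) (hts : ∀ g, TS (τ0 g)) (K : Finset G) {ε : ℝ}
    (hε : 0 < ε) :
    ∃ D τ, Til D τ ∧ (∀ g, τ0 g ⊆ τ g) ∧ (∀ g : G, FInv (τ g) K ε) ∧ ∀ g, TS (τ g) := by
  classical
  set θ := ε / (1 + K.card + ε) with hθdef
  have hθ : 0 < θ := by positivity
  have hθe : θ + K.card * θ ≤ ε * (1 - θ) := by
    apply le_of_eq
    rw [hθdef]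
    field_simp
    ring
  have hθ1 : θ < 1 := by
    rw [hθdef, div_lt_one (by positivity)]
    have : (0:ℝ) ≤ K.card := by positivity
    linarith
  obtain ⟨D', τ', h', hc', hi'⟩ := exists_coarser hF h0 K hθ
  obtain ⟨C, hC⟩ := exists_nat_gt ((8 * D0.card : ℝ) / θ)
  have hC0 : 0 < C := by
    have : (0:ℝ) < C := lt_of_le_of_lt (by positivity) hC
    exact_mod_cast this
  rw [div_lt_iff₀ hθ] at hC
  obtain ⟨p0, hp0⟩ := exists_pow_bound C
  obtain ⟨K0, hK0⟩ := Infinite.exists_subset_card_eq G (C * p0 + 4 * D'.card + 4)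
  obtain ⟨D'', τ'', h'', hc'', hi''⟩ := exists_coarser hF h' (insert 1 K0) one_pos
  have hsplit : ∀ g, ∃ P P2, Disjoint P P2 ∧ P ∪ P2 = τ'' g ∧ (∀ x ∈ P, τ0 x ⊆ P) ∧
      (∀ x ∈ P2, τ0 x ⊆ P2) ∧ FInv P K ε ∧ FInv P2 K ε ∧ TS P ∧ TS P2 := by
    intro g
    have hN : C * p0 + 4 * D'.card + 4 ≤ (τ'' g).card := by
      rw [← hK0]
      exact (Finset.card_le_card (Finset.subset_insert _ _)).trans
        ((hi'' g).card_ge le_rfl (Finset.mem_insert_self _ _))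
    obtain ⟨A1, A2, hd, hu, hs1, hs2, hn1, hn2, hv1, hv2⟩ := split_union h' (τ'' g) (by
      intro x hx
      rw [← h''.eq _ _ hx]
      exact hc'' x) (by omega) ⟨g, h''.self g⟩ hi'
    set N := (τ'' g).card with hNdef
    have hpN : N / C * C ≤ N := Nat.div_mul_le_self N C
    have hpN2 : N < C * (N / C + 1) := by
      rw [mul_add, mul_one]; exact Nat.lt_mul_div_succ N hC0
    have hpp : p0 ≤ N / C := by
      rw [Nat.le_div_iff_mul_le hC0, mul_comm]; omega
    have hθA : ∀ A : Finset G, N ≤ 4 * A.card →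
        ((2 * (N / C) * D0.card : ℕ) : ℝ) ≤ θ * A.card := by
      intro A hA
      have h1 : (N:ℝ) ≤ 4 * A.card := by exact_mod_cast hA
      have h2 : ((N / C : ℕ) : ℝ) * C ≤ N := by exact_mod_cast hpN
      have h3 : ((N / C : ℕ) : ℝ) * (8 * D0.card) ≤ ((N / C : ℕ) : ℝ) * (C * θ) := by gcongr
      have h4 : (((N / C : ℕ) : ℝ) * C) * θ ≤ (4 * A.card) * θ := 
        mul_le_mul_of_nonneg_right (h2.trans h1) hθ.le
      push_cast
      push_cast at h3 h4
      linarith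
    have hlt : ∀ A : Finset G, N ≤ 4 * A.card → 2 * (N / C) * D0.card < A.card := by
      intro A hA
      have h1 := hθA A hA
      have h2 : (0:ℝ) < A.card := by
        have : 0 < A.card := by omega
        exact_mod_cast this
      have h3 : θ * A.card < 1 * A.card := by gcongr
      have h4 : ((2 * (N / C) * D0.card : ℕ) : ℝ) < A.card := by linarith
      exact_mod_cast h4
    have hsat : ∀ A : Finset G, (∀ x ∈ A, τ' x ⊆ A) → ∀ x ∈ A, τ0 x ⊆ A :=
      fun A hA x hx => (hc' x).trans (hA x hx)
    obtain ⟨P, P2, hd', hu', hs1', hs2', he1, he2, ht1, ht2⟩ := split_tile h0 hts A1 A2 hd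
      (hsat _ hs1) (hsat _ hs2) (N / C) (hlt A1 hn1) (hlt A2 hn2) (by
        rw [hu]
        have := hp0 _ hpp
        nlinarith)
    refine ⟨P, P2, hd', hu'.trans hu, hs1', hs2', ?_, ?_, ht1, ht2⟩
    · exact hv1.perturb (le_trans (by exact_mod_cast he1) (hθA A1 hn1)) hε hθe
    · exact hv2.perturb (le_trans (by exact_mod_cast he2) (hθA A2 hn2)) hε hθe
  have hsplit' : ∀ Q : Finset G, ∃ P P2, (∃ g, τ'' g = Q) → Disjoint P P2 ∧ P ∪ P2 = Q ∧
      (∀ x ∈ P, τ0 x ⊆ P) ∧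
      (∀ x ∈ P2, τ0 x ⊆ P2) ∧ FInv P K ε ∧ FInv P2 K ε ∧ TS P ∧ TS P2 := by
    intro Q
    by_cases hQ : ∃ g, τ'' g = Q
    · obtain ⟨g, rfl⟩ := hQ
      obtain ⟨P, P2, h⟩ := hsplit g
      exact ⟨P, P2, fun _ => h⟩
    · exact ⟨∅, ∅, fun h => absurd h hQ⟩
  choose P P2 hP using hsplit'
  have hP' := fun g => hP (τ'' g) ⟨g, rfl⟩
  set lab : G → Finset G := fun x => if x ∈ P (τ'' x) then P (τ'' x) else P2 (τ'' x) with hlab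
  have hself : ∀ x, x ∈ lab x := by
    intro x
    simp only [hlab]
    split_ifs with h
    · exact h
    · have h1 : x ∈ P (τ'' x) ∪ P2 (τ'' x) := by rw [(hP' x).2.1]; exact h''.self x
      exact (Finset.mem_union.1 h1).resolve_left h
  have hsub : ∀ x, lab x ⊆ τ'' x := by
    intro x
    rw [← (hP' x).2.1]
    simp only [hlab]
    split_ifs with h
    · exact Finset.subset_union_left
    · exact Finset.subset_union_right
  have heq : ∀ x y, x ∈ lab y → lab x = lab y := by
    intro x y hx
    have h1 := h''.eq _ _ (hsub y hx)
    simp only [hlab] at hx ⊢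
    rw [h1]
    split_ifs at hx with h2
    · rw [if_pos hx, if_pos h2]
    · rw [if_neg (fun h => Finset.disjoint_left.1 (hP' y).1 h hx), if_neg h2]
  obtain ⟨τ, hτ, hτm⟩ := exists_til lab D'' (by
    intro x y hxy
    apply h''.bdd
    apply hsub
    rw [← hxy]
    exact hself x)
  have hτl : ∀ g, τ g = lab g := by
    intro g
    ext x
    rw [hτm]
    exact ⟨fun h => h ▸ hself x, heq x g⟩
  refine ⟨D'', τ, hτ, ?_, ?_, ?_⟩
  · intro g
    rw [hτl]
    simp only [hlab]
    have hs := hself g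
    simp only [hlab] at hs
    split_ifs at hs ⊢ with h
    · exact (hP' g).2.2.1 g hs
    · exact (hP' g).2.2.2.1 g hs
  · intro g
    rw [hτl]
    simp only [hlab]
    split_ifs with h
    · exact (hP' g).2.2.2.2.1
    · exact (hP' g).2.2.2.2.2.1
  · intro g
    rw [hτl]
    simp only [hlab]
    split_ifs with h
    · exact (hP' g).2.2.2.2.2.2.1
    · exact (hP' g).2.2.2.2.2.2.2

/-- A sequence of successively coarser exact tilings with trivial stabilizers. -/
theorem exists_til_seq [Infinite G] {F : ℕ → Finset G} (hF : Fol F) (K : ℕ → Finset G)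
    (ε : ℕ → ℝ) (hε : ∀ k, 0 < ε k) :
    ∃ (D : ℕ → Finset G) (τ : ℕ → G → Finset G), (∀ k, Til (D k) (τ k)) ∧
      (∀ k g, TS (τ k g)) ∧ (∀ k g, FInv (τ k g) (K k) (ε k)) ∧ ∀ k g, τ k g ⊆ τ (k + 1) g := by
  let X := {q : Finset G × (G → Finset G) // Til q.1 q.2 ∧ ∀ g, TS (q.2 g)}
  have hstep : ∀ (k : ℕ) (q : X), ∃ q' : X, (∀ g, FInv (q'.1.2 g) (K k) (ε k)) ∧
      ∀ g, q.1.2 g ⊆ q'.1.2 g := by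
    rintro k ⟨⟨D0, τ0⟩, h0, hts⟩
    obtain ⟨D, τ, h1, h2, h3, h4⟩ := exists_asym hF h0 hts (K k) (hε k)
    exact ⟨⟨(D, τ), h1, h4⟩, h3, h2⟩
  choose nx hnx1 hnx2 using hstep
  let q0 : X := ⟨({1}, fun g => {g}), ⟨fun g => by simp, by simp, by simp⟩, by
    intro g h hh
    simpa using hh⟩
  let seq : ℕ → X := fun n => Nat.rec (nx 0 q0) (fun k q => nx (k + 1) q) n
  refine ⟨fun k => (seq k).1.1, fun k => (seq k).1.2, fun k => (seq k).2.1, fun k => (seq k).2.2,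
    ?_, ?_⟩
  · intro k
    cases k with
    | zero => exact hnx1 0 q0
    | succ k => exact hnx1 (k + 1) (seq k)
  · intro k
    exact hnx2 (k + 1) (seq k)
end HelperF

section HelperH
variable {G : Type*} [Group G] [DecidableEq G]

/-- Right translate of a finset. -/
def tr (E : Finset G) (c : G) : Finset G := E.image (· * c)

theorem mem_tr {E : Finset G} {c x : G} : x ∈ tr E c ↔ x * c⁻¹ ∈ E := by
  simp only [tr, Finset.mem_image]
  constructor
  · rintro ⟨a, ha, rfl⟩; simpa using ha
  · intro h; exact ⟨_, h, by simp⟩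

theorem tr_tr (E : Finset G) (a b : G) : tr (tr E a) b = tr E (a * b) := by
  ext x
  simp [mem_tr, mul_assoc]

theorem tr_one (E : Finset G) : tr E 1 = E := by
  ext x
  simp [mem_tr]

theorem tr_inj {E E' : Finset G} {c : G} (h : tr E c = tr E' c) : E = E' := by
  have := congrArg (fun s => tr s c⁻¹) h
  simpa [tr_tr, tr_one] using this

theorem TS.uniq {E : Finset G} (h : TS E) {a b : G} (hab : tr E a = tr E b) : a = b := by
  have h1 : tr E (a * b⁻¹) = E := by
    rw [← tr_tr, hab, tr_tr, mul_inv_cancel, tr_one]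
  exact mul_inv_eq_one.1 (h _ h1)

theorem tr_mono {E E' : Finset G} (h : E ⊆ E') (c : G) : tr E c ⊆ tr E' c :=
  Finset.image_subset_image h

/-- Pointed shapes of a tiling. -/
def Sh (τ : G → Finset G) (S : Finset G) : Prop := ∃ g, S = tr (τ g) g⁻¹

theorem Sh.one_mem {D : Finset G} {τ : G → Finset G} (hτ : Til D τ) {S : Finset G} (h : Sh τ S) :
    (1 : G) ∈ S := by
  obtain ⟨g, rfl⟩ := h
  rw [mem_tr]
  simpa using hτ.self g

theorem Sh.sub {D : Finset G} {τ : G → Finset G} (hτ : Til D τ) {S : Finset G} (h : Sh τ S) :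
    S ⊆ D := by
  obtain ⟨g, rfl⟩ := h
  intro x hx
  rw [mem_tr, inv_inv] at hx
  simpa using hτ.bdd _ _ hx

theorem Sh.move {D : Finset G} {τ : G → Finset G} (hτ : Til D τ) {S : Finset G} (h : Sh τ S)
    {d : G} (hd : d ∈ S) : Sh τ (tr S d⁻¹) := by
  obtain ⟨g, rfl⟩ := h
  rw [mem_tr, inv_inv] at hd
  refine ⟨d * g, ?_⟩
  rw [hτ.eq _ _ hd, tr_tr, mul_inv_rev]

theorem exists_proj {D : Finset G} {τ τ' : G → Finset G} {D' : Finset G} (hτ : Til D τ)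
    (hτ' : Til D' τ') (hts : ∀ g, TS (τ' g)) (hsub : ∀ g, τ g ⊆ τ' g) :
    ∃ π : Finset G → Finset G, ∀ S, Sh τ' S → Sh τ (π S) ∧ π S ⊆ S ∧
      ∀ d ∈ π S, π (tr S d⁻¹) = tr (π S) d⁻¹ := by
  classical
  have ha : ∀ C : Set (Finset G), ∃ a : G, (∃ g, τ' g ∈ C) → τ' a ∈ C := by
    intro C
    by_cases h : ∃ g, τ' g ∈ C
    · exact ⟨h.choose, fun _ => h.choose_spec⟩
    · exact ⟨1, fun h' => absurd h' h⟩
  choose a ha using ha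
  set cl : Finset G → Set (Finset G) := fun S => {E | ∃ c, E = tr S c} with hcl
  have hclt : ∀ S d, cl (tr S d) = cl S := by
    intro S d
    ext E
    simp only [hcl, Set.mem_ofPred_eq]
    constructor
    · rintro ⟨c, rfl⟩; exact ⟨d * c, tr_tr _ _ _⟩
    · rintro ⟨c, rfl⟩; exact ⟨d⁻¹ * c, by rw [tr_tr]; simp⟩
  have hc : ∀ S, ∃ c, Sh τ' S → τ' (a (cl S)) = tr S c := by
    intro S
    by_cases h : Sh τ' S
    · have h1 : τ' (a (cl S)) ∈ cl S := by
        apply ha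
        obtain ⟨g, hg⟩ := h
        exact ⟨g, g, by rw [hg, tr_tr]; simp [tr_one]⟩
      obtain ⟨c, hc⟩ := h1
      exact ⟨c, fun _ => hc⟩
    · exact ⟨1, fun h' => absurd h' h⟩
  choose c hc using hc
  have hsub' : ∀ S, Sh τ' S → tr (τ (c S)) (c S)⁻¹ ⊆ S := by
    intro S hS
    have h1 := hc S hS
    have h2 : c S ∈ τ' (a (cl S)) := by
      rw [h1, mem_tr]; simpa using hS.one_mem hτ'
    have h3 : τ (c S) ⊆ tr S (c S) := by
      rw [← h1, ← hτ'.eq _ _ h2]; exact hsub _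
    have := tr_mono h3 (c S)⁻¹
    rwa [tr_tr, mul_inv_cancel, tr_one] at this
  refine ⟨fun S => tr (τ (c S)) (c S)⁻¹, fun S hS => ⟨⟨c S, rfl⟩, hsub' S hS, ?_⟩⟩
  intro d hd
  have hS' := hS.move hτ' (hsub' S hS hd)
  have h1 := hc S hS
  have h2 := hc _ hS'
  rw [hclt, tr_tr] at h2
  have hTS : TS S := by
    obtain ⟨g, hg⟩ := hS
    intro h hh
    have h3 := hts g (g⁻¹ * h * g) (by
      change tr _ _ = _
      change tr S h = S at hh
      have : τ' g = tr S g := by rw [hg, tr_tr]; simp [tr_one]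
      rw [this, tr_tr]
      have h4 : g * (g⁻¹ * h * g) = h * g := by group
      rw [h4, ← tr_tr, hh])
    have : h = g * (g⁻¹ * h * g) * g⁻¹ := by group
    rw [this, h3]; simp
  have h3 : c S = d⁻¹ * c (tr S d⁻¹) := hTS.uniq (h1.symm.trans h2)
  have h4 : c (tr S d⁻¹) = d * c S := by rw [h3]; simp
  rw [mem_tr, inv_inv] at hd
  simp only
  rw [h4, hτ.eq _ _ hd, tr_tr, mul_inv_rev]

end HelperH

section HelperI
variable {G : Type*} [Group G] [DecidableEq G]

/-- Valid at each level separately. -/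
structure PreCfg (τ : ℕ → G → Finset G) (x : ℕ → G → Finset G) : Prop where
  sh : ∀ k g, Sh (τ k) (x k g)
  cons : ∀ k g, ∀ d ∈ x k g, x k (d * g) = tr (x k g) d⁻¹

/-- Translation of configurations. -/
def mv (a : G) (x : ℕ → G → Finset G) : ℕ → G → Finset G := fun k h => x k (h * a)

theorem PreCfg.mv {τ : ℕ → G → Finset G} {x : ℕ → G → Finset G} (h : PreCfg τ x) (a : G) :
    PreCfg τ (mv a x) :=
  ⟨fun k g => h.sh k _, fun k g d hd => by
    have := h.cons k (g * a) d hd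
    simpa [_root_.mv, mul_assoc] using this⟩

theorem exists_linked {τ : ℕ → G → Finset G}
    {π : ℕ → Finset G → Finset G}
    (hπ : ∀ k S, Sh (τ (k + 1)) S → Sh (τ k) (π k S) ∧ π k S ⊆ S ∧
      ∀ d ∈ π k S, π k (tr S d⁻¹) = tr (π k S) d⁻¹) (n : ℕ) :
    ∀ x, PreCfg τ x → ∃ y, PreCfg τ y ∧ (∀ k, n ≤ k → y k = x k) ∧
      ∀ k < n, ∀ g, y k g = π k (y (k + 1) g) := by
  induction n with
  | zero => intro x hx; exact ⟨x, hx, fun _ _ => rfl, by simp⟩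
  | succ n ih =>
    intro x hx
    set x1 : ℕ → G → Finset G := fun k g => if k = n then π n (x (n + 1) g) else x k g with hx1
    have hx1n : ∀ g, x1 n g = π n (x (n + 1) g) := by intro g; simp [hx1]
    have hx1k : ∀ k, k ≠ n → x1 k = x k := by intro k hk; ext g; simp [hx1, hk]
    have hp : PreCfg τ x1 := by
      constructor
      · intro k g
        by_cases hk : k = n
        · subst hk; rw [hx1n]; exact (hπ k _ (hx.sh _ g)).1
        · rw [hx1k k hk]; exact hx.sh k g
      · intro k g d hd
        by_cases hk : k = n
        · subst hk
          rw [hx1n] at hd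
          rw [hx1n, hx1n]
          have h1 := hπ k _ (hx.sh (k + 1) g)
          rw [hx.cons (k + 1) g d (h1.2.1 hd)]
          exact h1.2.2 d hd
        · rw [hx1k k hk] at hd ⊢; exact hx.cons k g d hd
    obtain ⟨y, hy, hyx, hyl⟩ := ih x1 hp
    refine ⟨y, hy, ?_, ?_⟩
    · intro k hk
      rw [hyx k (by omega), hx1k k (by omega)]
    · intro k hk g
      rcases Nat.lt_succ_iff_lt_or_eq.1 hk with h | h
      · exact hyl k h g
      · subst h
        rw [hyx k le_rfl, hyx (k + 1) (by omega), hx1n, hx1k _ (by omega)]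

/-- Valid configurations. -/
structure Cfg (τ : ℕ → G → Finset G) (π : ℕ → Finset G → Finset G)
    (x : ℕ → G → Finset G) : Prop extends PreCfg τ x where
  link : ∀ k g, x k g = π k (x (k + 1) g)

theorem Cfg.mv {τ : ℕ → G → Finset G} {π : ℕ → Finset G → Finset G}
    {x : ℕ → G → Finset G} (h : Cfg τ π x) (a : G) : Cfg τ π (mv a x) :=
  ⟨h.toPreCfg.mv a, fun k g => h.link k (g * a)⟩

/-- Discrete topology on finsets. -/
abbrev finsetTop (G : Type*) : TopologicalSpace (Finset G) := ⊥

attribute [local instance] finsetTop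

theorem finsetTop_discrete : DiscreteTopology (Finset G) := ⟨rfl⟩

attribute [local instance] finsetTop_discrete

theorem isClosed_two (k l : ℕ) (g h : G) (P : Finset G → Finset G → Prop) :
    IsClosed {x : ℕ → G → Finset G | P (x k g) (x l h)} := by
  have hc : Continuous (fun x : ℕ → G → Finset G => (x k g, x l h)) := by fun_prop
  exact (isClosed_discrete {q : Finset G × Finset G | P q.1 q.2}).preimage hc


theorem continuous_mv (a : G) : Continuous (mv a : (ℕ → G → Finset G) → ℕ → G → Finset G) := by
  unfold mv
  fun_prop

/-- The set of configurations linked below `n`. -/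
def XS (τ : ℕ → G → Finset G) (π : ℕ → Finset G → Finset G) (n : ℕ) : Set (ℕ → G → Finset G) :=
  {x | PreCfg τ x ∧ ∀ k < n, ∀ g, x k g = π k (x (k + 1) g)}

theorem isClosed_XS (τ : ℕ → G → Finset G) (π : ℕ → Finset G → Finset G) (n : ℕ) :
    IsClosed (XS τ π n) := by
  have : XS τ π n = (⋂ k, ⋂ g, {x | Sh (τ k) (x k g)}) ∩
      (⋂ k, ⋂ g, ⋂ d, {x | d ∈ x k g → x k (d * g) = tr (x k g) d⁻¹}) ∩
      (⋂ k, ⋂ g, {x | k < n → x k g = π k (x (k + 1) g)}) := by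
    ext x
    simp only [XS, Set.mem_ofPred_eq, Set.mem_inter_iff, Set.mem_iInter]
    constructor
    · rintro ⟨⟨h1, h2⟩, h3⟩
      exact ⟨⟨h1, h2⟩, fun k g hk => h3 k hk g⟩
    · rintro ⟨⟨h1, h2⟩, h3⟩
      exact ⟨⟨h1, h2⟩, fun k hk g => h3 k g hk⟩
  rw [this]
  refine (IsClosed.inter ?_ ?_).inter ?_
  · exact isClosed_iInter fun k => isClosed_iInter fun g =>
      isClosed_two k k g g (fun a _ => Sh (τ k) a)
  · exact isClosed_iInter fun k => isClosed_iInter fun g => isClosed_iInter fun d =>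
      isClosed_two k k g (d * g) (fun a b => d ∈ a → b = tr a d⁻¹)
  · exact isClosed_iInter fun k => isClosed_iInter fun g =>
      isClosed_two k (k + 1) g g (fun a b => k < n → a = π k b)

theorem isCompact_XS {τ : ℕ → G → Finset G} {D : ℕ → Finset G} (hτ : ∀ k, Til (D k) (τ k))
    (π : ℕ → Finset G → Finset G) (n : ℕ) : IsCompact (XS τ π n) := by
  have h1 : IsCompact (Set.pi Set.univ (fun k : ℕ => Set.pi Set.univ
      (fun _ : G => ((D k).powerset : Set (Finset G))))) :=
    isCompact_univ_pi fun k => isCompact_univ_pi fun g => (Finset.finite_toSet _).isCompact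
  refine h1.of_isClosed_subset (isClosed_XS τ π n) ?_
  intro x hx k _ g _
  have := (hx.1.sh k g).sub (hτ k)
  simpa using this

theorem exists_cfg {τ : ℕ → G → Finset G} {D : ℕ → Finset G} (hτ : ∀ k, Til (D k) (τ k))
    {π : ℕ → Finset G → Finset G}
    (hπ : ∀ k S, Sh (τ (k + 1)) S → Sh (τ k) (π k S) ∧ π k S ⊆ S ∧
      ∀ d ∈ π k S, π k (tr S d⁻¹) = tr (π k S) d⁻¹) :
    {x | Cfg τ π x}.Nonempty ∧ IsCompact {x | Cfg τ π x} ∧ IsClosed {x | Cfg τ π x} := by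
  have he : {x | Cfg τ π x} = ⋂ n, XS τ π n := by
    ext x
    simp only [XS, Set.mem_ofPred_eq, Set.mem_iInter]
    constructor
    · intro h n; exact ⟨h.toPreCfg, fun k _ g => h.link k g⟩
    · intro h; exact ⟨(h 0).1, fun k g => (h (k + 1)).2 k (by omega) g⟩
  have hcl : IsClosed (⋂ n, XS τ π n) := isClosed_iInter fun n => isClosed_XS τ π n
  rw [he]
  refine ⟨?_, (isCompact_XS hτ π 0).of_isClosed_subset hcl (Set.iInter_subset _ 0), hcl⟩
  apply IsCompact.nonempty_iInter_of_sequence_nonempty_isCompact_isClosed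
  · intro n x hx
    exact ⟨hx.1, fun k hk => hx.2 k (by omega)⟩
  · intro n
    have h0 : PreCfg τ (fun k g => tr (τ k g) g⁻¹) := by
      constructor
      · intro k g; exact ⟨g, rfl⟩
      · intro k g d hd
        simp only [mem_tr, inv_inv] at hd ⊢
        rw [(hτ k).eq _ _ hd, tr_tr, mul_inv_rev]
    obtain ⟨y, h1, _, h2⟩ := exists_linked hπ n _ h0
    exact ⟨y, h1, h2⟩
  · exact isCompact_XS hτ π 0
  · intro n; exact isClosed_XS τ π n

theorem exists_minimal_cfg (X : Set (ℕ → G → Finset G)) (hne : X.Nonempty) (hX : IsCompact X)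
    (hcl : IsClosed X) (hinv : ∀ a, ∀ x ∈ X, mv a x ∈ X) :
    ∃ Y ⊆ X, Y.Nonempty ∧ IsCompact Y ∧ IsClosed Y ∧ (∀ a, ∀ x ∈ Y, mv a x ∈ Y) ∧
      ∀ x ∈ Y, ∀ k g, ∃ F : Finset G, ∀ g', ∃ h ∈ F, x k (h * g') = x k g := by
  obtain ⟨Y, hY⟩ := zorn_superset {Y | Y ⊆ X ∧ Y.Nonempty ∧ IsClosed Y ∧ ∀ a, ∀ x ∈ Y, mv a x ∈ Y} (by
    intro c hc hch
    rcases c.eq_empty_or_nonempty with rfl | hcne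
    · exact ⟨X, ⟨subset_rfl, hne, hcl, hinv⟩, by simp⟩
    · refine ⟨⋂₀ c, ⟨?_, ?_, ?_, ?_⟩, fun s hs => Set.sInter_subset_of_mem hs⟩
      · obtain ⟨s, hs⟩ := hcne
        exact (Set.sInter_subset_of_mem hs).trans (hc hs).1
      · haveI : Nonempty c := hcne.to_subtype
        rw [Set.sInter_eq_iInter]
        apply IsCompact.nonempty_iInter_of_directed_nonempty_isCompact_isClosed
        · intro s t
          rcases hch.total s.2 t.2 with h | h
          · exact ⟨s, subset_rfl, h⟩
          · exact ⟨t, h, subset_rfl⟩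
        · intro s; exact (hc s.2).2.1
        · intro s; exact hX.of_isClosed_subset (hc s.2).2.2.1 (hc s.2).1
        · intro s; exact (hc s.2).2.2.1
      · exact isClosed_sInter fun s hs => (hc hs).2.2.1
      · intro a x hx s hs
        exact (hc hs).2.2.2 a x (hx s hs))
  obtain ⟨hYX, hYne, hYcl, hYinv⟩ := hY.prop
  have hYc : IsCompact Y := hX.of_isClosed_subset hYcl hYX
  refine ⟨Y, hYX, hYne, hYc, hYcl, hYinv, ?_⟩
  intro x hx k g
  have hall : ∀ y ∈ Y, ∃ h, y k h = x k g := by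
    by_contra! hcon
    obtain ⟨y0, hy0, hy0'⟩ := hcon
    have hZ : (Y ∩ ⋂ h, {y : ℕ → G → Finset G | y k h ≠ x k g}) ∈
        {Y | Y ⊆ X ∧ Y.Nonempty ∧ IsClosed Y ∧ ∀ a, ∀ x ∈ Y, mv a x ∈ Y} := by
      refine ⟨Set.inter_subset_left.trans hYX, ⟨y0, hy0, ?_⟩, ?_, ?_⟩
      · rw [Set.mem_iInter]; exact hy0'
      · refine hYcl.inter (isClosed_iInter fun h => isClosed_two k k h h (fun a _ => a ≠ x k g))
      · rintro a y ⟨hy1, hy2⟩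
        refine ⟨hYinv a y hy1, ?_⟩
        rw [Set.mem_iInter] at hy2 ⊢
        intro h
        exact hy2 (h * a)
    have hle := hY.le_of_le hZ Set.inter_subset_left
    have := (hle hx).2
    rw [Set.mem_iInter] at this
    exact this g rfl
  obtain ⟨F, hF⟩ := hYc.elim_finite_subcover (fun h : G => {y : ℕ → G → Finset G | y k h = x k g})
    (by
      intro h
      have := (isClosed_two k k h h (fun a _ => a ≠ x k g)).isOpen_compl
      convert this using 1
      ext y
      simp) (by
      intro y hy
      rw [Set.mem_iUnion]
      exact hall y hy)
  refine ⟨F, fun g' => ?_⟩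
  have := hF (hYinv g' x hx)
  rw [Set.mem_iUnion₂] at this
  obtain ⟨h, hh, hh'⟩ := this
  exact ⟨h, hh, hh'⟩

end HelperI

section HelperJ
variable {G : Type*} [Group G] [DecidableEq G]

theorem PreCfg.til {τ : ℕ → G → Finset G} {D : ℕ → Finset G} (hτ : ∀ k, Til (D k) (τ k))
    {x : ℕ → G → Finset G} (h : PreCfg τ x) (k : ℕ) : Til (D k) (fun g => tr (x k g) g) := by
  constructor
  · intro g
    rw [mem_tr, mul_inv_cancel]
    exact (h.sh k g).one_mem (hτ k)
  · intro g a ha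
    rw [mem_tr] at ha
    have := h.cons k g _ ha
    rw [inv_mul_cancel_right] at this
    rw [this, tr_tr]
    congr 1
    group
  · intro g a ha
    rw [mem_tr] at ha
    exact (h.sh k g).sub (hτ k) ha

theorem bad_points {D : Finset G} {t : G → Finset G} (ht : Til D t) {K : Finset G} {δ : ℝ}
    (hK : 1 ∈ K) (hinv : ∀ g, FInv (t g) K δ) (A : Finset G) (hA : ∀ a ∈ A, t a ⊆ A) :
    ((A.filter (fun a => ¬ ∀ k ∈ K, k * a ∈ t a)).card : ℝ) ≤ δ * A.card := by
  have hst : ∀ E ∈ A.image t, ∃ x ∈ A, t x = E := fun E hE => Finset.mem_image.1 hE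
  have h1 : A.filter (fun a => ¬ ∀ k ∈ K, k * a ∈ t a) ⊆ (A.image t).biUnion (fun E => bd E K) := by
    intro a ha
    rw [Finset.mem_filter] at ha
    obtain ⟨haA, hk⟩ := ha
    push Not at hk
    rw [Finset.mem_biUnion]
    refine ⟨t a, Finset.mem_image_of_mem _ haA, mem_bd.2 ⟨⟨1, hK, ?_⟩, hk⟩⟩
    rw [one_mul]; exact ht.self a
  have h2 : ((A.filter (fun a => ¬ ∀ k ∈ K, k * a ∈ t a)).card : ℝ) ≤
      ∑ E ∈ A.image t, ((bd E K).card : ℝ) := by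
    exact_mod_cast (Finset.card_le_card h1).trans Finset.card_biUnion_le
  have h3 : A = (A.image t).biUnion id := by
    ext x
    rw [Finset.mem_biUnion]
    constructor
    · intro hx; exact ⟨t x, Finset.mem_image_of_mem _ hx, ht.self x⟩
    · rintro ⟨E, hE, hx⟩
      obtain ⟨y, hy, rfl⟩ := hst E hE
      exact hA y hy hx
  have h4 : A.card = ∑ E ∈ A.image t, E.card := by
    conv_lhs => rw [h3]
    apply Finset.card_biUnion
    intro E hE E' hE' hne
    change Disjoint E E'
    rw [Finset.disjoint_left]
    intro x hx hx'
    obtain ⟨y, hy, rfl⟩ := hst E hE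
    obtain ⟨z, hz, rfl⟩ := hst E' hE'
    exact hne (ht.sub hx hx')
  refine h2.trans ?_
  rw [h4]
  push_cast
  rw [Finset.mul_sum]
  apply Finset.sum_le_sum
  intro E hE
  obtain ⟨y, hy, rfl⟩ := hst E hE
  exact (hinv y).le

attribute [local instance] finsetTop
attribute [local instance] finsetTop_discrete

theorem exists_good_cfg [Infinite G] {F : ℕ → Finset G} (hF : Fol F) (K : ℕ → Finset G)
    (hK : ∀ k, 1 ∈ K k) (ε : ℕ → ℝ) (hε : ∀ k, 0 < ε k) (hε2 : ∀ k, ε k ≤ (1 / 2) ^ (k + 2)) :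
    ∃ (D : ℕ → Finset G) (x : ℕ → G → Finset G) (π : ℕ → Finset G → Finset G),
      (∀ k, Til (D k) (fun g => tr (x k g) g)) ∧
      (∀ k g, x k g = π k (x (k + 1) g)) ∧
      (∀ k g, x k g ⊆ x (k + 1) g) ∧
      (∀ k g, FInv (x k g) (K k) (ε k)) ∧
      (∀ k g, ∃ F : Finset G, ∀ g', ∃ h ∈ F, x k (h * g') = x k g) ∧
      (∀ k, K k ⊆ x k 1) := by
  obtain ⟨D, τ, hτ, hts, hinv, hsub⟩ := exists_til_seq hF K ε hε
  have hπ := fun k => exists_proj (hτ k) (hτ (k + 1)) (hts (k + 1)) (hsub k)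
  choose π hπ using hπ
  obtain ⟨hne, hcp, hcl⟩ := exists_cfg hτ hπ
  obtain ⟨Y, hYX, hYne, hYc, hYcl, hYinv, hYsy⟩ := exists_minimal_cfg _ hne hcp hcl
    (fun a x hx => Cfg.mv hx a)
  have hlink : ∀ x ∈ Y, ∀ k g, x k g ⊆ x (k + 1) g := by
    intro x hx k g
    have h1 : Cfg τ π x := hYX hx
    rw [h1.link k g]
    exact (hπ k _ (h1.sh (k + 1) g)).2.1
  have hfi : ∀ x ∈ Y, ∀ k g, FInv (x k g) (K k) (ε k) := by
    intro x hx k g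
    have h1 : Cfg τ π x := hYX hx
    obtain ⟨a, ha⟩ := h1.sh k g
    rw [ha]
    exact (hinv k a).translate _
  have hZ : (⋂ n, Y ∩ {x | ∀ j ≤ n, K j ⊆ x j 1}).Nonempty := by
    apply IsCompact.nonempty_iInter_of_sequence_nonempty_isCompact_isClosed
    · rintro n x ⟨hx1, hx2⟩
      exact ⟨hx1, fun j hj => hx2 j (by omega)⟩
    · intro n
      obtain ⟨x, hx⟩ := hYne
      have h1 : Cfg τ π x := hYX hx
      have htil := fun k => h1.toPreCfg.til hτ k
      set A := tr (x n 1) 1 with hA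
      have hmono : ∀ g j, j ≤ n → x j g ⊆ x n g := by
        intro g j hj
        exact monotone_nat_of_le_succ (f := fun j => x j g) (fun k => hlink x hx k g) hj
      have hAs : ∀ j ≤ n, ∀ a ∈ A, tr (x j a) a ⊆ A := by
        intro j hj a ha
        have h2 := (htil n).eq 1 a ha
        rw [hA, ← h2]
        exact tr_mono (hmono a j hj) a
      have hApos : 0 < A.card := Finset.card_pos.2 ⟨1, (htil n).self 1⟩
      have hex : ∃ a ∈ A, ∀ j ∈ Finset.range (n + 1), ∀ k ∈ K j, k * a ∈ tr (x j a) a := by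
        by_contra! hcon
        have hs : A ⊆ (Finset.range (n + 1)).biUnion (fun j =>
            A.filter (fun a => ¬ ∀ k ∈ K j, k * a ∈ tr (x j a) a)) := by
          intro a ha
          obtain ⟨j, hj, k, hk, hk'⟩ := hcon a ha
          rw [Finset.mem_biUnion]
          exact ⟨j, hj, Finset.mem_filter.2 ⟨ha, fun h => hk' (h k hk)⟩⟩
        have h2 : (A.card : ℝ) ≤ ∑ j ∈ Finset.range (n + 1),
            ((A.filter (fun a => ¬ ∀ k ∈ K j, k * a ∈ tr (x j a) a)).card : ℝ) := by
          exact_mod_cast (Finset.card_le_card hs).trans Finset.card_biUnion_le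
        have h3 : ∑ j ∈ Finset.range (n + 1),
            ((A.filter (fun a => ¬ ∀ k ∈ K j, k * a ∈ tr (x j a) a)).card : ℝ) ≤
            ∑ j ∈ Finset.range (n + 1), (1 / 2) ^ (j + 2) * (A.card : ℝ) := by
          apply Finset.sum_le_sum
          intro j hj
          have h4 := bad_points (htil j) (hK j) (fun g => (hfi x hx j g).translate g) A
            (hAs j (by simpa [Nat.lt_succ_iff] using hj))
          refine h4.trans ?_
          exact mul_le_mul_of_nonneg_right (hε2 j) (by positivity)
        rw [← Finset.sum_mul] at h3
        have h5 : ∑ j ∈ Finset.range (n + 1), ((1:ℝ) / 2) ^ (j + 2) ≤ 1 / 2 := by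
          have h6 : ∀ m : ℕ, ∑ j ∈ Finset.range m, ((1:ℝ) / 2) ^ (j + 2) = 1 / 2 - (1 / 2) ^ (m + 1) := by
            intro m
            induction m with
            | zero => norm_num
            | succ m ih => rw [Finset.sum_range_succ, ih]; ring
          rw [h6]
          have : (0:ℝ) ≤ (1 / 2) ^ (n + 1 + 1) := by positivity
          linarith
        have h7 : (0:ℝ) < A.card := by exact_mod_cast hApos
        nlinarith
      obtain ⟨a, ha, hja⟩ := hex
      refine ⟨mv a x, hYinv a x hx, ?_⟩
      intro j hj k hk
      have h2 := hja j (Finset.mem_range.2 (by omega)) k hk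
      rw [mem_tr, mul_inv_cancel_right] at h2
      simpa [mv] using h2
    · refine hYc.of_isClosed_subset (hYcl.inter ?_) Set.inter_subset_left
      have : {x : ℕ → G → Finset G | ∀ j ≤ 0, K j ⊆ x j 1} = {x | K 0 ⊆ x 0 1} := by
        ext x; simp
      rw [this]
      exact isClosed_two 0 0 1 1 (fun a _ => K 0 ⊆ a)
    · intro n
      refine hYcl.inter ?_
      have : {x : ℕ → G → Finset G | ∀ j ≤ n, K j ⊆ x j 1} = ⋂ j, {x | j ≤ n → K j ⊆ x j 1} := by
        ext x; simp
      rw [this]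
      exact isClosed_iInter fun j => isClosed_two j j 1 1 (fun a _ => j ≤ n → K j ⊆ a)
  obtain ⟨x, hx⟩ := hZ
  rw [Set.mem_iInter] at hx
  have hxY := (hx 0).1
  have h1 : Cfg τ π x := hYX hxY
  exact ⟨D, x, π, fun k => h1.toPreCfg.til hτ k, h1.link, hlink x hxY, hfi x hxY, hYsy x hxY,
    fun k => (hx k).2 k le_rfl⟩
end HelperJ

/-- **Theorem (Downarowicz–Huczek–Zhang; Dou).** For an infinite countable amenable group `G`,
an increasing exhausting sequence `T_k` of nonempty finite subsets and a decreasing null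
sequence `ε_k > 0`, there is a primely congruent sequence `𝒯_k` of syndetic finite tilings of
`G`, with shape sets `𝒮_k` containing distinguished shapes `S1 k` (the shapes `S_{k,1}`), such
that `1 ∈ S1 0 ⊆ S1 1 ⊆ ⋯`, `⋃ k, S1 k = G`, and every shape of `𝒯_k` is
`(T_k, ε_k)`-invariant. -/
theorem exists_primely_congruent_syndetic_tilings (G : Type*) [Group G] [Countable G]
    [Infinite G] (hG : AmenableGroup G)
    (T : ℕ → Set G) (hTfin : ∀ k, (T k).Finite) (hTne : ∀ k, (T k).Nonempty)
    (hTmono : ∀ k, T k ⊆ T (k + 1)) (hTexh : ⋃ k, T k = Set.univ)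
    (ε : ℕ → ℝ) (hεpos : ∀ k, 0 < ε k) (hεanti : ∀ k, ε (k + 1) ≤ ε k)
    (hεlim : Tendsto ε atTop (nhds 0)) :
    ∃ (𝒯 : ℕ → Set (Set G)) (𝒮 : ℕ → Set (Set G)) (S1 : ℕ → Set G),
      (∀ k, IsTilingOf (𝒯 k)) ∧
      (∀ k, IsShapeSet (𝒯 k) (𝒮 k)) ∧
      -- each tiling is syndetic
      (∀ k, ∀ S ∈ 𝒮 k, SyndeticSet (center (𝒯 k) S)) ∧
      -- the sequence is primely congruent: `𝒯_k` refines `𝒯_{k+1}` …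
      (∀ k, ∀ T' ∈ 𝒯 (k + 1), T' = ⋃₀ {T'' ∈ 𝒯 k | T'' ⊆ T'}) ∧
      -- … and each shape of `𝒯_{k+1}` is partitioned by `𝒯_k` in a unique way
      (∀ k, ∀ S ∈ 𝒮 (k + 1), ∀ c₁ c₂ : G,
        rightTranslate S c₁ ∈ 𝒯 (k + 1) → rightTranslate S c₂ ∈ 𝒯 (k + 1) →
          tilingRestrict (𝒯 k) (rightTranslate S c₁) =
            (fun A => rightTranslate A (c₂⁻¹ * c₁)) ''
              tilingRestrict (𝒯 k) (rightTranslate S c₂)) ∧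
      -- the distinguished shapes `S_{k,1}`
      (∀ k, S1 k ∈ 𝒮 k) ∧
      (1 : G) ∈ S1 0 ∧ (∀ k, S1 k ⊆ S1 (k + 1)) ∧ (⋃ k, S1 k = Set.univ) ∧
      -- invariance of all shapes
      (∀ k, ∀ S ∈ 𝒮 k, IsInvariantSet S (T k) (ε k)) := by
  classical
  obtain ⟨F, hFin, hFol⟩ := hG
  set F' : ℕ → Finset G := fun n => (hFin n).1.toFinset with hF'
  have hFc : ∀ n, ((F' n : Finset G) : Set G) = F n := fun n => by simp [hF']
  have hFol' : Fol F' := by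
    refine ⟨fun n => by simpa [hF'] using (hFin n).2, fun g η hη => ?_⟩
    filter_upwards [(hFol g).eventually (gt_mem_nhds hη)] with n hn
    have hpos : 0 < (F' n).card := Finset.card_pos.2 (by simpa [hF'] using (hFin n).2)
    have h1 : symmDiff (F n) ((fun x => g * x) '' (F n)) =
        ((F' n ∆ (F' n).image (g * ·) : Finset G) : Set G) := by
      rw [Finset.coe_symmDiff, Finset.coe_image, hFc]
    rw [h1, Set.ncard_coe_finset, ← hFc, Set.ncard_coe_finset, div_lt_iff₀ (by exact_mod_cast hpos)] at hn
    exact hn.le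
  obtain ⟨D, x, π, htil, hlink, hmono, hinv, hsyn, hK⟩ := exists_good_cfg hFol'
    (fun k => insert 1 (hTfin k).toFinset) (fun k => Finset.mem_insert_self _ _)
    (fun k => min (ε k) ((1 / 2) ^ (k + 2))) (fun k => lt_min (hεpos k) (by positivity))
    (fun k => min_le_right _ _)
  have hrt : ∀ (E : Finset G) (c : G), rightTranslate (E : Set G) c = ((tr E c : Finset G) : Set G) := by
    intro E c
    simp [rightTranslate, tr]
  have hone : ∀ k g, (1 : G) ∈ x k g := by
    intro k g
    have := (htil k).self g
    simpa [mem_tr] using this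
  have htm : ∀ k g, tr (x k g) g ⊆ tr (x (k + 1) g) g := fun k g => tr_mono (hmono k g) g
  have hcov : ∀ k g y, y ∈ tr (x (k + 1) g) g → tr (x k y) y ⊆ tr (x (k + 1) g) g := by
    intro k g y hy
    rw [← (htil (k + 1)).eq g y hy]
    exact htm k y
  refine ⟨fun k => Set.range (fun g => ((tr (x k g) g : Finset G) : Set G)),
    fun k => Set.range (fun g => ((x k g : Finset G) : Set G)), fun k => (x k 1 : Finset G),
    ?_, ?_, ?_, ?_, ?_, ?_, ?_, ?_, ?_, ?_⟩
  · intro k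
    refine ⟨?_, ?_, ?_⟩
    · rintro _ ⟨g, rfl⟩
      exact ⟨Finset.finite_toSet _, ⟨g, (htil k).self g⟩⟩
    · rintro _ ⟨g, rfl⟩ _ ⟨g', rfl⟩ hne
      rw [Set.disjoint_left]
      intro y hy hy'
      apply hne
      have := (htil k).sub (Finset.mem_coe.1 hy) (Finset.mem_coe.1 hy')
      simp only at this ⊢
      rw [this]
    · rw [Set.eq_univ_iff_forall]
      intro g
      exact ⟨_, ⟨g, rfl⟩, (htil k).self g⟩
  · intro k
    refine ⟨?_, ?_, ?_⟩
    · apply ((D k).powerset.finite_toSet.image (fun E : Finset G => (E : Set G))).subset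
      rintro _ ⟨g, rfl⟩
      refine ⟨x k g, ?_, rfl⟩
      rw [Finset.mem_coe, Finset.mem_powerset]
      intro d hd
      have := (htil k).bdd g (d * g) (by rw [mem_tr]; simpa using hd)
      simpa using this
    · rintro _ ⟨g, rfl⟩
      exact ⟨Finset.finite_toSet _, ⟨1, hone k g⟩⟩
    · rintro _ ⟨g, rfl⟩
      exact ⟨_, ⟨g, rfl⟩, g, (hrt _ _).symm⟩
  · rintro k _ ⟨g, rfl⟩
    obtain ⟨Fs, hFs⟩ := hsyn k g
    refine ⟨((Fs.image (fun h => h⁻¹) : Finset G) : Set G), Finset.finite_toSet _, ?_⟩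
    rw [Set.eq_univ_iff_forall]
    intro g'
    obtain ⟨h, hh, he⟩ := hFs g'
    refine ⟨h⁻¹, by rw [Finset.mem_coe]; exact Finset.mem_image_of_mem _ hh, h * g', ?_, by simp⟩
    refine ⟨h * g', ?_⟩
    simp only
    rw [he, hrt]
  · rintro k _ ⟨g, rfl⟩
    ext y
    constructor
    · intro hy
      refine ⟨_, ⟨⟨y, rfl⟩, ?_⟩, (htil k).self y⟩
      exact_mod_cast hcov k g y (by exact_mod_cast hy)
    · rintro ⟨t, ⟨_, ht⟩, hy⟩
      exact ht hy
  · rintro k _ ⟨s, rfl⟩ c₁ c₂ h₁ h₂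
    simp only at h₁ h₂
    have hcen : ∀ c, rightTranslate ((x (k + 1) s : Finset G) : Set G) c ∈
        Set.range (fun g => ((tr (x (k + 1) g) g : Finset G) : Set G)) → x (k + 1) c = x (k + 1) s := by
      rintro c ⟨a, ha⟩
      simp only [hrt, Finset.coe_inj] at ha
      have hc : c ∈ tr (x (k + 1) a) a := by
        rw [ha, mem_tr]; simpa using hone (k + 1) s
      have := (htil (k + 1)).eq a c hc
      rw [ha] at this
      exact tr_inj this
    have hx₁ := hcen c₁ h₁
    have hx₂ := hcen c₂ h₂
    have hnext : ∀ c, x (k + 1) c = x (k + 1) s → ∀ d ∈ x (k + 1) s,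
        x k (d * c) = π k (tr (x (k + 1) s) d⁻¹) := by
      intro c hc d hd
      rw [hlink]
      congr 1
      have h3 := (htil (k + 1)).eq c (d * c) (by rw [mem_tr, hc]; simpa using hd)
      rw [hc] at h3
      apply tr_inj (c := d * c)
      rw [h3, tr_tr]
      simp
    have claim : ∀ c c' : G, x (k + 1) c = x (k + 1) s → x (k + 1) c' = x (k + 1) s →
        ∀ A ∈ tilingRestrict (Set.range (fun g => ((tr (x k g) g : Finset G) : Set G)))
          (rightTranslate ((x (k + 1) s : Finset G) : Set G) c'),
        rightTranslate A (c'⁻¹ * c) ∈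
          tilingRestrict (Set.range (fun g => ((tr (x k g) g : Finset G) : Set G)))
          (rightTranslate ((x (k + 1) s : Finset G) : Set G) c) := by
      rintro c c' hc hc' _ ⟨_, ⟨b, rfl⟩, rfl⟩
      have hsubc : ∀ c, x (k + 1) c = x (k + 1) s → ∀ y ∈ tr (x (k + 1) s) c,
          tr (x k y) y ⊆ tr (x (k + 1) s) c := by
        intro c hc y hy
        rw [← hc] at hy ⊢
        exact hcov k c y hy
      rw [hrt, hrt]
      simp only
      rcases (((tr (x k b) b : Finset G) : Set G) ∩
        ((tr (x (k + 1) s) c' : Finset G) : Set G)).eq_empty_or_nonempty with he | ⟨y, hy1, hy2⟩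
      · rw [he]
        obtain ⟨b', hb'⟩ := Infinite.exists_notMem_finset (tr (x (k + 1) s) c)
        refine ⟨_, ⟨b', rfl⟩, ?_⟩
        have hr : rightTranslate (∅ : Set G) (c'⁻¹ * c) = ∅ := by simp [rightTranslate]
        rw [hr]
        simp only
        rw [Set.eq_empty_iff_forall_notMem]
        rintro y ⟨hy1, hy2⟩
        rw [Finset.mem_coe] at hy1 hy2
        apply hb'
        apply hsubc c hc y hy2
        have := (htil k).eq b' y hy1
        rw [this]
        exact (htil k).self b'
      · rw [Finset.mem_coe] at hy1 hy2
        have h3 := (htil k).eq b y hy1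
        have h4 : ((tr (x k b) b : Finset G) : Set G) ∩
            ((tr (x (k + 1) s) c' : Finset G) : Set G) = ((tr (x k y) y : Finset G) : Set G) := by
          rw [← h3, Set.inter_eq_left]
          exact_mod_cast hsubc c' hc' y hy2
        rw [h4, hrt]
        have hd := mem_tr.1 hy2
        have h5 := hnext c hc _ hd
        have h6 := hnext c' hc' _ hd
        rw [← h5, inv_mul_cancel_right] at h6
        refine ⟨_, ⟨y * c'⁻¹ * c, rfl⟩, ?_⟩
        simp only
        rw [← h6, tr_tr, ← mul_assoc, Set.inter_eq_left]
        have h7 : y * c'⁻¹ * c ∈ tr (x (k + 1) s) c := by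
          rw [mem_tr]; simpa using hd
        have h8 := hsubc c hc _ h7
        rw [← h6] at h8
        exact_mod_cast h8
    apply Set.Subset.antisymm
    · intro A hA
      refine ⟨_, claim c₂ c₁ hx₂ hx₁ A hA, ?_⟩
      simp only [rightTranslate, Set.image_image]
      simp [mul_assoc]
    · rintro _ ⟨A, hA, rfl⟩
      exact claim c₁ c₂ hx₁ hx₂ A hA
  · intro k
    exact ⟨1, rfl⟩
  · exact hone 0 1
  · intro k
    exact_mod_cast hmono k 1
  · rw [Set.eq_univ_iff_forall]
    intro g
    have hg : g ∈ ⋃ k, T k := by rw [hTexh]; trivial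
    obtain ⟨k, hk⟩ := Set.mem_iUnion.1 hg
    refine Set.mem_iUnion.2 ⟨k, hK k (Finset.mem_insert_of_mem ?_)⟩
    simpa using hk
  · rintro k _ ⟨g, rfl⟩
    have h1 := (hinv k g).mono subset_rfl (min_le_left (ε k) _)
    unfold IsInvariantSet
    simp only
    rw [Set.ncard_coe_finset]
    refine lt_of_le_of_lt ?_ h1
    have h2 : Bset ((x k g : Finset G) : Set G) (T k) ⊆
        ((bd (x k g) (insert 1 (hTfin k).toFinset) : Finset G) : Set G) := by
      rintro a ⟨⟨_, ⟨b, hb, rfl⟩, hb'⟩, ⟨_, ⟨c, hc, rfl⟩, hc'⟩⟩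
      rw [Finset.mem_coe, mem_bd]
      exact ⟨⟨b, Finset.mem_insert_of_mem (by simpa using hb), by exact_mod_cast hb'⟩,
        ⟨c, Finset.mem_insert_of_mem (by simpa using hc), fun h => hc' (by exact_mod_cast h)⟩⟩
    have h3 := Set.ncard_le_ncard h2 (Finset.finite_toSet _)
    rw [Set.ncard_coe_finset] at h3
    exact_mod_cast h3
end

section
/- Let $G$ be an infinite countable discrete amenable group, $K$ a finite dimensional compact metric space, and $(X,\sigma)$ a subshift of the full $G$-shift on $K^G$ (i.e., $X$ is a closed shift-invariant subset of $K^G$). Then for any Følner sequence $\{F_n\}_{n=1}^\infty$ of $G$, $\mathrm{mdim}(X,\sigma) \le \liminf_{n\to\infty} \dim(\pi_{F_n}(X))/|F_n|$, where $\pi_{F_n}: K^G \to K^{F_n}$ is the canonical projection and $\dim$ denotes topological (covering) dimension. -/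
open Set Filter Topology
open scoped ENNReal NNReal symmDiff

/-- A finite partition of unity with functions, subordinate to a finite open cover. -/
lemma exists_pou_fin {X : Type*} [TopologicalSpace X] [CompactSpace X] [T2Space X] {N : ℕ}
    (U : Fin N → Set X) (hU : ∀ j, IsOpen (U j)) (hc : ∀ x, ∃ j, x ∈ U j) :
    ∃ f : Fin N → X → ℝ, (∀ j, Continuous (f j)) ∧ (∀ j x, 0 ≤ f j x) ∧
      (∀ x, ∑ j, f j x = 1) ∧ (∀ j x, 0 < f j x → x ∈ U j) := by
  obtain ⟨f, hf⟩ := PartitionOfUnity.exists_isSubordinate (s := (Set.univ : Set X)) isClosed_univ U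
    hU (fun x _ => by simpa using hc x)
  refine ⟨fun j x => f j x, fun j => (f j).continuous, fun j x => f.nonneg j x, fun x => ?_,
    fun j x hx => hf j (subset_closure ?_)⟩
  · have h := f.sum_eq_one (Set.mem_univ x)
    rwa [finsum_eq_sum_of_fintype] at h
  · exact hx.ne'

lemma widimLE_of_cover {X : Type*} [TopologicalSpace X] [CompactSpace X] [T2Space X] {N : ℕ}
    (ρ : X → X → ℝ) (ε : ℝ) (m : ℕ)
    (U : Fin N → Set X) (hU : ∀ j, IsOpen (U j)) (hc : ∀ x, ∃ j, x ∈ U j)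
    (hord : ∀ x, ∀ S : Finset (Fin N), (∀ j ∈ S, x ∈ U j) → S.card ≤ m + 1)
    (hsm : ∀ j, ∀ x ∈ U j, ∀ y ∈ U j, ρ x y < ε) : WidimLE X ρ ε m := by
  classical
  obtain ⟨f, hfc, hf0, hf1, hfU⟩ := exists_pou_fin U hU hc
  let e : Fin N → (Fin N → ℝ) := fun i => Pi.single i 1
  have he : AffineIndependent ℝ e := by
    have := (Pi.basisFun ℝ (Fin N)).linearIndependent.affineIndependent
    have h2 : e = ⇑(Pi.basisFun ℝ (Fin N)) := by
      funext i
      simp [e]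
    rw [h2]
    exact this
  let A : PreAbstractSimplicialComplex (Fin N → ℝ) :=
    { faces := {s | s.Nonempty ∧ ∃ S : Finset (Fin N), S.card ≤ m + 1 ∧ s = S.image e}
      isRelLowerSet_faces := by
        rintro s ⟨hs, S, hS, rfl⟩
        refine ⟨hs, ?_⟩
        intro b hb hbn
        obtain ⟨T, hT, rfl⟩ := Finset.subset_image_iff.1 (show b ⊆ S.image e from hb)
        exact ⟨hbn, T, (Finset.card_le_card hT).trans hS, rfl⟩ }
  let P : Geometry.SimplicialComplex ℝ (Fin N → ℝ) :=
    Geometry.SimplicialComplex.ofAffineIndependent A (by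
      refine he.range.mono fun x hx => ?_
      simp only [Set.mem_iUnion, Finset.mem_coe] at hx
      obtain ⟨_, ⟨_, S, _, rfl⟩, hx⟩ := hx
      obtain ⟨i, _, rfl⟩ := Finset.mem_image.1 hx
      exact ⟨i, rfl⟩)
  have hmem : ∀ x : X, (fun j => f j x) ∈ P.space := by
    intro x
    rw [Geometry.SimplicialComplex.mem_space_iff]
    let S : Finset (Fin N) := Finset.univ.filter (fun j => 0 < f j x)
    have hsum : ∑ j ∈ S, f j x = 1 := by
      rw [← hf1 x]
      apply Finset.sum_subset (Finset.subset_univ _)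
      intro j _ hj
      have : ¬ 0 < f j x := by simpa [S] using hj
      exact le_antisymm (not_lt.1 this) (hf0 j x)
    have hne : S.Nonempty := by
      by_contra h
      rw [Finset.not_nonempty_iff_eq_empty] at h
      rw [h] at hsum
      simp at hsum
    refine ⟨S.image e, ⟨hne.image _, S, hord x S ?_, rfl⟩, ?_⟩
    · intro j hj
      exact hfU j x (by simpa [S] using hj)
    · have hx : (fun j => f j x) = ∑ j ∈ S, f j x • e j := by
        ext i
        simp only [Finset.sum_apply, Pi.smul_apply, smul_eq_mul, e, Pi.single_apply]
        simp only [mul_ite, mul_one, mul_zero, Finset.sum_ite_eq]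
        split_ifs with h
        · rfl
        · have : ¬ 0 < f i x := by simpa [S] using h
          exact le_antisymm (not_lt.1 this) (hf0 i x)
      rw [hx]
      apply (convex_convexHull ℝ _).sum_mem (fun j _ => hf0 j x) hsum
      intro j hj
      exact subset_convexHull ℝ _ (by simpa using ⟨j, hj, rfl⟩)
  refine ⟨N, P, ?_, ?_, fun x => ⟨fun j => f j x, hmem x⟩, ?_, ?_⟩
  · apply (Set.finite_range (fun S : Finset (Fin N) => S.image e)).subset
    rintro s ⟨_, S, _, rfl⟩
    exact ⟨S, rfl⟩
  · rintro s ⟨_, S, hS, rfl⟩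
    exact Finset.card_image_le.trans hS
  · exact Continuous.subtype_mk (continuous_pi fun j => hfc j) _
  · intro x y hxy
    have hxy' : ∀ j, f j x = f j y := fun j => congrFun (Subtype.ext_iff.1 hxy) j
    have : ∃ j, 0 < f j x := by
      by_contra h
      push Not at h
      have : ∑ j, f j x = 0 := Finset.sum_eq_zero fun j _ => le_antisymm (h j) (hf0 j x)
      rw [hf1 x] at this
      exact one_ne_zero this
    obtain ⟨j, hj⟩ := this
    exact hsm j x (hfU j x hj) y (hfU j y (hxy' j ▸ hj))

/-- Coloured covers: for every `k` there are `k` finite disjoint families of small open sets such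
that every point is missed by at most `m` of the families. -/
def ColLE (X : Type*) [TopologicalSpace X] (E : X → X → Prop) (m : ℕ) : Prop :=
  ∀ k : ℕ, ∃ (ι : Type) (_ : Finite ι) (W : Fin k → ι → Set X),
    (∀ i j, IsOpen (W i j)) ∧ (∀ i j j', j ≠ j' → Disjoint (W i j) (W i j')) ∧
    (∀ i j, ∀ x ∈ W i j, ∀ y ∈ W i j, E x y) ∧
    ∀ x, {i | ∀ j, x ∉ W i j}.ncard ≤ m

lemma ColLE.mono {X : Type*} [TopologicalSpace X] {E E' : X → X → Prop} {m m' : ℕ}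
    (h : ColLE X E m) (hE : ∀ x y, E x y → E' x y) (hm : m ≤ m') : ColLE X E' m' := by
  intro k
  obtain ⟨ι, hι, W, h1, h2, h3, h4⟩ := h k
  exact ⟨ι, hι, W, h1, h2, fun i j x hx y hy => hE _ _ (h3 i j x hx y hy),
    fun x => (h4 x).trans hm⟩

lemma ColLE.inter {X : Type*} [TopologicalSpace X] {E E' : X → X → Prop} {m m' : ℕ}
    (h : ColLE X E m) (h' : ColLE X E' m') : ColLE X (fun x y => E x y ∧ E' x y) (m + m') := by
  intro k
  obtain ⟨ι, hι, W, h1, h2, h3, h4⟩ := h k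
  obtain ⟨ι', hι', W', h1', h2', h3', h4'⟩ := h' k
  refine ⟨ι × ι', inferInstance, fun i p => W i p.1 ∩ W' i p.2, fun i p => (h1 _ _).inter (h1' _ _),
    ?_, fun i p x hx y hy => ⟨h3 i _ x hx.1 y hy.1, h3' i _ x hx.2 y hy.2⟩, fun x => ?_⟩
  · rintro i ⟨a, b⟩ ⟨c, d⟩ hne
    by_cases hac : a = c
    · have hbd : b ≠ d := fun h => hne (by rw [hac, h])
      exact (h2' i b d hbd).mono inter_subset_right inter_subset_right
    · exact (h2 i a c hac).mono inter_subset_left inter_subset_left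
  · have hsub : {i | ∀ j : ι × ι', x ∉ W i j.1 ∩ W' i j.2} ⊆
        {i | ∀ j, x ∉ W i j} ∪ {i | ∀ j, x ∉ W' i j} := by
      intro i hi
      by_contra hcon
      simp only [Set.mem_union, Set.mem_ofPred_eq, not_or, not_forall, not_not] at hcon
      obtain ⟨⟨a, ha⟩, ⟨b, hb⟩⟩ := hcon
      exact hi (a, b) ⟨ha, hb⟩
    exact (Set.ncard_le_ncard hsub (Set.toFinite _)).trans
      ((Set.ncard_union_le _ _).trans (add_le_add (h4 x) (h4' x)))

lemma ColLE.comap {X Y : Type*} [TopologicalSpace X] [TopologicalSpace Y] {E : Y → Y → Prop} {m : ℕ}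
    (h : ColLE Y E m) {f : X → Y} (hf : Continuous f) : ColLE X (fun x y => E (f x) (f y)) m := by
  intro k
  obtain ⟨ι, hι, W, h1, h2, h3, h4⟩ := h k
  exact ⟨ι, hι, fun i j => f ⁻¹' W i j, fun i j => (h1 i j).preimage hf,
    fun i j j' hj => (h2 i j j' hj).preimage f,
    fun i j x hx y hy => h3 i j _ hx _ hy, fun x => h4 (f x)⟩

lemma colLE_true {X : Type*} [TopologicalSpace X] : ColLE X (fun _ _ => True) 0 := by
  intro k
  refine ⟨Unit, inferInstance, fun _ _ => Set.univ, fun _ _ => isOpen_univ, ?_, ?_, ?_⟩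
  · intro i j j' h
    exact absurd rfl h
  · simp
  · simp

lemma ColLE.widimLE {X : Type*} [TopologicalSpace X] [CompactSpace X] [T2Space X]
    {E : X → X → Prop} {m : ℕ} (h : ColLE X E m) (ρ : X → X → ℝ) (ε : ℝ)
    (hE : ∀ x y, E x y → ρ x y < ε) : WidimLE X ρ ε m := by
  classical
  obtain ⟨ι, hι, W, h1, h2, h3, h4⟩ := h (m + 1)
  obtain ⟨N, ⟨q⟩⟩ := Finite.exists_equiv_fin (Fin (m + 1) × ι)
  refine widimLE_of_cover (N := N) ρ ε m (fun n => W (q.symm n).1 (q.symm n).2)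
    (fun n => h1 _ _) ?_ ?_ (fun n x hx y hy => hE _ _ (h3 _ _ x hx y hy))
  · intro x
    by_contra hcon
    push Not at hcon
    have : {i | ∀ j, x ∉ W i j} = Set.univ := by
      ext i
      simp only [Set.mem_ofPred_eq, Set.mem_univ, iff_true]
      intro j
      simpa using hcon (q (i, j))
    have h5 := h4 x
    rw [this, Set.ncard_univ] at h5
    simp at h5
  · intro x S hS
    have : Set.InjOn (fun n => (q.symm n).1) (S : Set (Fin N)) := by
      intro a ha b hb hab
      have ha' := hS a ha
      have hb' := hS b hb
      simp only at hab
      by_contra hne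
      have hne2 : (q.symm a).2 ≠ (q.symm b).2 := fun h =>
        hne (q.symm.injective (Prod.ext hab h))
      rw [← hab] at hb'
      exact Set.disjoint_left.1 (h2 _ _ _ hne2) ha' hb'
    have h6 := Finset.card_image_of_injOn this
    rw [← h6]
    exact (Finset.card_le_univ _).trans (by simp)

lemma DimLE.colLE {X : Type*} [TopologicalSpace X] [CompactSpace X] [T2Space X] {m : ℕ}
    (h : DimLE X m) (𝒰 : Set (Set X)) (hU : ∀ U ∈ 𝒰, IsOpen U) (hcov : ⋃₀ 𝒰 = Set.univ)
    (E : X → X → Prop) (hE : ∀ U ∈ 𝒰, ∀ x ∈ U, ∀ y ∈ U, E x y) : ColLE X E m := by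
  classical
  obtain ⟨𝒱, hVo, hVc, hVU, hVn⟩ := h 𝒰 hU hcov
  have hE' : ∀ V ∈ 𝒱, ∀ x ∈ V, ∀ y ∈ V, E x y := by
    intro V hV x hx y hy
    obtain ⟨U, hU, hVU⟩ := hVU V hV
    exact hE U hU x (hVU hx) y (hVU hy)
  obtain ⟨t, ht⟩ := isCompact_univ.elim_finite_subcover (fun V : 𝒱 => (V : Set X))
    (fun V => hVo V V.2) (by rw [← Set.sUnion_eq_iUnion, hVc])
  let q := t.equivFin
  let N := t.card
  let V : Fin N → Set X := fun n => ((q.symm n : 𝒱) : Set X)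
  have hVinj : Function.Injective V := fun a b hab =>
    q.symm.injective (Subtype.ext (Subtype.ext hab))
  have hVmem : ∀ n, V n ∈ 𝒱 := fun n => (q.symm n : 𝒱).2
  obtain ⟨f, hfc, hf0, hf1, hfV⟩ := exists_pou_fin V (fun n => hVo _ (hVmem n)) (by
    intro x
    obtain ⟨v, hv, hx⟩ := Set.mem_iUnion₂.1 (ht (Set.mem_univ x))
    exact ⟨q ⟨v, hv⟩, by simpa [V] using hx⟩)
  have hpos : ∀ x, (Finset.univ.filter (fun j => 0 < f j x)).card ≤ m + 1 := by
    intro x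
    rw [← Finset.card_image_of_injective _ hVinj, ← Set.ncard_coe_finset]
    refine (Set.ncard_le_ncard ?_ (hVn x).1).trans (hVn x).2
    intro v hv
    simp only [Finset.coe_image, Finset.coe_filter, Finset.mem_univ, true_and, Set.mem_image,
      Set.mem_ofPred_eq] at hv
    obtain ⟨j, hj, rfl⟩ := hv
    exact ⟨hVmem j, hfV j x hj⟩
  have hbig : ∀ x, ∃ j, (1 : ℝ) / N ≤ f j x := by
    intro x
    by_contra hcon
    push Not at hcon
    have hN : 0 < N := by
      by_contra hN
      have hN0 : N = 0 := by omega
      have h1 := hf1 x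
      have : IsEmpty (Fin N) := by rw [hN0]; infer_instance
      rw [Fintype.sum_empty] at h1
      exact zero_ne_one h1
    have : Nonempty (Fin N) := ⟨⟨0, hN⟩⟩
    have h1 : ∑ j, f j x < ∑ j : Fin N, (1 : ℝ) / N :=
      Finset.sum_lt_sum_of_nonempty Finset.univ_nonempty (fun j _ => hcon j)
    rw [hf1 x] at h1
    have hN' : (N : ℝ) ≠ 0 := by positivity
    simp [hN'] at h1
  intro k
  let τ : Fin k → ℝ := fun i => ((i : ℝ) + 1) / (k + 1) / N
  have hτinj : ∀ x : X, ∀ i i', τ i = τ i' → i = i' := by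
    intro x i i' h
    obtain ⟨j, _⟩ := hbig x
    have hN : (0 : ℝ) < N := by exact_mod_cast (Nat.zero_le _).trans_lt j.2
    have hk : (0 : ℝ) < k + 1 := by positivity
    simp only [τ] at h
    field_simp at h
    ext
    have : (i : ℝ) = i' := by linarith
    exact_mod_cast this
  have hτ : ∀ x, ∃ j, ∀ i, τ i < f j x := by
    intro x
    obtain ⟨j, hj⟩ := hbig x
    have hN : (0 : ℝ) < N := by exact_mod_cast (Nat.zero_le _).trans_lt j.2
    refine ⟨j, fun i => lt_of_lt_of_le ?_ hj⟩
    have hi : (i : ℝ) + 1 < k + 1 := by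
      have := i.2
      have : (i : ℝ) < k := by exact_mod_cast this
      linarith
    have hk : (0 : ℝ) < k + 1 := by positivity
    exact div_lt_div_of_pos_right ((div_lt_one hk).2 hi) hN
  have hτ0 : ∀ i, 0 ≤ τ i := fun i => by positivity
  have hτ1 : ∀ (x : X) i, 0 < τ i := fun x i => by
    obtain ⟨j, _⟩ := hbig x
    have hN : (0 : ℝ) < N := by exact_mod_cast (Nat.zero_le _).trans_lt j.2
    positivity
  refine ⟨Finset (Fin N), inferInstance,
    fun i S => {x | (∀ j ∈ S, τ i < f j x) ∧ ∀ j ∉ S, f j x < τ i}, ?_, ?_, ?_, ?_⟩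
  · intro i S
    have : {x | (∀ j ∈ S, τ i < f j x) ∧ ∀ j ∉ S, f j x < τ i} =
        (⋂ j, {x | j ∈ S → τ i < f j x}) ∩ ⋂ j, {x | j ∉ S → f j x < τ i} := by
      ext x
      simp
    change IsOpen {x | (∀ j ∈ S, τ i < f j x) ∧ ∀ j ∉ S, f j x < τ i}
    rw [this]
    refine (isOpen_iInter_of_finite fun j => ?_).inter (isOpen_iInter_of_finite fun j => ?_)
    · by_cases hj : j ∈ S
      · simpa [hj] using isOpen_lt continuous_const (hfc j)
      · simp [hj]
    · by_cases hj : j ∈ S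
      · simp [hj]
      · simpa [hj] using isOpen_lt (hfc j) continuous_const
  · intro i S S' hne
    rw [Set.disjoint_left]
    rintro x ⟨ha, hb⟩ ⟨hc, hd⟩
    apply hne
    ext j
    constructor
    · intro hj
      by_contra hj'
      exact lt_asymm (ha j hj) (hd j hj')
    · intro hj
      by_contra hj'
      exact lt_asymm (hc j hj) (hb j hj')
  · rintro i S x ⟨ha, hb⟩ y ⟨hc, hd⟩
    obtain ⟨j, hj⟩ := hτ x
    have hjS : j ∈ S := by
      by_contra hjS
      exact lt_asymm (hj i) (hb j hjS)
    exact hE' _ (hVmem j) x (hfV j x ((hτ0 i).trans_lt (ha j hjS))) y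
      (hfV j y ((hτ0 i).trans_lt (hc j hjS)))
  · intro x
    obtain ⟨j0, hj0⟩ := hτ x
    by_cases hk : k = 0
    · subst hk
      have : {i : Fin 0 | ∀ S : Finset (Fin N),
        x ∉ {x | (∀ j ∈ S, τ i < f j x) ∧ ∀ j ∉ S, f j x < τ i}} = ∅ := by
        ext i; exact i.elim0
      rw [this]; simp
    have i0 : Fin k := ⟨0, Nat.pos_of_ne_zero hk⟩
    have hmiss : ∀ i, (∀ S : Finset (Fin N),
        x ∉ {x | (∀ j ∈ S, τ i < f j x) ∧ ∀ j ∉ S, f j x < τ i}) → ∃ j, f j x = τ i := by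
      intro i hi
      by_contra hcon
      push Not at hcon
      apply hi (Finset.univ.filter (fun j => τ i < f j x))
      refine ⟨fun j hj => by simpa using hj, fun j hj => ?_⟩
      have : f j x ≤ τ i := by simpa using hj
      exact lt_of_le_of_ne this (hcon j)
    let P := (Finset.univ.filter (fun j => 0 < f j x)).erase j0
    have hP : P.card ≤ m := by
      have : j0 ∈ Finset.univ.filter (fun j => 0 < f j x) := by
        simpa using (hτ0 i0).trans_lt (hj0 i0)
      have h1 := Finset.card_erase_of_mem this
      have h2 := hpos x
      have : P.card = _ := h1
      omega
    have : Nonempty (Fin N) := ⟨j0⟩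
    choose! g hg using hmiss
    refine le_trans ?_ hP
    rw [← Set.ncard_coe_finset]
    apply Set.ncard_le_ncard_of_injOn g
    · intro i hi
      have h1 := hg i hi
      simp only [P, Finset.coe_erase, Finset.coe_filter, Finset.mem_univ, true_and]
      refine ⟨?_, ?_⟩
      · change 0 < f (g i) x
        rw [h1]; exact hτ1 x i
      · intro h2
        rw [Set.mem_singleton_iff] at h2
        rw [h2] at h1
        exact (hj0 i).ne' h1
    · intro i hi i' hi' hii
      apply hτinj x
      rw [← hg i hi, ← hg i' hi', hii]

lemma dimLE_of_covDim_ne_top {X : Type*} [TopologicalSpace X] (h : covDim X ≠ ⊤) :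
    ∃ m : ℕ, covDim X = m ∧ DimLE X m := by
  have hne : {n : ℕ∞ | ∃ m : ℕ, n = (m : ℕ∞) ∧ DimLE X m}.Nonempty := by
    by_contra hcon
    rw [Set.not_nonempty_iff_eq_empty] at hcon
    apply h
    unfold covDim
    rw [hcon, sInf_empty]
  obtain ⟨m, hm, hd⟩ := csInf_mem hne
  exact ⟨m, hm, hd⟩

/-! ### Ornstein-Weiss lemma -/

/-- number of elements of `A` moved out of `A` by `t`. -/
noncomputable def outCard {G : Type*} [Group G] (t : G) (A : Finset G) : ℕ := by
  classical exact (A.filter (fun a => t * a ∉ A)).card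

/-- `A` is `(T,τ)`-invariant. -/
def FinInv {G : Type*} [Group G] (T : Finset G) (τ : ℝ) (A : Finset G) : Prop :=
  ∀ t ∈ T, (outCard t A : ℝ) ≤ τ * A.card

open Classical in
lemma exists_filling {G : Type*} [Group G] (K A : Finset G) (ε : ℝ) (hε : 0 < ε) (hε1 : ε < 1)
    (τ : ℝ) (hA : FinInv K τ A) :
    ∃ R : Finset G, (∀ g ∈ R, ∀ k ∈ K, k * g ∈ A) ∧
      (1 - ε) * (K.card * R.card) ≤ ((R.biUnion (fun g => K.image (· * g))).card : ℝ) ∧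
      ε * (1 - K.card * τ) * A.card * K.card ≤
        K.card * ((R.biUnion (fun g => K.image (· * g))).card : ℝ) := by
  let B : Finset G → Finset G := fun R => R.biUnion (fun g => K.image (· * g))
  let I : Finset G := A.filter (fun g => ∀ k ∈ K, k * g ∈ A)
  let Fam : Finset (Finset G) := I.powerset.filter
    (fun R => (1 - ε) * (K.card * R.card) ≤ ((B R).card : ℝ))
  have hne : Fam.Nonempty := ⟨∅, by simp [Fam]⟩
  obtain ⟨R, hR, hmax⟩ := Finset.exists_max_image Fam Finset.card hne
  obtain ⟨hRI, hRd⟩ := Finset.mem_filter.1 hR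
  rw [Finset.mem_powerset] at hRI
  have hKg : ∀ g : G, (K.image (· * g)).card = K.card := fun g =>
    Finset.card_image_of_injective _ (mul_left_injective g)
  refine ⟨R, fun g hg => (Finset.mem_filter.1 (hRI hg)).2, hRd, ?_⟩
  -- every interior translate meets the union substantially
  have hmeet : ∀ g ∈ I, ε * K.card ≤ (((K.image (· * g)) ∩ B R).card : ℝ) := by
    intro g hg
    by_cases hgR : g ∈ R
    · have : K.image (· * g) ⊆ B R := Finset.subset_biUnion_of_mem (fun g => K.image (· * g)) hgR
      rw [Finset.inter_eq_left.2 this, hKg]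
      have : (0 : ℝ) ≤ K.card := by positivity
      nlinarith
    · by_contra hcon
      push Not at hcon
      have hB : B (insert g R) = K.image (· * g) ∪ B R := Finset.biUnion_insert
      have h1 := Finset.card_union_add_card_inter (K.image (· * g)) (B R)
      rw [hKg] at h1
      have h1' : ((K.image (· * g) ∪ B R).card : ℝ) + ((K.image (· * g) ∩ B R).card : ℝ) =
        K.card + (B R).card := by exact_mod_cast h1
      have hins : insert g R ∈ Fam := by
        refine Finset.mem_filter.2 ⟨Finset.mem_powerset.2 (Finset.insert_subset hg hRI), ?_⟩
        rw [hB, Finset.card_insert_of_notMem hgR]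
        push_cast
        linarith
      have := hmax _ hins
      rw [Finset.card_insert_of_notMem hgR] at this
      omega
  -- double counting
  have hdc : ∑ g ∈ I, ((K.image (· * g)) ∩ B R).card ≤ K.card * (B R).card := by
    have h1 : ∀ g ∈ I, ((K.image (· * g)) ∩ B R).card =
        ∑ y ∈ B R, if y ∈ K.image (· * g) then 1 else 0 := by
      intro g _
      rw [← Finset.card_filter]
      congr 1
      ext y
      simp only [Finset.mem_inter, Finset.mem_filter]
      tauto
    rw [Finset.sum_congr rfl h1, Finset.sum_comm]
    have h2 : ∀ y ∈ B R, (∑ g ∈ I, if y ∈ K.image (· * g) then 1 else 0) ≤ K.card := by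
      intro y _
      rw [← Finset.card_filter]
      have : (I.filter (fun g => y ∈ K.image (· * g))) ⊆ K.image (fun k => k⁻¹ * y) := by
        intro g hg
        obtain ⟨k, hk, hky⟩ := Finset.mem_image.1 (Finset.mem_filter.1 hg).2
        exact Finset.mem_image.2 ⟨k, hk, by rw [← hky]; simp⟩
      exact (Finset.card_le_card this).trans Finset.card_image_le
    calc _ ≤ ∑ y ∈ B R, K.card := Finset.sum_le_sum h2
      _ = K.card * (B R).card := by rw [Finset.sum_const, smul_eq_mul, mul_comm]
  have hdc' : ∑ g ∈ I, (((K.image (· * g)) ∩ B R).card : ℝ) ≤ K.card * (B R).card := by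
    exact_mod_cast hdc
  have hlow : (I.card : ℝ) * (ε * K.card) ≤ ∑ g ∈ I, (((K.image (· * g)) ∩ B R).card : ℝ) := by
    rw [← nsmul_eq_mul]
    exact Finset.card_nsmul_le_sum _ _ _ hmeet
  -- size of the interior
  have hI : (A.card : ℝ) ≤ I.card + K.card * (τ * A.card) := by
    have hsub : A ⊆ I ∪ K.biUnion (fun k => A.filter (fun a => k * a ∉ A)) := by
      intro a ha
      by_cases h : ∀ k ∈ K, k * a ∈ A
      · exact Finset.mem_union_left _ (Finset.mem_filter.2 ⟨ha, h⟩)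
      · push Not at h
        obtain ⟨k, hk, hka⟩ := h
        exact Finset.mem_union_right _ (Finset.mem_biUnion.2 ⟨k, hk, Finset.mem_filter.2 ⟨ha, hka⟩⟩)
    have h1 : A.card ≤ I.card + ∑ k ∈ K, outCard k A := by
      refine (Finset.card_le_card hsub).trans ((Finset.card_union_le _ _).trans ?_)
      gcongr
      refine Finset.card_biUnion_le.trans (le_of_eq ?_)
      refine Finset.sum_congr rfl fun k _ => ?_
      unfold outCard
      congr
    have h2 : (A.card : ℝ) ≤ I.card + ∑ k ∈ K, (outCard k A : ℝ) := by exact_mod_cast h1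
    have h3 : ∑ k ∈ K, (outCard k A : ℝ) ≤ K.card * (τ * A.card) := by
      rw [← nsmul_eq_mul]
      exact Finset.sum_le_card_nsmul _ _ _ hA
    linarith
  have hεK : 0 ≤ ε * (K.card : ℝ) := by positivity
  have := mul_le_mul_of_nonneg_right hI hεK
  change _ ≤ (K.card : ℝ) * ((B R).card : ℝ)
  nlinarith

open Classical in
lemma outCard_image {G : Type*} [Group G] (t g : G) (K : Finset G) :
    outCard t (K.image (· * g)) = outCard t K := by
  unfold outCard
  refine (Finset.card_bij (fun k _ => k * g) ?_ ?_ ?_).symm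
  · intro k hk
    simp only [Finset.mem_filter] at hk ⊢
    refine ⟨Finset.mem_image_of_mem _ hk.1, ?_⟩
    intro h
    obtain ⟨k', hk', h2⟩ := Finset.mem_image.1 h
    have : k' = t * k := mul_right_cancel (b := g) (by rw [h2, mul_assoc])
    exact hk.2 (this ▸ hk')
  · intro a _ b _ h
    exact mul_right_cancel h
  · intro y hy
    simp only [Finset.mem_filter] at hy
    obtain ⟨k, hk, rfl⟩ := Finset.mem_image.1 hy.1
    refine ⟨k, ?_, rfl⟩
    simp only [Finset.mem_filter]
    refine ⟨hk, fun h => hy.2 ?_⟩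
    exact Finset.mem_image.2 ⟨t * k, h, by rw [mul_assoc]⟩

open Classical in
lemma outCard_biUnion {G : Type*} [Group G] (t : G) (K R : Finset G) :
    outCard t (R.biUnion (fun g => K.image (· * g))) ≤ R.card * outCard t K := by
  have : (R.biUnion (fun g => K.image (· * g))).filter
      (fun a => t * a ∉ R.biUnion (fun g => K.image (· * g))) ⊆
      R.biUnion (fun g => (K.image (· * g)).filter (fun a => t * a ∉ K.image (· * g))) := by
    intro a ha
    obtain ⟨ha1, ha2⟩ := Finset.mem_filter.1 ha
    obtain ⟨g, hg, hag⟩ := Finset.mem_biUnion.1 ha1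
    refine Finset.mem_biUnion.2 ⟨g, hg, Finset.mem_filter.2 ⟨hag, fun h => ha2 ?_⟩⟩
    exact Finset.mem_biUnion.2 ⟨g, hg, h⟩
  have h1 : outCard t (R.biUnion (fun g => K.image (· * g))) ≤
      ∑ g ∈ R, outCard t (K.image (· * g)) := by
    unfold outCard
    refine le_trans (le_of_eq ?_) ((Finset.card_le_card this).trans
      (Finset.card_biUnion_le.trans (le_of_eq ?_)))
    · congr
    · refine Finset.sum_congr rfl fun k _ => ?_
      congr
  refine h1.trans ?_
  simp_rw [outCard_image]
  simp

open Classical in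
lemma outCard_sdiff {G : Type*} [Group G] (t : G) (A B : Finset G) :
    outCard t (A \ B) ≤ outCard t A + outCard t⁻¹ B := by
  unfold outCard
  have : (A \ B).filter (fun a => t * a ∉ A \ B) ⊆
      A.filter (fun a => t * a ∉ A) ∪ (B.filter (fun b => t⁻¹ * b ∉ B)).image (fun b => t⁻¹ * b) := by
    intro a ha
    simp only [Finset.mem_filter, Finset.mem_sdiff, Finset.mem_union, Finset.mem_image] at ha ⊢
    obtain ⟨⟨haA, haB⟩, h⟩ := ha
    by_cases h1 : t * a ∈ A
    · right
      have h2 : t * a ∈ B := by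
        by_contra h2
        exact h ⟨h1, h2⟩
      exact ⟨t * a, ⟨h2, by simpa using haB⟩, by simp⟩
    · exact Or.inl ⟨haA, h1⟩
  refine le_trans (le_of_eq ?_) ((Finset.card_le_card this).trans
    ((Finset.card_union_le _ _).trans (add_le_add (le_of_eq ?_) (Finset.card_image_le.trans
      (le_of_eq ?_)))))
  all_goals congr

open Classical in
/-- One inductive step and the whole induction of the Ornstein-Weiss lemma. -/
lemma ow_induction {G : Type*} [Group G] (a : Finset G → ℝ)
    (hsub : ∀ A B, a (A ∪ B) ≤ a A + a B)
    (hinv : ∀ A g, a (A.image (· * g)) ≤ a A) (D : ℝ) (hD : 0 ≤ D)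
    (hbd : ∀ A, a A ≤ D * A.card) (lam : ℝ) (hlam : 0 ≤ lam)
    (hK : ∀ (T : Finset G) (τ : ℝ), 0 < τ →
      ∃ K : Finset G, K.Nonempty ∧ FinInv T τ K ∧ a K ≤ lam * K.card)
    (ε : ℝ) (hε : 0 < ε) (hε1 : ε ≤ 1 / 2) (k : ℕ) :
    ∃ (T : Finset G) (τ : ℝ), 0 < τ ∧ ∀ A, FinInv T τ A →
      a A ≤ lam / (1 - ε) * A.card + D * max ε ((1 - ε / 2) ^ k) * A.card := by
  have hε' : 0 < 1 - ε := by linarith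
  have hl' : 0 ≤ lam / (1 - ε) := by positivity
  have a0 : a ∅ ≤ 0 := by simpa using hbd ∅
  induction k with
  | zero =>
    refine ⟨∅, 1, one_pos, fun A _ => ?_⟩
    have h1 := hbd A
    have : max ε ((1 - ε / 2) ^ 0) = 1 := by
      rw [pow_zero, max_eq_right]; linarith
    rw [this]
    have : 0 ≤ lam / (1 - ε) * A.card := by positivity
    linarith
  | succ k ih =>
    obtain ⟨T, τ, hτ, ih⟩ := ih
    obtain ⟨K, hKne, hKinv, hKa⟩ := hK (T.image (·⁻¹)) (ε * τ / 4) (by positivity)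
    have hKc : (0 : ℝ) < K.card := by exact_mod_cast hKne.card_pos
    refine ⟨T ∪ K, min (ε * τ / 2) (1 / (2 * K.card)), by positivity, fun A hA => ?_⟩
    have hAK : FinInv K (1 / (2 * K.card)) A := fun t ht =>
      (hA t (Finset.mem_union_right _ ht)).trans
        (mul_le_mul_of_nonneg_right (min_le_right _ _) (Nat.cast_nonneg _))
    have hAT : FinInv T (ε * τ / 2) A := fun t ht =>
      (hA t (Finset.mem_union_left _ ht)).trans
        (mul_le_mul_of_nonneg_right (min_le_left _ _) (Nat.cast_nonneg _))
    obtain ⟨R, hRA, hRd, hRc⟩ := exists_filling K A ε hε (by linarith) _ hAK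
    set B := R.biUnion (fun g => K.image (· * g)) with hBdef
    have hBA : B ⊆ A := by
      intro y hy
      obtain ⟨g, hg, hy⟩ := Finset.mem_biUnion.1 hy
      obtain ⟨k, hk, rfl⟩ := Finset.mem_image.1 hy
      exact hRA g hg k hk
    have hBc : ε / 2 * A.card ≤ B.card := by
      have h1 : ε * (1 - K.card * (1 / (2 * K.card))) = ε / 2 := by
        field_simp; norm_num
      rw [h1] at hRc
      have : (K.card : ℝ) * (ε / 2 * A.card) ≤ K.card * B.card := by linarith
      exact le_of_mul_le_mul_left this hKc
    have hcard : ((A \ B).card : ℝ) = A.card - B.card := by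
      rw [Finset.card_sdiff_of_subset hBA, Nat.cast_sub (Finset.card_le_card hBA)]
    have hBle : (B.card : ℝ) ≤ A.card := by exact_mod_cast Finset.card_le_card hBA
    have haB : a B ≤ lam / (1 - ε) * B.card := by
      have h1 : ∀ R : Finset G, a (R.biUnion (fun g => K.image (· * g))) ≤ R.card * a K := by
        intro R
        induction R using Finset.induction_on with
        | empty => simpa using a0
        | insert g R hg ihR =>
          rw [Finset.biUnion_insert, Finset.card_insert_of_notMem hg]
          push_cast
          have := hsub (K.image (· * g)) (R.biUnion (fun g => K.image (· * g)))
          have := hinv K g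
          linarith
      have h2 := h1 R
      have h3 : (R.card : ℝ) * a K ≤ lam * (K.card * R.card) := by
        have : (0 : ℝ) ≤ R.card := Nat.cast_nonneg _
        nlinarith
      have h4 : lam * (K.card * R.card) ≤ lam / (1 - ε) * B.card := by
        rw [div_mul_eq_mul_div, le_div_iff₀ hε']
        have := mul_le_mul_of_nonneg_left hRd hlam
        linarith
      exact h2.trans (h3.trans h4)
    have hA' : a A ≤ a B + a (A \ B) := by
      have := hsub B (A \ B)
      rwa [Finset.union_sdiff_of_subset hBA] at this
    by_cases hsmall : ((A \ B).card : ℝ) ≤ ε * A.card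
    · have h1 := hbd (A \ B)
      have h2 : D * ((A \ B).card : ℝ) ≤ D * (max ε ((1 - ε / 2) ^ (k + 1)) * A.card) := by
        refine mul_le_mul_of_nonneg_left (hsmall.trans ?_) hD
        exact mul_le_mul_of_nonneg_right (le_max_left _ _) (Nat.cast_nonneg _)
      have h3 := mul_le_mul_of_nonneg_left hBle hl'
      linarith
    · push Not at hsmall
      have hinv' : FinInv T τ (A \ B) := by
        intro t ht
        have h1 : (outCard t (A \ B) : ℝ) ≤ outCard t A + outCard t⁻¹ B := by
          exact_mod_cast outCard_sdiff t A B
        have h2 := hAT t ht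
        have h3 : (outCard t⁻¹ B : ℝ) ≤ R.card * outCard t⁻¹ K := by
          exact_mod_cast outCard_biUnion t⁻¹ K R
        have h4 := hKinv t⁻¹ (Finset.mem_image_of_mem _ ht)
        have h5 : (R.card : ℝ) * outCard t⁻¹ K ≤ ε * τ / 4 * (K.card * R.card) := by
          have : (0 : ℝ) ≤ R.card := Nat.cast_nonneg _
          nlinarith
        have h6 : (K.card * R.card : ℝ) ≤ 2 * A.card := by
          have : (0 : ℝ) ≤ K.card * R.card := by positivity
          nlinarith
        have h7 : ε * τ / 4 * (K.card * R.card) ≤ ε * τ / 4 * (2 * A.card) :=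
          mul_le_mul_of_nonneg_left h6 (by positivity)
        have h8 := mul_le_mul_of_nonneg_left hsmall.le hτ.le
        linarith
      have h1 := ih _ hinv'
      have h2 : max ε ((1 - ε / 2) ^ k) * ((A \ B).card : ℝ) ≤
          max ε ((1 - ε / 2) ^ (k + 1)) * A.card := by
        have h3 : ((A \ B).card : ℝ) ≤ (1 - ε / 2) * A.card := by rw [hcard]; linarith
        have h4 : max ε ((1 - ε / 2) ^ k) * (1 - ε / 2) ≤ max ε ((1 - ε / 2) ^ (k + 1)) := by
          rw [max_mul_of_nonneg _ _ (by linarith), pow_succ]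
          apply max_le_max _ le_rfl
          nlinarith
        have h0 : 0 ≤ max ε ((1 - ε / 2) ^ k) := hε.le.trans (le_max_left _ _)
        calc _ ≤ max ε ((1 - ε / 2) ^ k) * ((1 - ε / 2) * A.card) :=
              mul_le_mul_of_nonneg_left h3 h0
          _ = max ε ((1 - ε / 2) ^ k) * (1 - ε / 2) * A.card := by ring
          _ ≤ _ := mul_le_mul_of_nonneg_right h4 (Nat.cast_nonneg _)
      have h5 := mul_le_mul_of_nonneg_left h2 hD
      rw [hcard] at h1 h5
      linarith

open Classical in
lemma ow_final {G : Type*} [Group G] (a : Finset G → ℝ)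
    (hsub : ∀ A B, a (A ∪ B) ≤ a A + a B)
    (hinv : ∀ A g, a (A.image (· * g)) ≤ a A) (D : ℝ) (hD : 0 ≤ D)
    (hbd : ∀ A, a A ≤ D * A.card) (lam : ℝ) (hlam : 0 ≤ lam)
    (hK : ∀ (T : Finset G) (τ : ℝ), 0 < τ →
      ∃ K : Finset G, K.Nonempty ∧ FinInv T τ K ∧ a K ≤ lam * K.card)
    (η : ℝ) (hη : 0 < η) :
    ∃ (T : Finset G) (τ : ℝ), 0 < τ ∧ ∀ A, FinInv T τ A → a A ≤ (lam + η) * A.card := by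
  obtain ⟨ε, hε, hε1, hle⟩ : ∃ ε : ℝ, 0 < ε ∧ ε ≤ 1 / 2 ∧ lam / (1 - ε) + D * ε ≤ lam + η := by
    refine ⟨min (1 / 2) (η / (2 * lam + D + 1)), by positivity, min_le_left _ _, ?_⟩
    set ε := min (1 / 2) (η / (2 * lam + D + 1)) with hεd
    have hε : 0 < ε := by positivity
    have h1 : ε ≤ 1 / 2 := min_le_left _ _
    have h2 : ε * (2 * lam + D + 1) ≤ η := by
      rw [← le_div_iff₀ (by positivity)]; exact min_le_right _ _
    have h3 : lam / (1 - ε) ≤ lam + 2 * lam * ε := by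
      rw [div_le_iff₀ (by linarith)]
      have : 0 ≤ lam * ε := by positivity
      nlinarith
    nlinarith
  obtain ⟨k, hk⟩ := exists_pow_lt_of_lt_one hε (show 1 - ε / 2 < 1 by linarith)
  obtain ⟨T, τ, hτ, h⟩ := ow_induction a hsub hinv D hD hbd lam hlam hK ε hε hε1 k
  refine ⟨T, τ, hτ, fun A hA => (h A hA).trans ?_⟩
  rw [max_eq_left hk.le, ← add_mul]
  exact mul_le_mul_of_nonneg_right hle (Nat.cast_nonneg _)

/-! ### The subshift -/

/-- closeness on a set of coordinates -/
def AgreeOn {G K : Type*} [MetricSpace K] (X : Set (G → K)) (δ : ℝ) (A : Set G) (x y : X) : Prop :=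
  ∀ g ∈ A, dist (x.1 g) (y.1 g) < δ

lemma DimLE.colLE_dist {K : Type*} [MetricSpace K] [CompactSpace K] {d : ℕ} (h : DimLE K d)
    {δ : ℝ} (hδ : 0 < δ) : ColLE K (fun x y => dist x y < δ) d := by
  refine h.colLE (Set.range fun z : K => Metric.ball z (δ / 2)) ?_ ?_ _ ?_
  · rintro _ ⟨z, rfl⟩
    exact Metric.isOpen_ball
  · refine Set.eq_univ_of_forall fun z => ⟨_, ⟨z, rfl⟩, Metric.mem_ball_self (by positivity)⟩
  · rintro _ ⟨z, rfl⟩ x hx y hy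
    have h1 := dist_triangle_right x y z
    rw [Metric.mem_ball] at hx hy
    linarith

lemma colLE_proj {G K : Type*} [MetricSpace K] [CompactSpace K] (X : Set (G → K)) [CompactSpace X]
    {F : Set G} (hF : F.Finite) {m : ℕ} (h : DimLE ↥(projTo F '' X) m) {δ : ℝ} (hδ : 0 < δ) :
    ColLE X (AgreeOn X δ F) m := by
  have : Finite F := hF
  have hcont : Continuous (projTo F : (G → K) → (F → K)) :=
    continuous_pi fun g => continuous_apply g.1
  have hXc : IsCompact X := isCompact_iff_compactSpace.2 inferInstance
  have : CompactSpace ↥(projTo F '' X) := isCompact_iff_compactSpace.1 (hXc.image hcont)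
  have key : ColLE ↥(projTo F '' X) (fun u v => ∀ g : F, dist (u.1 g) (v.1 g) < δ) m := by
    refine h.colLE (Set.range fun z : ↥(projTo F '' X) =>
      {u : ↥(projTo F '' X) | ∀ g : F, dist (u.1 g) (z.1 g) < δ / 2}) ?_ ?_ _ ?_
    · rintro _ ⟨z, rfl⟩
      have : {u : ↥(projTo F '' X) | ∀ g : F, dist (u.1 g) (z.1 g) < δ / 2} =
          ⋂ g : F, {u : ↥(projTo F '' X) | dist (u.1 g) (z.1 g) < δ / 2} := by
        ext u; simp
      change IsOpen {u : ↥(projTo F '' X) | ∀ g : F, dist (u.1 g) (z.1 g) < δ / 2}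
      rw [this]
      refine isOpen_iInter_of_finite fun g => ?_
      exact isOpen_lt (((continuous_apply g).comp continuous_subtype_val).dist continuous_const)
        continuous_const
    · refine Set.eq_univ_of_forall fun z => ⟨_, ⟨z, rfl⟩, fun g => ?_⟩
      rw [dist_self]; positivity
    · rintro _ ⟨z, rfl⟩ x hx y hy g
      have h1 := dist_triangle_right (x.1 g) (y.1 g) (z.1 g)
      have h2 := hx g
      have h3 := hy g
      linarith
  have hf : Continuous (fun x : X => (⟨projTo F x.1, x.1, x.2, rfl⟩ : ↥(projTo F '' X))) :=
    Continuous.subtype_mk (hcont.comp continuous_subtype_val) _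
  exact (key.comap hf).mono (fun x y hxy g hg => hxy ⟨g, hg⟩) le_rfl

/-- the subadditive set function -/
noncomputable def colNum {G K : Type*} [MetricSpace K] (X : Set (G → K)) (δ : ℝ) (A : Finset G) : ℕ :=
  sInf {m : ℕ | ColLE X (AgreeOn X δ (A : Set G)) m}

lemma colLE_card {G K : Type*} [MetricSpace K] [CompactSpace K] (X : Set (G → K))
    {d : ℕ} (h : DimLE K d) {δ : ℝ} (hδ : 0 < δ) (A : Finset G) :
    ColLE X (AgreeOn X δ (A : Set G)) (d * A.card) := by
  classical
  induction A using Finset.induction_on with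
  | empty =>
    refine colLE_true.mono (fun x y _ g hg => ?_) (Nat.zero_le _)
    simp at hg
  | insert g A hg ih =>
    have h1 : ColLE X (fun x y => dist (x.1 g) (y.1 g) < δ) d :=
      (h.colLE_dist hδ).comap (f := fun x : X => x.1 g)
        ((continuous_apply g).comp continuous_subtype_val)
    refine (h1.inter ih).mono ?_ ?_
    · rintro x y ⟨h2, h3⟩ k hk
      rcases Finset.mem_insert.1 (Finset.mem_coe.1 hk) with rfl | hk
      · exact h2
      · exact h3 k hk
    · rw [Finset.card_insert_of_notMem hg, mul_add, mul_one, add_comm]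

lemma colNum_spec {G K : Type*} [MetricSpace K] [CompactSpace K] (X : Set (G → K))
    {d : ℕ} (h : DimLE K d) {δ : ℝ} (hδ : 0 < δ) (A : Finset G) :
    ColLE X (AgreeOn X δ (A : Set G)) (colNum X δ A) :=
  Nat.sInf_mem (s := {m : ℕ | ColLE X (AgreeOn X δ (A : Set G)) m}) ⟨_, colLE_card X h hδ A⟩

lemma colNum_le {G K : Type*} [MetricSpace K] {X : Set (G → K)} {δ : ℝ} {A : Finset G} {m : ℕ}
    (h : ColLE X (AgreeOn X δ (A : Set G)) m) : colNum X δ A ≤ m := Nat.sInf_le h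

/-- smallness of `ρ_F` -/
lemma rho_small {G K : Type*} [Group G] [MetricSpace K] [CompactSpace K] (α : G → ℝ)
    (hα : IsGoodWeight α) (ε : ℝ) (hε : 0 < ε) :
    ∃ (T : Finset G) (δ : ℝ), 0 < δ ∧ ∀ (F : Set G) (x y : G → K), F.Nonempty →
      (∀ t ∈ T, ∀ g ∈ F, dist (x (t * g)) (y (t * g)) < δ) → rhoMetricF α F x y < ε := by
  classical
  obtain ⟨_, hpos, hsum⟩ := hα
  let C : ℝ := Metric.diam (Set.univ : Set K) + 1
  have hC : ∀ u v : K, dist u v ≤ C := fun u v =>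
    (Metric.dist_le_diam_of_mem isCompact_univ.isBounded (mem_univ u) (mem_univ v)).trans
      (by simp [C])
  have hC0 : 0 < C := by
    have : 0 ≤ Metric.diam (Set.univ : Set K) := Metric.diam_nonneg
    positivity
  let S : ℝ := ∑' g, α g
  have hS : 0 ≤ S := tsum_nonneg fun g => (hpos g).le
  have htend := hsum.hasSum
  obtain ⟨T, hT⟩ : ∃ T : Finset G, S - ∑ g ∈ T, α g < ε / (4 * C) := by
    have h1 := (htend.eventually (lt_mem_nhds (show S - ε / (4 * C) < S by
      have : 0 < ε / (4 * C) := by positivity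
      linarith))).exists
    obtain ⟨T, hT⟩ := h1
    exact ⟨T, by linarith⟩
  refine ⟨T, ε / (4 * (S + 1)), by positivity, fun F x y hF hxy => ?_⟩
  refine lt_of_le_of_lt (csSup_le (hF.image _) ?_) (half_lt_self hε)
  rintro _ ⟨g, hg, rfl⟩
  set δ := ε / (4 * (S + 1)) with hδ
  have hδ0 : 0 < δ := by positivity
  unfold rhoMetric shift
  -- compare termwise
  let b : G → ℝ := fun h => α h * δ + (α h * C - if h ∈ T then α h * C else 0)
  have hsT : HasSum (fun h => if h ∈ T then α h * C else 0) (∑ h ∈ T, α h * C) := by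
    have h1 : HasSum (fun h => if h ∈ T then α h * C else 0)
        (∑ h ∈ T, if h ∈ T then α h * C else 0) :=
      hasSum_sum_of_ne_finset_zero (by intro h hh; simp [hh])
    rwa [Finset.sum_congr rfl (fun h hh => if_pos hh)] at h1
  have hb : HasSum b (S * δ + (S * C - ∑ h ∈ T, α h * C)) :=
    (htend.mul_right δ).add ((htend.mul_right C).sub hsT)
  have hle : ∀ h, α h * dist (x (h * g)) (y (h * g)) ≤ b h := by
    intro h
    by_cases hh : h ∈ T
    · simp only [b, hh, if_true, sub_self, add_zero]
      exact mul_le_mul_of_nonneg_left (hxy h hh g hg).le (hpos h).le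
    · simp only [b, hh, if_false, sub_zero]
      have h1 := mul_le_mul_of_nonneg_left (hC (x (h * g)) (y (h * g))) (hpos h).le
      have h2 : 0 ≤ α h * δ := mul_nonneg (hpos h).le hδ0.le
      linarith
  have hsumm : Summable (fun h => α h * dist (x (h * g)) (y (h * g))) :=
    Summable.of_nonneg_of_le (fun h => mul_nonneg (hpos h).le dist_nonneg) hle hb.summable
  have h1 : ∑' h, α h * dist (x (h * g)) (y (h * g)) ≤ S * δ + (S * C - ∑ h ∈ T, α h * C) := by
    rw [← hb.tsum_eq]
    exact hsumm.tsum_le_tsum hle hb.summable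
  refine h1.trans ?_
  have h2 : S * δ ≤ ε / 4 := by
    have : (S + 1) * δ = ε / 4 := by rw [hδ]; field_simp
    linarith
  have h3 : S * C - ∑ h ∈ T, α h * C ≤ ε / 4 := by
    rw [← Finset.sum_mul, ← sub_mul]
    have h4 := mul_le_mul_of_nonneg_right hT.le hC0.le
    have h5 : ε / (4 * C) * C = ε / 4 := by field_simp
    linarith
  linarith

lemma folner_finInv {G : Type*} [Group G] {F : ℕ → Set G} (hF : IsFolnerSeq F) (T : Finset G)
    (τ : ℝ) (hτ : 0 < τ) : ∀ᶠ n in atTop, FinInv T τ (hF.1 n).1.toFinset := by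
  classical
  unfold FinInv
  rw [Filter.eventually_all_finset]
  intro t _
  filter_upwards [(hF.2 t⁻¹).eventually (gt_mem_nhds hτ)] with n hn
  have hpos : (0 : ℝ) < (F n).ncard := by
    exact_mod_cast (Set.ncard_pos (hF.1 n).1).2 (hF.1 n).2
  rw [div_lt_iff₀ hpos] at hn
  have hc : ((hF.1 n).1.toFinset.card : ℝ) = (F n).ncard := by
    rw [Set.ncard_eq_toFinset_card _ (hF.1 n).1]
  rw [hc]
  refine le_trans ?_ hn.le
  have hle : outCard t (hF.1 n).1.toFinset ≤
      (symmDiff (F n) ((fun x => t⁻¹ * x) '' (F n))).ncard := by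
    unfold outCard
    rw [← Set.ncard_coe_finset]
    refine Set.ncard_le_ncard ?_ (((hF.1 n).1.union ((hF.1 n).1.image _)).subset
      (Set.symmDiff_subset_union))
    intro a ha
    simp only [Finset.coe_filter, Set.Finite.mem_toFinset, Set.mem_ofPred_eq] at ha
    left
    refine ⟨ha.1, ?_⟩
    rintro ⟨b, hb, hba⟩
    apply ha.2
    simp only at hba
    rw [← hba]
    simpa using hb
  exact_mod_cast hle

lemma widim_le_of {X : Type*} [TopologicalSpace X] {ρ : X → X → ℝ} {ε : ℝ} {m : ℕ}
    (h : WidimLE X ρ ε m) : widim X ρ ε ≤ m := sInf_le ⟨m, rfl, h⟩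

open Classical in
/-- real form of the key estimate -/
lemma widim_eventually {G : Type*} [Group G] {K : Type*} [MetricSpace K] [CompactSpace K]
    (hK : covDim K ≠ ⊤) (X : Set (G → K)) (hX : IsSubshift K X)
    (α : G → ℝ) (hα : IsGoodWeight α) (F : ℕ → Set G) (hF : IsFolnerSeq F)
    (lam : ℝ) (hlam : 0 ≤ lam)
    (hfr : ∃ᶠ n in atTop, ∃ m : ℕ, DimLE ↥(projTo (F n) '' X) m ∧ (m : ℝ) ≤ lam * (F n).ncard)
    (ε : ℝ) (hε : 0 < ε) (η : ℝ) (hη : 0 < η) :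
    ∀ᶠ n in atTop, ∃ m : ℕ, WidimLE X (fun x y : X => rhoMetricF α (F n) x.1 y.1) ε m ∧
      (m : ℝ) ≤ (lam + η) * (F n).ncard := by
  have hXc : CompactSpace X := isCompact_iff_compactSpace.1 hX.1.isCompact
  obtain ⟨d, -, hd⟩ := dimLE_of_covDim_ne_top hK
  obtain ⟨T, δ, hδ, hsmall⟩ := rho_small (K := K) α hα ε hε
  have hcard : ∀ n, (hF.1 n).1.toFinset.card = (F n).ncard := fun n =>
    (Set.ncard_eq_toFinset_card _ (hF.1 n).1).symm
  have hsub : ∀ A B : Finset G, (colNum X δ (A ∪ B) : ℝ) ≤ colNum X δ A + colNum X δ B := by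
    intro A B
    have : colNum X δ (A ∪ B) ≤ colNum X δ A + colNum X δ B := by
      refine colNum_le (((colNum_spec X hd hδ A).inter (colNum_spec X hd hδ B)).mono ?_ le_rfl)
      rintro x y ⟨h1, h2⟩ g hg
      rcases Finset.mem_union.1 (Finset.mem_coe.1 hg) with h | h
      · exact h1 g h
      · exact h2 g h
    exact_mod_cast this
  have hinv : ∀ (A : Finset G) (g : G), (colNum X δ (A.image (· * g)) : ℝ) ≤ colNum X δ A := by
    intro A g
    have hc : Continuous (fun x : X => (⟨shift g x.1, hX.2 g x.1 x.2⟩ : X)) :=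
      by
      have h0 : Continuous (fun x : X => shift g x.1) := continuous_pi fun h =>
        (continuous_apply (h * g)).comp continuous_subtype_val
      exact h0.subtype_mk _
    have : colNum X δ (A.image (· * g)) ≤ colNum X δ A := by
      refine colNum_le (((colNum_spec X hd hδ A).comap hc).mono ?_ le_rfl)
      intro x y h k hk
      obtain ⟨b, hb, rfl⟩ := Finset.mem_image.1 (Finset.mem_coe.1 hk)
      exact h b hb
    exact_mod_cast this
  have hbd : ∀ A : Finset G, (colNum X δ A : ℝ) ≤ (d : ℝ) * A.card := by
    intro A
    exact_mod_cast colNum_le (colLE_card X hd hδ A)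
  obtain ⟨T', τ', hτ', hOW⟩ := ow_final (fun A => (colNum X δ A : ℝ)) hsub hinv d (Nat.cast_nonneg _)
    hbd lam hlam (by
      intro T τ hτ
      obtain ⟨n, ⟨m, hm, hle⟩, hn⟩ := (hfr.and_eventually (folner_finInv hF T τ hτ)).exists
      refine ⟨(hF.1 n).1.toFinset, ?_, hn, ?_⟩
      · simpa using (hF.1 n).2
      · rw [hcard]
        refine le_trans ?_ hle
        have h1 := colLE_proj X (hF.1 n).1 hm hδ
        have h2 : colNum X δ (hF.1 n).1.toFinset ≤ m := by
          apply colNum_le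
          rwa [Set.Finite.coe_toFinset]
        exact_mod_cast h2) (η / 2) (by positivity)
  have hτ2 : 0 < η / (2 * (d * T.card + 1)) := by positivity
  filter_upwards [folner_finInv hF T' τ' hτ', folner_finInv hF T _ hτ2] with n hn1 hn2
  set Φ := (hF.1 n).1.toFinset with hΦ
  let C : Finset G := T.biUnion fun t => (Φ.filter (fun a => t * a ∉ Φ)).image (fun a => t * a)
  have hCc : (C.card : ℝ) ≤ T.card * (η / (2 * (d * T.card + 1)) * Φ.card) := by
    have h1 : C.card ≤ ∑ t ∈ T, outCard t Φ := by
      refine Finset.card_biUnion_le.trans (Finset.sum_le_sum fun t _ => ?_)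
      refine Finset.card_image_le.trans (le_of_eq ?_)
      unfold outCard
      congr
    have h2 : (C.card : ℝ) ≤ ∑ t ∈ T, (outCard t Φ : ℝ) := by exact_mod_cast h1
    refine h2.trans ?_
    rw [← nsmul_eq_mul]
    exact Finset.sum_le_card_nsmul _ _ _ hn2
  refine ⟨colNum X δ (Φ ∪ C), ?_, ?_⟩
  · refine (colNum_spec X hd hδ (Φ ∪ C)).widimLE _ _ ?_
    intro x y hxy
    refine hsmall (F n) x.1 y.1 (hF.1 n).2 fun t ht g hg => hxy _ ?_
    have hgΦ : g ∈ Φ := by simpa [hΦ] using hg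
    rw [Finset.mem_coe, Finset.mem_union]
    by_cases h : t * g ∈ Φ
    · exact Or.inl h
    · exact Or.inr (Finset.mem_biUnion.2 ⟨t, ht, Finset.mem_image.2
        ⟨g, Finset.mem_filter.2 ⟨hgΦ, h⟩, rfl⟩⟩)
  · have h1 := hsub Φ C
    have h2 := hOW Φ hn1
    have h3 := hbd C
    have h4 : (d : ℝ) * C.card ≤ η / 2 * Φ.card := by
      have h5 := mul_le_mul_of_nonneg_left hCc (Nat.cast_nonneg (α := ℝ) d)
      refine h5.trans ?_
      have h6 : (d : ℝ) * (T.card * (η / (2 * (d * T.card + 1)) * Φ.card)) =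
          (d * T.card) / (d * T.card + 1) * (η / 2 * Φ.card) := by
        field_simp
      rw [h6]
      have h7 : ((d : ℝ) * T.card) / (d * T.card + 1) ≤ 1 := by
        rw [div_le_one (by positivity)]; linarith
      have h8 : 0 ≤ η / 2 * (Φ.card : ℝ) := by positivity
      nlinarith
    rw [← hcard n]
    change _ ≤ (lam + η) * (Φ.card : ℝ)
    linarith

/-- **Proposition.** For a subshift `X` of `K^G` with `K` a finite dimensional compact metric
space, `mdim(X,σ) ≤ liminf_n dim(π_{F_n}(X)) / |F_n|` for any Følner sequence `{F_n}` of `G`. -/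
theorem mdim_subshift_le_liminf_dim_proj (G : Type*) [Group G] [Countable G] [Infinite G]
    (hG : AmenableGroup G) (K : Type*) [MetricSpace K] [CompactSpace K]
    (hK : covDim K ≠ ⊤) (X : Set (G → K)) (hX : IsSubshift K X)
    (α : G → ℝ) (hα : IsGoodWeight α) (F : ℕ → Set G) (hF : IsFolnerSeq F) :
    mdimSubshift α X F ≤
      Filter.liminf
        (fun n => ((covDim ↥(projTo (F n) '' X) : ℕ∞) : ℝ≥0∞) / ((F n).ncard : ℝ≥0∞))
        atTop := by
  refine iSup_le fun ε => ?_
  refine le_of_forall_gt_imp_ge_of_dense fun c hc => ?_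
  obtain ⟨c', hc1, hc2⟩ := exists_between hc
  by_cases hctop : c = ⊤
  · rw [hctop]; exact le_top
  have hc'top : c' ≠ ⊤ := (hc2.trans_le le_top).ne
  have hlt : c'.toReal < c.toReal := (ENNReal.toReal_lt_toReal hc'top hctop).2 hc2
  have hFpos : ∀ n, 0 < (F n).ncard := fun n => (Set.ncard_pos (hF.1 n).1).2 (hF.1 n).2
  have hfr : ∃ᶠ n in atTop, ∃ m : ℕ, DimLE ↥(projTo (F n) '' X) m ∧
      (m : ℝ) ≤ c'.toReal * (F n).ncard := by
    refine (Filter.frequently_lt_of_liminf_lt (by isBoundedDefault) hc1).mono fun n hn => ?_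
    have hne : ((F n).ncard : ℝ≥0∞) ≠ 0 := by exact_mod_cast (hFpos n).ne'
    have htop : ((F n).ncard : ℝ≥0∞) ≠ ⊤ := ENNReal.natCast_ne_top _
    have hcd : covDim ↥(projTo (F n) '' X) ≠ ⊤ := by
      intro h
      rw [h, ENat.toENNReal_top, ENNReal.top_div_of_ne_top htop] at hn
      exact absurd hn (not_lt.2 le_top)
    obtain ⟨m, hm, hd⟩ := dimLE_of_covDim_ne_top hcd
    refine ⟨m, hd, ?_⟩
    rw [hm, ENat.toENNReal_coe, ENNReal.div_lt_iff (Or.inl hne) (Or.inl htop)] at hn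
    have h1 := ENNReal.toReal_mono (ENNReal.mul_ne_top hc'top htop) hn.le
    simpa using h1
  have hev := widim_eventually hK X hX α hα F hF c'.toReal ENNReal.toReal_nonneg hfr ε.1 ε.2
    (c.toReal - c'.toReal) (by linarith)
  refine Filter.limsup_le_of_le (by isBoundedDefault) ?_
  filter_upwards [hev] with n hn
  obtain ⟨m, hm, hle⟩ := hn
  have hne : ((F n).ncard : ℝ≥0∞) ≠ 0 := by exact_mod_cast (hFpos n).ne'
  have htop : ((F n).ncard : ℝ≥0∞) ≠ ⊤ := ENNReal.natCast_ne_top _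
  rw [ENNReal.div_le_iff hne htop]
  have h1 : ((widim X (fun x y : X => rhoMetricF α (F n) x.1 y.1) ε.1 : ℕ∞) : ℝ≥0∞) ≤ (m : ℝ≥0∞) := by
    have := ENat.toENNReal_le.2 (widim_le_of hm)
    rwa [ENat.toENNReal_coe] at this
  refine h1.trans ?_
  rw [← ENNReal.toReal_le_toReal (ENNReal.natCast_ne_top _) (ENNReal.mul_ne_top hctop htop)]
  simp only [ENNReal.toReal_natCast, ENNReal.toReal_mul]
  have h2 : c'.toReal + (c.toReal - c'.toReal) = c.toReal := by ring
  rwa [h2] at hle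
end
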